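/- The number β₄ = √7 · arctan(√7/3) has irrationality measure at most 3.94705; that is, for every real κ > 3.94705, there exist only finitely many pairs (p, q) with p ∈ ℤ and q a positive integer such that |β₄ − p/q| < q^(−κ). -/

import Mathlib

/-!
Write `β = √7 * θ` with `θ = arctan (√7 / 3)`. For a polynomial `P` the integral of
`P z * (π / sin (π z)) ^ 2` along `Re z = -1/2`, twisted by a character of frequency `s`, is an
explicit combination of `s * G P` and `G P'` at `exp (i s)`, where `G P` is the rational function
`∑ n, P n * z ^ n`. At `s = θ` and `s = θ - 2π` one has `1 - exp (i s) = 1 / ω` with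
`ω = (1 + √-7) / 2`, so for integer-valued `P` the two integrals are linear forms in `θ` and `1`
with coefficients in `ℤ[ω]`, up to the denominators of the values of `P'`. They are real, which
makes the coefficients rational integers up to `√7`; when `P` and `P'` vanish at `0, …, m - 1` these
are moreover divisible by `2 ^ m`, as `2 = ω (1 - ω)`.

Take `P` to be the product of the binomial polynomials `(x + k N).choose (2 k N)` for `k = 7, 5, 3`.
The values of `P'` have denominator dividing `lcm (1, …, 14 N)`, and every large prime `p` for which
`2 N / p` has its fractional part in certain intervals can be removed from it; by the prime number
theorem, obtained here from Ikehara's theorem, what remains is at most `exp (4.0098 * N)`. On the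
line of integration `P` is positive up to sign and asymptotically explicit, so the integrals can be
bounded from both sides at the saddle point. The result is a sequence of integers `a N`, `b N` with
`|a N| ≤ exp (41.693884 * N)` and `|a N * β - b N|` between `exp (-14.147683 * N)` and
`exp (-14.147679 * N)`, and `(41.693884 + 14.147683) / 14.147679 < 3.94705`.
-/

open MeasureTheory Filter Topology Set ProbabilityTheory
open scoped Real Polynomial fwdDiff

namespace BetaFour

/-! ### A criterion for irrationality measures -/

lemma setOf_abs_sub_div_lt_finite {β κ : ℝ} (hκ : 0 ≤ κ)
    (h : ∀ᶠ q : ℕ in atTop, ∀ p : ℤ, (q : ℝ) ^ (-κ) ≤ |β - p / q|) :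
    {pq : ℤ × ℕ+ | |β - (pq.1 : ℝ) / ((pq.2 : ℕ) : ℝ)| < ((pq.2 : ℕ) : ℝ) ^ (-κ)}.Finite := by
  obtain ⟨Q, hQ⟩ := eventually_atTop.1 h
  set M := ⌈(Q : ℝ) * (|β| + 1)⌉
  refine ((Set.finite_Icc (-M) M).prod (Set.finite_Iic Q.succPNat)).subset ?_
  rintro ⟨p, q⟩ hpq
  have hq : (q : ℕ) < Q := by
    by_contra! h_ge
    exact (hQ q h_ge p).not_gt hpq
  have hq_one : (1 : ℝ) ≤ (q : ℕ) := by exact_mod_cast q.2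
  have h_dist : |β - p / (q : ℕ)| < 1 :=
    hpq.trans_le (Real.rpow_le_one_of_one_le_of_nonpos hq_one (by linarith))
  have h_quot : |(p : ℝ) / (q : ℕ)| ≤ |β| + 1 := by
    have := abs_sub_abs_le_abs_sub ((p : ℝ) / (q : ℕ)) β
    rw [abs_sub_comm] at this
    linarith
  have hp : |(p : ℝ)| ≤ Q * (|β| + 1) := by
    calc |(p : ℝ)| = (q : ℕ) * |(p : ℝ) / (q : ℕ)| := by
          rw [abs_div, Nat.abs_cast]
          field_simp
      _ ≤ Q * (|β| + 1) := by gcongr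
  have hpM : |p| ≤ M := by exact_mod_cast hp.trans (Int.le_ceil _)
  exact ⟨abs_le.1 hpM, hq.le.trans (Nat.le_succ Q)⟩

-- If `a p ≠ b q` then the right-hand side is at least `1 / q - |a β - b| ≥ 1 / (2 q)`.
lemma abs_mul_sub_le_mul_abs_sub_div {β : ℝ} {a b p : ℤ} {q : ℕ} (hq : 0 < q)
    (h : |a * β - b| ≤ 1 / (2 * q)) : |a * β - b| ≤ |(a : ℝ)| * |β - p / q| := by
  have hq' : (0 : ℝ) < q := by exact_mod_cast hq
  have h_split : a * (β - p / q) = (a * β - b) - ((a * p - b * q : ℤ) : ℝ) / q := by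
    push_cast
    field_simp
    ring
  rw [← abs_mul, h_split]
  rcases eq_or_ne (a * p - b * q) 0 with h_zero | h_ne
  · rw [h_zero, Int.cast_zero, zero_div, sub_zero]
  · have h_one : (1 : ℝ) ≤ |((a * p - b * q : ℤ) : ℝ)| := by exact_mod_cast Int.one_le_abs h_ne
    have h_int : 2 * (1 / (2 * q) : ℝ) ≤ |((a * p - b * q : ℤ) : ℝ) / q| := by
      rw [abs_div, abs_of_pos hq', show 2 * (1 / (2 * q) : ℝ) = 1 / q by field_simp]
      gcongr
    have h_tri := abs_sub_abs_le_abs_sub (((a * p - b * q : ℤ) : ℝ) / q) (a * β - b)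
    rw [abs_sub_comm (_ / _)] at h_tri
    linarith

theorem irrationality_measure_le_of_linearForms {β A σ τ κ : ℝ} (hτ : 0 < τ) (hAσ : 0 ≤ A + σ)
    (h : ∀ᶠ N : ℕ in atTop, ∃ a b : ℤ, |(a : ℝ)| ≤ Real.exp (A * N) ∧
      Real.exp (-(σ * N)) ≤ |a * β - b| ∧ |a * β - b| ≤ Real.exp (-(τ * N)))
    (hκ : (A + σ) / τ < κ) :
    {pq : ℤ × ℕ+ | |β - (pq.1 : ℝ) / ((pq.2 : ℕ) : ℝ)| < ((pq.2 : ℕ) : ℝ) ^ (-κ)}.Finite := by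
  refine setOf_abs_sub_div_lt_finite ((div_nonneg hAσ hτ.le).trans hκ.le) ?_
  have h_log : Tendsto (fun q : ℕ => Real.log q) atTop atTop :=
    Real.tendsto_log_atTop.comp tendsto_natCast_atTop_atTop
  have h_index : Tendsto (fun q : ℕ => ⌈(Real.log 2 + Real.log q) / τ⌉₊) atTop atTop :=
    tendsto_nat_ceil_atTop.comp ((tendsto_atTop_add_const_left _ _ h_log).atTop_div_const hτ)
  filter_upwards [h_index.eventually h, eventually_gt_atTop 0,
    (h_log.const_mul_atTop (sub_pos.2 hκ)).eventually_ge_atTop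
      ((A + σ) * (Real.log 2 / τ + 1))] with q hq_forms hq hq_large p
  obtain ⟨a, b, ha, h_lower, h_upper⟩ := hq_forms
  set N := ⌈(Real.log 2 + Real.log q) / τ⌉₊
  have hq' : (0 : ℝ) < q := by exact_mod_cast hq
  have h_nonneg : 0 ≤ (Real.log 2 + Real.log q) / τ := by positivity
  have hN_ge : Real.log 2 + Real.log q ≤ τ * N := by
    rw [← div_le_iff₀' hτ]
    exact Nat.le_ceil _
  have h_small : |a * β - b| ≤ 1 / (2 * q) := by
    refine h_upper.trans ?_
    rw [← Real.exp_log (show (0 : ℝ) < 1 / (2 * q) by positivity), one_div, Real.log_inv,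
      Real.log_mul two_ne_zero hq'.ne']
    gcongr
  have h_exponent : (A + σ) * N ≤ κ * Real.log q := by
    calc (A + σ) * N ≤ (A + σ) * ((Real.log 2 + Real.log q) / τ + 1) := by
          gcongr
          exact (Nat.ceil_lt_add_one h_nonneg).le
      _ = (A + σ) * (Real.log 2 / τ + 1) + (A + σ) / τ * Real.log q := by ring
      _ ≤ κ * Real.log q := by linarith
  have h_key : Real.exp (-(σ * N)) ≤ Real.exp (A * N) * |β - p / q| := by
    calc Real.exp (-(σ * N)) ≤ |(a : ℝ)| * |β - p / q| :=
          h_lower.trans (abs_mul_sub_le_mul_abs_sub_div hq h_small)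
      _ ≤ Real.exp (A * N) * |β - p / q| := by gcongr
  calc (q : ℝ) ^ (-κ) = Real.exp (-(κ * Real.log q)) := by
        rw [Real.rpow_def_of_pos hq', mul_neg, mul_comm]
    _ ≤ Real.exp (-((A + σ) * N)) := by gcongr
    _ = Real.exp (-(σ * N)) / Real.exp (A * N) := by
        rw [← Real.exp_sub]
        congr 1
        ring
    _ ≤ |β - p / q| := by
        rwa [div_le_iff₀' (Real.exp_pos _)]

/-! ### Ikehara's Tauberian theorem -/

/-- The (unnormalised) Fejér kernel `(sin (v / 2) / (v / 2)) ^ 2`, with value `1` at `0`. Its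
Fourier transform is the compactly supported triangle function, which is what makes it a good
smoothing kernel for Ikehara's theorem. -/
noncomputable def fejerKernel (v : ℝ) : ℝ := Real.sinc (v / 2) ^ 2

lemma fejerKernel_nonneg (v : ℝ) : 0 ≤ fejerKernel v := sq_nonneg _

lemma continuous_fejerKernel : Continuous fejerKernel :=
  (Real.continuous_sinc.comp (continuous_id.div_const 2)).pow 2

lemma fejerKernel_mul_sq (v : ℝ) : fejerKernel v * v ^ 2 = 4 * Real.sin (v / 2) ^ 2 := by
  rcases eq_or_ne v 0 with rfl | hv
  · simp
  · rw [fejerKernel, Real.sinc_of_ne_zero (by simpa using hv)]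
    field_simp
    ring

lemma fejerKernel_le (v : ℝ) : fejerKernel v ≤ 5 * (1 + v ^ 2)⁻¹ := by
  have h_le_one : fejerKernel v ≤ 1 := (sq_le_one_iff_abs_le_one _).2 (Real.abs_sinc_le_one _)
  rw [← div_eq_mul_inv, le_div_iff₀ (by positivity)]
  linarith [fejerKernel_mul_sq v, Real.sin_sq_le_one (v / 2)]

lemma integrable_fejerKernel : Integrable fejerKernel :=
  (integrable_inv_one_add_sq.const_mul 5).mono' continuous_fejerKernel.aestronglyMeasurable
    (Eventually.of_forall fun v => by
      rw [Real.norm_of_nonneg (fejerKernel_nonneg v)]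
      exact fejerKernel_le v)

lemma integral_fejerKernel_pos : 0 < ∫ v, fejerKernel v :=
  integral_pos_of_integrable_nonneg_nonzero (x := 0) continuous_fejerKernel integrable_fejerKernel
    fejerKernel_nonneg (by simp [fejerKernel])

lemma integral_one_sub_mul_cos (v : ℝ) :
    ∫ t in (0 : ℝ)..1, 2 * (1 - t) * Real.cos (t * v) = fejerKernel v := by
  rcases eq_or_ne v 0 with rfl | hv
  · have h_half : ∫ t in (0 : ℝ)..1, (1 - t) = 1 / 2 := by
      rw [intervalIntegral.integral_sub (by simp) (by simp)]
      norm_num [integral_id]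
    simp [fejerKernel, h_half]
  have h_deriv (t : ℝ) : HasDerivAt
      (fun t => 2 * ((1 - t) * Real.sin (t * v) / v - Real.cos (t * v) / v ^ 2))
      (2 * (1 - t) * Real.cos (t * v)) t := by
    have h_lin : HasDerivAt (fun t : ℝ => t * v) v t := by
      simpa using (hasDerivAt_id t).mul_const v
    have h_one_sub : HasDerivAt (fun t : ℝ => 1 - t) (-1) t := by
      simpa using (hasDerivAt_id t).const_sub 1
    refine ((((h_one_sub.mul h_lin.sin).div_const v).sub
      (h_lin.cos.div_const (v ^ 2))).const_mul 2).congr_deriv ?_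
    field_simp
    ring
  rw [intervalIntegral.integral_eq_sub_of_hasDerivAt (fun t _ => h_deriv t)
    (Continuous.intervalIntegrable (by fun_prop) _ _)]
  have h_half : 2 * Real.sin (v / 2) ^ 2 = 1 - Real.cos v := by
    have h_cos := Real.cos_two_mul' (v / 2)
    rw [mul_div_cancel₀ v two_ne_zero] at h_cos
    linarith [Real.sin_sq_add_cos_sq (v / 2)]
  refine mul_right_cancel₀ (pow_ne_zero 2 hv) ?_
  rw [fejerKernel_mul_sq]
  simp only [sub_self, zero_mul, mul_zero, one_mul, Real.sin_zero, Real.cos_zero]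
  field_simp
  linarith

lemma fejerKernel_eq_integral_exp (v : ℝ) :
    (fejerKernel v : ℂ) =
      ∫ t in (-1 : ℝ)..1, ((1 - |t| : ℝ) : ℂ) * Complex.exp (Complex.I * (t * v)) := by
  have h_int (a b : ℝ) : IntervalIntegrable
      (fun t : ℝ => ((1 - |t| : ℝ) : ℂ) * Complex.exp (Complex.I * (t * v))) volume a b :=
    Continuous.intervalIntegrable (by fun_prop) _ _
  have h_refl := intervalIntegral.integral_comp_neg (a := 0) (b := 1)
    (fun t : ℝ => ((1 - |t| : ℝ) : ℂ) * Complex.exp (Complex.I * (t * v)))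
  rw [neg_zero] at h_refl
  rw [← intervalIntegral.integral_add_adjacent_intervals (h_int (-1) 0) (h_int 0 1), ← h_refl,
    ← intervalIntegral.integral_add (Continuous.intervalIntegrable (by fun_prop) _ _) (h_int 0 1),
    ← integral_one_sub_mul_cos, ← intervalIntegral.integral_ofReal]
  refine intervalIntegral.integral_congr fun t ht => ?_
  rw [uIcc_of_le zero_le_one] at ht
  simp only [abs_neg, abs_of_nonneg ht.1]
  push_cast
  rw [Complex.cos]
  ring_nf

section Laplace

variable {g : ℝ → ℝ} {C : ℝ} {H : ℂ → ℂ}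

lemma integrableOn_laplace (hg : Measurable g) (hgC : ∀ u, |g u| ≤ C) {s : ℂ} (hs : 0 < s.re) :
    IntegrableOn (fun u : ℝ => (g u : ℂ) * Complex.exp (-s * u)) (Ioi 0) := by
  have h_dom : IntegrableOn (fun u : ℝ => C * Real.exp (-s.re * u)) (Ioi 0) :=
    (integrableOn_exp_mul_Ioi (by simpa using hs) 0).const_mul _
  refine h_dom.mono' (by fun_prop : Measurable _).aestronglyMeasurable
    (Eventually.of_forall fun u => ?_)
  rw [norm_mul, Complex.norm_exp, Complex.norm_real, Real.norm_eq_abs]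
  have h_re : (-s * u).re = -s.re * u := by simp
  rw [h_re]
  gcongr
  exact hgC u

lemma integral_laplace_mul_fejerKernel (hg : Measurable g) (hgC : ∀ u, |g u| ≤ C)
    (hgH : ∀ s : ℂ, 0 < s.re → ∫ u in Ioi (0 : ℝ), (g u : ℂ) * Complex.exp (-s * u) = H s)
    {ε : ℝ} (hε : 0 < ε) (T y : ℝ) :
    ∫ u in Ioi (0 : ℝ), (g u : ℂ) * Complex.exp (-ε * u) * fejerKernel (T * (u - y)) =
      ∫ t in (-1 : ℝ)..1, ((1 - |t| : ℝ) : ℂ) *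
        (Complex.exp (-(Complex.I * (t * T * y))) * H (ε - Complex.I * (t * T))) := by
  have h_le : (-1 : ℝ) ≤ 1 := by norm_num
  simp_rw [fejerKernel_eq_integral_exp, intervalIntegral.integral_of_le h_le,
    ← integral_const_mul]
  rw [integral_integral_swap]
  · refine setIntegral_congr_fun measurableSet_Ioc fun t _ => ?_
    rw [← hgH _ (by simpa using hε), ← integral_const_mul, ← integral_const_mul]
    refine integral_congr_ae (Eventually.of_forall fun u => ?_)
    have h_exp : Complex.exp (-ε * u) * Complex.exp (Complex.I * (t * (T * (u - y) : ℝ))) =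
        Complex.exp (-(Complex.I * (t * T * y))) *
          Complex.exp (-(ε - Complex.I * (t * T)) * u) := by
      rw [← Complex.exp_add, ← Complex.exp_add]
      push_cast
      ring_nf
    linear_combination (g u : ℂ) * ((1 - |t| : ℝ) : ℂ) * h_exp
  · have h_laplace : Integrable (fun u : ℝ => (g u : ℂ) * Complex.exp (-ε * u))
        (volume.restrict (Ioi 0)) :=
      integrableOn_laplace (s := ε) hg hgC (by simpa using hε)
    refine (h_laplace.mul_prod (integrable_const (1 : ℂ))).mono
      (by unfold Function.uncurry; fun_prop : Measurable _).aestronglyMeasurable ?_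
    rw [Measure.prod_restrict]
    refine (ae_restrict_iff' (measurableSet_Ioi.prod measurableSet_Ioc)).2
      (Eventually.of_forall fun ⟨u, t⟩ ⟨_, ht⟩ => ?_)
    have h_abs : |t| ≤ 1 := abs_le.2 ⟨ht.1.le, ht.2⟩
    have h_norm : ‖Complex.exp (Complex.I * (t * (T * (u - y) : ℝ)))‖ = 1 := by
      simp [Complex.norm_exp]
    simp only [Function.uncurry, norm_mul, h_norm, mul_one, Complex.norm_real]
    refine mul_le_of_le_one_right (by positivity) ?_
    rw [Real.norm_of_nonneg (by linarith)]
    linarith [abs_nonneg t]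

lemma tendsto_integral_fejer_boundary (hH : ContinuousOn H {s | 0 ≤ s.re}) (T y : ℝ) :
    Tendsto (fun ε : ℝ => ∫ t in (-1 : ℝ)..1, ((1 - |t| : ℝ) : ℂ) *
        (Complex.exp (-(Complex.I * (t * T * y))) * H (ε - Complex.I * (t * T))))
      (𝓝[>] 0)
      (𝓝 (∫ t in (-1 : ℝ)..1, ((1 - |t| : ℝ) : ℂ) *
        (Complex.exp (-(Complex.I * (t * T * y))) * H ((0 : ℝ) - Complex.I * (t * T))))) := by
  set F : ℝ × ℝ → ℂ := fun p => ((1 - |p.2| : ℝ) : ℂ) *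
    (Complex.exp (-(Complex.I * (p.2 * T * y))) * H (p.1 - Complex.I * (p.2 * T))) with hF
  have hF_cont : ContinuousOn F (Ici 0 ×ˢ univ) := by
    have hH_comp : ContinuousOn (fun p : ℝ × ℝ => H (p.1 - Complex.I * (p.2 * T)))
        (Ici 0 ×ˢ univ) :=
      hH.comp (by fun_prop) fun p hp => by simpa using hp.1
    have h_weight : Continuous fun p : ℝ × ℝ => ((1 - |p.2| : ℝ) : ℂ) := by fun_prop
    have h_exp : Continuous fun p : ℝ × ℝ => Complex.exp (-(Complex.I * (p.2 * T * y))) := by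
      fun_prop
    exact h_weight.continuousOn.mul (h_exp.continuousOn.mul hH_comp)
  obtain ⟨B, hB⟩ := (isCompact_Icc.prod isCompact_Icc : IsCompact
    (Icc (0 : ℝ) 1 ×ˢ Icc (-1 : ℝ) 1)).exists_bound_of_continuousOn
    (hF_cont.mono (Set.prod_mono Icc_subset_Ici_self (subset_univ _)))
  refine intervalIntegral.tendsto_integral_filter_of_dominated_convergence (fun _ => B) ?_ ?_
    intervalIntegrable_const ?_
  · filter_upwards [self_mem_nhdsWithin] with ε (hε : 0 < ε)
    have h_slice : ContinuousOn (fun t => F (ε, t)) univ :=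
      hF_cont.comp (by fun_prop) fun t _ => ⟨hε.le, mem_univ _⟩
    exact (continuousOn_univ.1 h_slice).aestronglyMeasurable
  · filter_upwards [self_mem_nhdsWithin, mem_nhdsWithin_of_mem_nhds (Iio_mem_nhds one_pos)]
      with ε (hε : 0 < ε) (hε_lt : ε < 1)
    refine Eventually.of_forall fun t ht => hB (ε, t) ⟨⟨hε.le, hε_lt.le⟩, ?_⟩
    rw [uIoc_of_le (by norm_num)] at ht
    exact Ioc_subset_Icc_self ht
  · refine Eventually.of_forall fun t _ => ?_
    have h_slice : Tendsto (fun ε : ℝ => (ε, t)) (𝓝[>] 0) (𝓝[Ici 0 ×ˢ univ] (0, t)) := by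
      refine tendsto_nhdsWithin_iff.2
        ⟨(Continuous.tendsto (by fun_prop) 0).mono_left nhdsWithin_le_nhds, ?_⟩
      filter_upwards [self_mem_nhdsWithin] with ε (hε : 0 < ε)
      exact ⟨hε.le, mem_univ _⟩
    have h_limit : ContinuousWithinAt F (Ici 0 ×ˢ univ) (0, t) :=
      hF_cont _ ⟨self_mem_Ici, mem_univ _⟩
    simpa only [hF, Function.comp_def] using h_limit.tendsto.comp h_slice

lemma integrable_fejerKernel_comp {T : ℝ} (hT : 0 < T) (y : ℝ) :
    Integrable fun u => fejerKernel (T * (u - y)) :=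
  (integrable_fejerKernel.comp_mul_left' hT.ne').comp_sub_right y

lemma tendsto_integral_laplace_mul_fejerKernel (hg : Measurable g) (hgC : ∀ u, |g u| ≤ C)
    {T : ℝ} (hT : 0 < T) (y : ℝ) :
    Tendsto (fun ε : ℝ => ∫ u in Ioi (0 : ℝ), (g u : ℂ) * Complex.exp (-ε * u) *
        fejerKernel (T * (u - y))) (𝓝[>] 0)
      (𝓝 (∫ u in Ioi (0 : ℝ), g u * fejerKernel (T * (u - y)) : ℝ)) := by
  have hK := continuous_fejerKernel.measurable
  rw [← integral_complex_ofReal]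
  refine tendsto_integral_filter_of_dominated_convergence
    (fun u => C * fejerKernel (T * (u - y)))
    (Eventually.of_forall fun ε => (by fun_prop : Measurable _).aestronglyMeasurable) ?_
    ((integrable_fejerKernel_comp hT y).const_mul _).integrableOn
    (Eventually.of_forall fun u => ?_)
  · filter_upwards [self_mem_nhdsWithin] with ε (hε : 0 < ε)
    refine (ae_restrict_iff' measurableSet_Ioi).2 (Eventually.of_forall fun u (hu : 0 < u) => ?_)
    have h_exp : Real.exp (-(ε : ℂ) * u).re ≤ 1 := by
      rw [Real.exp_le_one_iff]
      simpa using (mul_pos hε hu).le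
    rw [norm_mul, norm_mul, Complex.norm_exp, Complex.norm_real, Complex.norm_real,
      Real.norm_of_nonneg (fejerKernel_nonneg _), Real.norm_eq_abs]
    exact mul_le_mul_of_nonneg_right
      ((mul_le_of_le_one_right (abs_nonneg _) h_exp).trans (hgC u)) (fejerKernel_nonneg _)
  · have h_cont : Continuous fun ε : ℝ =>
        (g u : ℂ) * Complex.exp (-ε * u) * fejerKernel (T * (u - y)) := by fun_prop
    simpa using (h_cont.tendsto 0).mono_left nhdsWithin_le_nhds

lemma tendsto_integral_exp_neg_mul_atTop (Φ : ℝ → ℂ) {T : ℝ} (hT : T ≠ 0) {a b : ℝ}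
    (hab : a ≤ b) :
    Tendsto (fun y : ℝ => ∫ t in a..b, Complex.exp (-(Complex.I * (t * T * y))) * Φ t)
      atTop (𝓝 0) := by
  have h_scale : Tendsto (fun y : ℝ => y * (T / (2 * π))) atTop (cocompact ℝ) :=
    (Homeomorph.mulRight₀ (T / (2 * π))
      (div_ne_zero hT (by positivity))).isClosedEmbedding.tendsto_cocompact.mono_left
        atTop_le_cocompact
  refine ((Real.tendsto_integral_exp_smul_cocompact ((Ioc a b).indicator Φ)).comp h_scale).congr
    fun y => ?_
  rw [Function.comp_apply, intervalIntegral.integral_of_le hab,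
    ← integral_indicator measurableSet_Ioc]
  refine integral_congr_ae (Eventually.of_forall fun t => ?_)
  by_cases ht : t ∈ Ioc a b
  · have h_pi : (π : ℂ) ≠ 0 := by exact_mod_cast Real.pi_ne_zero
    simp only [Set.indicator_of_mem ht]
    rw [Circle.smul_def, Real.fourierChar_apply, smul_eq_mul]
    congr 2
    push_cast
    field_simp
  · simp [Set.indicator_of_notMem ht]

theorem tendsto_integral_mul_fejerKernel_of_laplace (hg : Measurable g) (hgC : ∀ u, |g u| ≤ C)
    (hH : ContinuousOn H {s | 0 ≤ s.re})
    (hgH : ∀ s : ℂ, 0 < s.re → ∫ u in Ioi (0 : ℝ), (g u : ℂ) * Complex.exp (-s * u) = H s)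
    {T : ℝ} (hT : 0 < T) :
    Tendsto (fun y : ℝ => ∫ u in Ioi (0 : ℝ), g u * fejerKernel (T * (u - y))) atTop (𝓝 0) := by
  have h_boundary (y : ℝ) :
      ((∫ u in Ioi (0 : ℝ), g u * fejerKernel (T * (u - y)) : ℝ) : ℂ) =
        ∫ t in (-1 : ℝ)..1, Complex.exp (-(Complex.I * (t * T * y))) *
          (((1 - |t| : ℝ) : ℂ) * H ((0 : ℝ) - Complex.I * (t * T))) := by
    simp_rw [mul_left_comm (Complex.exp _)]
    refine tendsto_nhds_unique ((tendsto_integral_laplace_mul_fejerKernel hg hgC hT y).congr' ?_)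
      (tendsto_integral_fejer_boundary hH T y)
    filter_upwards [self_mem_nhdsWithin] with ε hε
    exact integral_laplace_mul_fejerKernel hg hgC hgH hε T y
  have h_lebesgue := tendsto_integral_exp_neg_mul_atTop
    (fun t => ((1 - |t| : ℝ) : ℂ) * H ((0 : ℝ) - Complex.I * (t * T))) hT.ne'
    (by norm_num : (-1 : ℝ) ≤ 1)
  exact tendsto_ofReal_iff.1 (by simpa only [h_boundary, Complex.ofReal_zero] using h_lebesgue)

end Laplace

section Ikehara

variable {f : ℝ → ℝ} {C a : ℝ} {H : ℂ → ℂ}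

lemma measurable_of_monotone_exp_mul (hf : Monotone fun u => Real.exp u * f u) :
    Measurable f := by
  have h_eq : f = fun u => Real.exp u * f u * Real.exp (-u) := by
    funext u
    rw [mul_right_comm, ← Real.exp_add, add_neg_cancel, Real.exp_zero, one_mul]
  rw [h_eq]
  exact hf.measurable.mul (by fun_prop)

lemma exp_sub_mul_le_of_monotone_exp_mul (hf : Monotone fun u => Real.exp u * f u) {u v : ℝ}
    (huv : u ≤ v) : Real.exp (u - v) * f u ≤ f v := by
  rw [Real.exp_sub, div_mul_eq_mul_div, div_le_iff₀ (Real.exp_pos _), mul_comm (f v)]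
  exact hf huv


lemma integrable_comp_mul_fejerKernel (hf : Measurable f) (hf0 : ∀ u, 0 ≤ f u)
    (hfC : ∀ u, f u ≤ C) (T y : ℝ) : Integrable fun v => f (y + v / T) * fejerKernel v :=
  integrable_fejerKernel.bdd_mul (hf.comp (by fun_prop)).aestronglyMeasurable
    (Eventually.of_forall fun v => (Real.norm_of_nonneg (hf0 _)).trans_le (hfC _))

lemma integral_Ioi_sub_mul_fejerKernel (hf : Measurable f) (hf0 : ∀ u, 0 ≤ f u)
    (hfC : ∀ u, f u ≤ C) (hf_neg : ∀ u ≤ 0, f u = 0) {T : ℝ} (hT : 0 < T) (y : ℝ) :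
    ∫ u in Ioi (0 : ℝ), (f u - a) * fejerKernel (T * (u - y)) =
      T⁻¹ * (∫ v, f (y + v / T) * fejerKernel v) -
        a * ∫ u in Ioi (-y), fejerKernel (T * u) := by
  have h_int : Integrable fun u => f u * fejerKernel (T * (u - y)) :=
    (integrable_fejerKernel_comp hT y).bdd_mul hf.aestronglyMeasurable
      (Eventually.of_forall fun u => (Real.norm_of_nonneg (hf0 u)).trans_le (hfC u))
  have h_shift : ∫ u in Ioi (0 : ℝ), fejerKernel (T * (u - y)) =
      ∫ u in Ioi (-y), fejerKernel (T * u) := by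
    rw [← (measurePreserving_sub_right volume y).setIntegral_preimage_emb
      (measurableEmbedding_subRight y) (fun u => fejerKernel (T * u)) (Ioi (-y))]
    simp
  have h_whole : ∫ u in Ioi (0 : ℝ), f u * fejerKernel (T * (u - y)) =
      ∫ u, f u * fejerKernel (T * (u - y)) :=
    setIntegral_eq_integral_of_forall_compl_eq_zero fun u hu => by
      rw [hf_neg u (by simpa using hu), zero_mul]
  have h_scale : ∫ u, f u * fejerKernel (T * (u - y)) =
      T⁻¹ * ∫ v, f (y + v / T) * fejerKernel v := by
    have h_mul := Measure.integral_comp_mul_left (fun v => f (y + v / T) * fejerKernel v) T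
    rw [abs_of_pos (inv_pos.2 hT), smul_eq_mul] at h_mul
    rw [← h_mul, ← integral_sub_right_eq_self
      (fun u => f (y + T * u / T) * fejerKernel (T * u)) y]
    simp only [mul_div_cancel_left₀ _ hT.ne', add_sub_cancel]
  rw [← h_scale, ← h_whole, ← h_shift, ← integral_const_mul, ← integral_sub h_int.integrableOn
    ((integrable_fejerKernel_comp hT y).const_mul a).integrableOn]
  simp only [sub_mul]

lemma tendsto_integral_comp_mul_fejerKernel (hf : Measurable f) (hf0 : ∀ u, 0 ≤ f u)
    (hfC : ∀ u, f u ≤ C) (hf_neg : ∀ u ≤ 0, f u = 0) (hH : ContinuousOn H {s | 0 ≤ s.re})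
    (hfH : ∀ s : ℂ, 0 < s.re →
      ∫ u in Ioi (0 : ℝ), ((f u - a : ℝ) : ℂ) * Complex.exp (-s * u) = H s)
    {T : ℝ} (hT : 0 < T) :
    Tendsto (fun y : ℝ => ∫ v, f (y + v / T) * fejerKernel v) atTop
      (𝓝 (a * ∫ v, fejerKernel v)) := by
  have h_bound (u : ℝ) : |f u - a| ≤ C + |a| :=
    (abs_sub _ _).trans (by rw [abs_of_nonneg (hf0 u)]; gcongr; exact hfC u)
  have h_zero := tendsto_integral_mul_fejerKernel_of_laplace (hf.sub_const a) h_bound hH hfH hT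
  have h_tail : Tendsto (fun y : ℝ => ∫ u in Ioi (-y), fejerKernel (T * u)) atTop
      (𝓝 (T⁻¹ * ∫ v, fejerKernel v)) := by
    have h_scale := Measure.integral_comp_mul_left fejerKernel T
    rw [abs_of_pos (inv_pos.2 hT), smul_eq_mul] at h_scale
    rw [← h_scale]
    exact (aecover_Ioi tendsto_neg_atTop_atBot).integral_tendsto_of_countably_generated
      (integrable_fejerKernel.comp_mul_left' hT.ne')
  have h_sum := (h_zero.add (h_tail.const_mul a)).const_mul T
  simp_rw [integral_Ioi_sub_mul_fejerKernel hf hf0 hfC hf_neg hT] at h_sum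
  convert h_sum using 2 <;> field_simp <;> ring

lemma exp_neg_mul_integral_Icc_le_integral (hf : Monotone fun u => Real.exp u * f u)
    (hf0 : ∀ u, 0 ≤ f u) (hfC : ∀ u, f u ≤ C) {T : ℝ} (hT : 0 < T) (h y : ℝ) :
    Real.exp (-(2 * h)) * f (y - h) * (∫ v in Icc (-(T * h)) (T * h), fejerKernel v) ≤
      ∫ v, f (y + v / T) * fejerKernel v := by
  have h_int := integrable_comp_mul_fejerKernel (measurable_of_monotone_exp_mul hf) hf0 hfC T y
  rw [← integral_const_mul]
  refine (setIntegral_mono_on (integrable_fejerKernel.const_mul _).integrableOn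
    h_int.integrableOn measurableSet_Icc fun v hv => ?_).trans (setIntegral_le_integral h_int
      (Eventually.of_forall fun v => mul_nonneg (hf0 _) (fejerKernel_nonneg _)))
  have h_lower : -h ≤ v / T := by rw [le_div_iff₀ hT]; linarith [hv.1]
  have h_upper : v / T ≤ h := by rw [div_le_iff₀ hT]; linarith [hv.2]
  refine mul_le_mul_of_nonneg_right (le_trans ?_ (exp_sub_mul_le_of_monotone_exp_mul hf
    (show y - h ≤ y + v / T by linarith))) (fejerKernel_nonneg _)
  gcongr
  · exact hf0 _
  · linarith

lemma integral_le_exp_mul_integral_Icc (hf : Monotone fun u => Real.exp u * f u)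
    (hf0 : ∀ u, 0 ≤ f u) (hfC : ∀ u, f u ≤ C) {T : ℝ} (hT : 0 < T) (h y : ℝ) :
    ∫ v, f (y + v / T) * fejerKernel v ≤
      Real.exp (2 * h) * f (y + h) * (∫ v in Icc (-(T * h)) (T * h), fejerKernel v) +
        C * ((∫ v, fejerKernel v) - ∫ v in Icc (-(T * h)) (T * h), fejerKernel v) := by
  have h_int := integrable_comp_mul_fejerKernel (measurable_of_monotone_exp_mul hf) hf0 hfC T y
  rw [← integral_add_compl measurableSet_Icc h_int,
    ← integral_add_compl (measurableSet_Icc (a := -(T * h)) (b := T * h)) integrable_fejerKernel,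
    add_sub_cancel_left, ← integral_const_mul, ← integral_const_mul]
  refine add_le_add (setIntegral_mono_on h_int.integrableOn
    (integrable_fejerKernel.const_mul _).integrableOn measurableSet_Icc fun v hv => ?_)
    (setIntegral_mono_on h_int.integrableOn (integrable_fejerKernel.const_mul _).integrableOn
      measurableSet_Icc.compl fun v _ =>
        mul_le_mul_of_nonneg_right (hfC _) (fejerKernel_nonneg _))
  have h_lower : -h ≤ v / T := by rw [le_div_iff₀ hT]; linarith [hv.1]
  have h_upper : v / T ≤ h := by rw [div_le_iff₀ hT]; linarith [hv.2]
  refine mul_le_mul_of_nonneg_right ?_ (fejerKernel_nonneg _)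
  rw [← inv_mul_le_iff₀ (Real.exp_pos _), ← Real.exp_neg]
  refine le_trans ?_ (exp_sub_mul_le_of_monotone_exp_mul hf
    (show y + v / T ≤ y + h by linarith))
  gcongr
  · exact hf0 _
  · linarith

lemma tendsto_integral_Icc_fejerKernel :
    Tendsto (fun A : ℝ => ∫ v in Icc (-A) A, fejerKernel v) atTop (𝓝 (∫ v, fejerKernel v)) :=
  (aecover_Icc tendsto_neg_atTop_atBot tendsto_id).integral_tendsto_of_countably_generated
    integrable_fejerKernel

lemma eventually_lt_of_tendsto_integral_fejerKernel (hf : Monotone fun u => Real.exp u * f u)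
    (hf0 : ∀ u, 0 ≤ f u) (hfC : ∀ u, f u ≤ C)
    (h_conv : ∀ T > 0, Tendsto (fun y : ℝ => ∫ v, f (y + v / T) * fejerKernel v) atTop
      (𝓝 (a * ∫ v, fejerKernel v))) {b : ℝ} (hb : b < a) : ∀ᶠ y in atTop, b < f y := by
  set c := ∫ v, fejerKernel v
  set cIcc : ℝ → ℝ := fun A => ∫ v in Icc (-A) A, fejerKernel v
  have hc : 0 < c := integral_fejerKernel_pos
  have h_Icc : Tendsto cIcc atTop (𝓝 c) := tendsto_integral_Icc_fejerKernel
  have h_limit : Tendsto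
      (fun A => Real.exp (-(2 * A⁻¹)) * ((a * c - C * (c - cIcc A)) / cIcc A)) atTop (𝓝 a) := by
    have h_exp := (Real.continuous_exp.tendsto _).comp
      ((tendsto_inv_atTop_zero (𝕜 := ℝ)).const_mul 2).neg
    have h_quot := (tendsto_const_nhds (x := a * c)).sub
      ((tendsto_const_nhds (x := c)).sub h_Icc |>.const_mul C)
        |>.div h_Icc hc.ne'
    have h_prod := h_exp.mul h_quot
    rwa [sub_self, mul_zero C, sub_zero, mul_div_cancel_right₀ _ hc.ne', mul_zero, neg_zero,
      Real.exp_zero, one_mul] at h_prod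
  obtain ⟨A, hbA, hA_int, hA⟩ := ((h_limit.eventually (lt_mem_nhds hb)).and
    ((h_Icc.eventually (lt_mem_nhds hc)).and
      (eventually_gt_atTop 0))).exists
  have hA_mul : A ^ 2 * A⁻¹ = A := by field_simp
  have h_y := (((h_conv (A ^ 2) (by positivity)).sub_const (C * (c - cIcc A))).div_const
    (cIcc A)).const_mul (Real.exp (-(2 * A⁻¹)))
  filter_upwards [(tendsto_atTop_add_const_right atTop (-A⁻¹) tendsto_id).eventually
    (h_y.eventually (lt_mem_nhds hbA))] with y hy
  refine hy.trans_le ?_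
  have h_upper := integral_le_exp_mul_integral_Icc hf hf0 hfC (T := A ^ 2) (by positivity) A⁻¹
    (y + -A⁻¹)
  rw [hA_mul, neg_add_cancel_right] at h_upper
  rw [Real.exp_neg, inv_mul_le_iff₀ (Real.exp_pos _), div_le_iff₀ hA_int]
  rw [id]
  linarith

lemma eventually_gt_of_tendsto_integral_fejerKernel (hf : Monotone fun u => Real.exp u * f u)
    (hf0 : ∀ u, 0 ≤ f u) (hfC : ∀ u, f u ≤ C)
    (h_conv : ∀ T > 0, Tendsto (fun y : ℝ => ∫ v, f (y + v / T) * fejerKernel v) atTop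
      (𝓝 (a * ∫ v, fejerKernel v))) {b : ℝ} (hb : a < b) : ∀ᶠ y in atTop, f y < b := by
  set c := ∫ v, fejerKernel v
  set cIcc : ℝ → ℝ := fun A => ∫ v in Icc (-A) A, fejerKernel v
  have hc : 0 < c := integral_fejerKernel_pos
  have h_Icc : Tendsto cIcc atTop (𝓝 c) := tendsto_integral_Icc_fejerKernel
  have h_limit : Tendsto (fun A => Real.exp (2 * A⁻¹) * (a * c / cIcc A)) atTop (𝓝 a) := by
    have h_exp := (Real.continuous_exp.tendsto _).comp
      ((tendsto_inv_atTop_zero (𝕜 := ℝ)).const_mul 2)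
    have h_quot := (tendsto_const_nhds (x := a * c)).div h_Icc hc.ne'
    have h_prod := h_exp.mul h_quot
    rwa [mul_div_cancel_right₀ _ hc.ne', mul_zero, Real.exp_zero, one_mul] at h_prod
  obtain ⟨A, hbA, hA_int, hA⟩ := ((h_limit.eventually (gt_mem_nhds hb)).and
    ((h_Icc.eventually (lt_mem_nhds hc)).and
      (eventually_gt_atTop 0))).exists
  have hA_mul : A ^ 2 * A⁻¹ = A := by field_simp
  have h_y := ((h_conv (A ^ 2) (by positivity)).div_const (cIcc A)).const_mul
    (Real.exp (2 * A⁻¹))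
  filter_upwards [(tendsto_atTop_add_const_right atTop A⁻¹ tendsto_id).eventually
    (h_y.eventually (gt_mem_nhds hbA))] with y hy
  refine lt_of_le_of_lt ?_ hy
  have h_lower := exp_neg_mul_integral_Icc_le_integral hf hf0 hfC (T := A ^ 2) (by positivity)
    A⁻¹ (y + A⁻¹)
  rw [hA_mul, add_sub_cancel_right, Real.exp_neg, mul_assoc,
    inv_mul_le_iff₀ (Real.exp_pos _)] at h_lower
  rw [mul_div_assoc', le_div_iff₀ hA_int]
  exact h_lower

/- The kernel `fejerKernel (T * ·)` lives at scale `1 / T`, where `f` is almost monotone; with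
window `1 / A` and `T = A ^ 2` both the variation of `f` on the window and the mass of the kernel
outside it tend to zero. -/
theorem tendsto_of_laplace_continuousOn (hf : Monotone fun u => Real.exp u * f u)
    (hf0 : ∀ u, 0 ≤ f u) (hfC : ∀ u, f u ≤ C) (hf_neg : ∀ u ≤ 0, f u = 0)
    (hH : ContinuousOn H {s | 0 ≤ s.re})
    (hfH : ∀ s : ℂ, 0 < s.re →
      ∫ u in Ioi (0 : ℝ), ((f u - a : ℝ) : ℂ) * Complex.exp (-s * u) = H s) :
    Tendsto f atTop (𝓝 a) := by
  have h_conv (T : ℝ) (hT : T > 0) := tendsto_integral_comp_mul_fejerKernel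
    (measurable_of_monotone_exp_mul hf) hf0 hfC hf_neg hH hfH hT
  exact tendsto_order.2
    ⟨fun _ hb => eventually_lt_of_tendsto_integral_fejerKernel hf hf0 hfC h_conv hb,
      fun _ hb => eventually_gt_of_tendsto_integral_fejerKernel hf hf0 hfC h_conv hb⟩

end Ikehara

/-! ### The prime number theorem -/

section PrimeNumberTheorem

/-- The normalised Chebyshev function `ψ (e ^ u) / e ^ u`, to which Ikehara's theorem applies. -/
noncomputable def psiExp (u : ℝ) : ℝ := Chebyshev.psi (Real.exp u) * Real.exp (-u)

lemma psiExp_nonneg (u : ℝ) : 0 ≤ psiExp u :=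
  mul_nonneg (Chebyshev.psi_nonneg _) (Real.exp_pos _).le

lemma psiExp_le (u : ℝ) : psiExp u ≤ Real.log 4 + 4 := by
  rw [psiExp, Real.exp_neg, ← div_eq_mul_inv, div_le_iff₀ (Real.exp_pos u)]
  exact Chebyshev.psi_le_const_mul_self (Real.exp_pos u).le

lemma psiExp_of_nonpos {u : ℝ} (hu : u ≤ 0) : psiExp u = 0 := by
  rw [psiExp, Chebyshev.psi_eq_zero_of_le_one (Real.exp_le_one_iff.2 hu), zero_mul]

lemma monotone_exp_mul_psiExp : Monotone fun u => Real.exp u * psiExp u := by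
  have h_eq (u : ℝ) : Real.exp u * psiExp u = Chebyshev.psi (Real.exp u) := by
    rw [psiExp, mul_left_comm, ← Real.exp_add, add_neg_cancel, Real.exp_zero, mul_one]
  simp_rw [h_eq]
  exact Chebyshev.psi_mono.comp Real.exp_monotone

lemma one_add_ne_zero_of_re_nonneg {s : ℂ} (hs : 0 ≤ s.re) : 1 + s ≠ 0 := by
  intro h
  have h_re := congrArg Complex.re h
  simp only [Complex.add_re, Complex.one_re, Complex.zero_re] at h_re
  linarith

lemma psi_eq_sum_Icc_one (x : ℝ) :
    Chebyshev.psi x = ∑ k ∈ Finset.Icc 1 ⌊x⌋₊, ArithmeticFunction.vonMangoldt k := by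
  rw [Chebyshev.psi]
  rfl

lemma integral_psiExp_mul_exp {s : ℂ} (hs : 0 < s.re) :
    ∫ u in Ioi (0 : ℝ), (psiExp u : ℂ) * Complex.exp (-s * u) =
      LSeries (fun n => ((ArithmeticFunction.vonMangoldt n : ℝ) : ℂ)) (1 + s) / (1 + s) := by
  have h_bigO : (fun n : ℕ ↦ ∑ k ∈ Finset.Icc 1 n, ArithmeticFunction.vonMangoldt k) =O[atTop]
      fun n ↦ (n : ℝ) ^ (1 : ℝ) := by
    refine Asymptotics.IsBigO.of_bound (Real.log 4 + 4) (Eventually.of_forall fun n => ?_)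
    have h_psi := psi_eq_sum_Icc_one n
    rw [Nat.floor_natCast] at h_psi
    rw [← h_psi, Real.norm_of_nonneg (Chebyshev.psi_nonneg _), Real.rpow_one, Real.norm_natCast]
    exact Chebyshev.psi_le_const_mul_self n.cast_nonneg
  have h_image : Real.exp '' Ioi (0 : ℝ) = Ioi 1 := by simp
  rw [LSeries_eq_mul_integral_of_nonneg _ zero_le_one (s := 1 + s) (by simpa using hs) h_bigO
    (fun _ => ArithmeticFunction.vonMangoldt_nonneg),
    mul_div_cancel_left₀ _ (one_add_ne_zero_of_re_nonneg hs.le), ← h_image,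
    integral_image_eq_integral_abs_deriv_smul measurableSet_Ioi
      (fun x _ => (Real.hasDerivAt_exp x).hasDerivWithinAt) Real.exp_injective.injOn]
  refine setIntegral_congr_fun measurableSet_Ioi fun u _ => ?_
  rw [← Complex.ofReal_sum, ← psi_eq_sum_Icc_one, psiExp, abs_of_pos (Real.exp_pos u),
    Complex.cpow_def_of_ne_zero (by exact_mod_cast (Real.exp_pos u).ne'),
    ← Complex.ofReal_log (Real.exp_pos u).le, Real.log_exp, Complex.real_smul, mul_left_comm]
  push_cast
  rw [mul_assoc, ← Complex.exp_add, ← Complex.exp_add]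
  ring_nf

lemma exists_continuousOn_LSeries_vonMangoldt_sub_pole : ∃ G : ℂ → ℂ,
    ContinuousOn G {s | 1 ≤ s.re} ∧ ∀ s : ℂ, 1 < s.re →
      G s = LSeries (fun n => ((ArithmeticFunction.vonMangoldt n : ℝ) : ℂ)) s - 1 / (s - 1) := by
  have h_residue : (fun n : ℕ => ((ArithmeticFunction.vonMangoldt.residueClass (q := 1) 1 n : ℝ) :
      ℂ)) = fun n => ((ArithmeticFunction.vonMangoldt n : ℝ) : ℂ) := by
    funext n
    rw [ArithmeticFunction.vonMangoldt.residueClass,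
      Set.indicator_of_mem (show n ∈ {n : ℕ | (n : ZMod 1) = 1} from Subsingleton.elim _ _)]
  refine ⟨_, ArithmeticFunction.vonMangoldt.continuousOn_LFunctionResidueClassAux (q := 1) 1,
    fun s hs => ?_⟩
  rw [ArithmeticFunction.vonMangoldt.eqOn_LFunctionResidueClassAux (q := 1) (a := 1)
    isUnit_one (x := s) hs]
  simp [h_residue]

lemma integral_psiExp_sub_one_mul_exp {s : ℂ} (hs : 0 < s.re) :
    ∫ u in Ioi (0 : ℝ), ((psiExp u - 1 : ℝ) : ℂ) * Complex.exp (-s * u) =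
      (LSeries (fun n => ((ArithmeticFunction.vonMangoldt n : ℝ) : ℂ)) (1 + s) - 1 / s - 1) /
        (1 + s) := by
  have hs0 : s ≠ 0 := fun h => by simp [h] at hs
  have h_abs (u : ℝ) : |psiExp u| ≤ Real.log 4 + 4 :=
    (abs_of_nonneg (psiExp_nonneg u)).trans_le (psiExp_le u)
  simp only [Complex.ofReal_sub, Complex.ofReal_one, sub_mul, one_mul]
  rw [integral_sub (integrableOn_laplace (measurable_of_monotone_exp_mul monotone_exp_mul_psiExp)
      h_abs hs) (integrableOn_exp_mul_complex_Ioi (by simpa using hs) 0),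
    integral_psiExp_mul_exp hs, integral_exp_mul_complex_Ioi (by simpa using hs)]
  have h_one_add := one_add_ne_zero_of_re_nonneg hs.le
  simp only [Complex.ofReal_zero, mul_zero, Complex.exp_zero]
  field_simp
  ring

theorem tendsto_psi_div_self : Tendsto (fun x : ℝ => Chebyshev.psi x / x) atTop (𝓝 1) := by
  obtain ⟨G, hG_cont, hG⟩ := exists_continuousOn_LSeries_vonMangoldt_sub_pole
  have hH : ContinuousOn (fun s => (G (1 + s) - 1) / (1 + s)) {s | 0 ≤ s.re} := by
    have hG_shift : ContinuousOn (fun s => G (1 + s)) {s | 0 ≤ s.re} :=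
      hG_cont.comp (by fun_prop) fun s hs => by simpa using hs
    exact (hG_shift.sub continuousOn_const).div (by fun_prop)
      fun s => one_add_ne_zero_of_re_nonneg
  have h_psiExp : Tendsto psiExp atTop (𝓝 1) := by
    refine tendsto_of_laplace_continuousOn monotone_exp_mul_psiExp psiExp_nonneg psiExp_le
      (fun _ => psiExp_of_nonpos) hH fun s hs => ?_
    rw [hG _ (by simpa using hs), integral_psiExp_sub_one_mul_exp hs, add_sub_cancel_left]
  refine (h_psiExp.comp Real.tendsto_log_atTop).congr' ?_
  filter_upwards [eventually_gt_atTop 0] with x hx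
  rw [Function.comp_apply, psiExp, Real.exp_neg, Real.exp_log hx, div_eq_mul_inv]

theorem tendsto_theta_div_self : Tendsto (fun x : ℝ => Chebyshev.theta x / x) atTop (𝓝 1) := by
  have h_sqrt : Real.sqrt =o[atTop] (fun x : ℝ => x) := by
    have h_inv := tendsto_inv_atTop_zero.comp Real.tendsto_sqrt_atTop
    refine (Asymptotics.isLittleO_iff_tendsto' ?_).2 (h_inv.congr fun x => ?_)
    · filter_upwards [eventually_ne_atTop 0] with x hx h0
      exact absurd h0 hx
    · rw [Function.comp_apply, Real.sqrt_div_self]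
  have h_diff := (Chebyshev.isBigO_psi_sub_theta_sqrt.trans_isLittleO h_sqrt).tendsto_div_nhds_zero
  simpa [sub_div] using tendsto_psi_div_self.sub h_diff

end PrimeNumberTheorem

/-! ### A Laplace transform on the line `Re z = -1/2` -/

/-- The weight `(π / cosh (π t)) ^ 2`, which is `(π / sin (π z)) ^ 2` on the line
`z = -1/2 + i t`. -/
noncomputable def sechSq (t : ℝ) : ℝ := (π / Real.cosh (π * t)) ^ 2

lemma sechSq_nonneg (t : ℝ) : 0 ≤ sechSq t := sq_nonneg _

lemma continuous_sechSq : Continuous sechSq :=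
  (continuous_const.div (by fun_prop) fun t => (Real.cosh_pos _).ne').pow 2

lemma sigmoid_mul_one_sub_sigmoid (t : ℝ) :
    Real.sigmoid (2 * π * t) * (1 - Real.sigmoid (2 * π * t)) = sechSq t / (2 * π) ^ 2 := by
  have h_exp : Real.exp (2 * π * t) = Real.exp (π * t) ^ 2 := by
    rw [← Real.exp_nat_mul]
    ring_nf
  rw [← Real.sigmoid_neg, Real.sigmoid_def, Real.sigmoid_def, neg_neg, sechSq, Real.cosh_eq,
    Real.exp_neg, Real.exp_neg, h_exp]
  have _ := Real.exp_pos (π * t)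
  field_simp
  ring

lemma hasDerivAt_sigmoid_two_pi_mul (t : ℝ) :
    HasDerivAt (fun t : ℝ => Real.sigmoid (2 * π * t)) (sechSq t / (2 * π)) t := by
  have h := (Real.hasDerivAt_sigmoid (2 * π * t)).comp t ((hasDerivAt_id t).const_mul (2 * π))
  refine h.congr_deriv ?_
  rw [sigmoid_mul_one_sub_sigmoid]
  field_simp

lemma image_sigmoid_two_pi_mul :
    (fun t : ℝ => Real.sigmoid (2 * π * t)) '' univ = Ioo 0 1 := by
  rw [← Real.range_sigmoid, image_univ]
  exact (mul_left_surjective₀ Real.two_pi_pos.ne').range_comp Real.sigmoid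

lemma sigmoid_rpow_neg_mul_one_sub_rpow (x a : ℝ) :
    Real.sigmoid x ^ (-a) * (1 - Real.sigmoid x) ^ a = Real.exp (-(a * x)) := by
  rw [← Real.sigmoid_neg, ← Real.sigmoid_mul_rexp_neg,
    Real.mul_rpow (Real.sigmoid_nonneg _) (Real.exp_pos _).le, ← mul_assoc,
    ← Real.rpow_add (Real.sigmoid_pos _), neg_add_cancel, Real.rpow_zero, one_mul, ← Real.exp_mul]
  ring_nf

-- The substitution `x = sigmoid (2 π t)` turns this integral into the beta integral on `(0, 1)`.
lemma lintegral_exp_mul_sechSq {a : ℝ} (ha : |a| < 1) :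
    ∫⁻ t, ENNReal.ofReal
      ((2 * π * beta (1 - a) (1 + a))⁻¹ * (Real.exp (-(2 * π * a * t)) * sechSq t)) = 1 := by
  obtain ⟨ha_neg, ha_pos⟩ := abs_lt.1 ha
  have h_beta := lintegral_betaPDF_eq_one (α := 1 - a) (β := 1 + a) (by linarith) (by linarith)
  have h_inj : InjOn (fun t : ℝ => Real.sigmoid (2 * π * t)) univ :=
    (Real.sigmoid_injective.comp (mul_right_injective₀ Real.two_pi_pos.ne')).injOn
  rw [lintegral_betaPDF, ← image_sigmoid_two_pi_mul,
    lintegral_image_eq_lintegral_abs_deriv_mul MeasurableSet.univ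
      (fun t _ => (hasDerivAt_sigmoid_two_pi_mul t).hasDerivWithinAt) h_inj,
    setLIntegral_univ] at h_beta
  rw [← h_beta]
  refine lintegral_congr fun t => ?_
  rw [← ENNReal.ofReal_mul (abs_nonneg _),
    abs_of_nonneg (div_nonneg (sechSq_nonneg t) Real.two_pi_pos.le), sub_sub_cancel_left,
    add_sub_cancel_left, mul_assoc (1 / _), sigmoid_rpow_neg_mul_one_sub_rpow]
  congr 1
  have h_beta_pos := beta_pos (show 0 < 1 - a by linarith) (show 0 < 1 + a by linarith)
  field_simp

lemma abs_div_two_pi_lt_one {s : ℝ} (hs : |s| < 2 * π) : |s / (2 * π)| < 1 := by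
  rwa [abs_div, abs_of_pos Real.two_pi_pos, div_lt_one Real.two_pi_pos]

lemma two_pi_mul_beta_pos {a : ℝ} (ha : |a| < 1) : 0 < 2 * π * beta (1 - a) (1 + a) := by
  obtain ⟨ha_neg, ha_pos⟩ := abs_lt.1 ha
  exact mul_pos Real.two_pi_pos (beta_pos (by linarith) (by linarith))

lemma integrable_exp_mul_sechSq {s : ℝ} (hs : |s| < 2 * π) :
    Integrable (fun t => Real.exp (-(s * t)) * sechSq t) := by
  have ha := abs_div_two_pi_lt_one hs
  have h_lintegral := lintegral_exp_mul_sechSq ha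
  have h_pos := two_pi_mul_beta_pos ha
  rw [mul_div_cancel₀ _ Real.two_pi_pos.ne'] at h_lintegral
  have h_cont : Continuous fun t => Real.exp (-(s * t)) * sechSq t :=
    (by fun_prop : Continuous fun t : ℝ => Real.exp (-(s * t))).mul continuous_sechSq
  rw [← integrable_const_mul_iff (inv_pos.2 h_pos).ne'.isUnit]
  refine ⟨(continuous_const.mul h_cont).aestronglyMeasurable, ?_⟩
  rw [hasFiniteIntegral_iff_ofReal (Eventually.of_forall fun t =>
    mul_nonneg (inv_pos.2 h_pos).le (mul_nonneg (Real.exp_pos _).le (sechSq_nonneg t))),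
    h_lintegral]
  exact ENNReal.one_lt_top

lemma beta_one_sub_one_add {a : ℝ} (ha : a ≠ 0) :
    beta (1 - a) (1 + a) = π * a / Real.sin (π * a) := by
  have h_reflection := Real.Gamma_mul_Gamma_one_sub a
  rw [beta, sub_add_add_cancel, one_add_one_eq_two, Real.Gamma_two, div_one, add_comm,
    Real.Gamma_add_one ha]
  linear_combination a * h_reflection

lemma integral_exp_mul_sechSq {s : ℝ} (hs : |s| < 2 * π) (hs_ne : s ≠ 0) :
    ∫ t, Real.exp (-(s * t)) * sechSq t = π * s / Real.sin (s / 2) := by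
  have ha := abs_div_two_pi_lt_one hs
  have h_lintegral := lintegral_exp_mul_sechSq ha
  have h_pos := two_pi_mul_beta_pos ha
  rw [mul_div_cancel₀ _ Real.two_pi_pos.ne'] at h_lintegral
  have h_integral := integral_eq_lintegral_of_nonneg_ae
    (Eventually.of_forall fun t => mul_nonneg (inv_pos.2 h_pos).le
      (mul_nonneg (Real.exp_pos (-(s * t))).le (sechSq_nonneg t)))
    ((integrable_exp_mul_sechSq hs).const_mul _).aestronglyMeasurable
  rw [h_lintegral, ENNReal.toReal_one, integral_const_mul, inv_mul_eq_one₀ h_pos.ne'] at h_integral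
  rw [← h_integral, beta_one_sub_one_add (div_ne_zero hs_ne Real.two_pi_pos.ne'),
    show π * (s / (2 * π)) = s / 2 by field_simp]
  ring

section PolynomialMoments

variable {Ω : Type*} {mΩ : MeasurableSpace Ω} {μ : Measure Ω} {X : Ω → ℝ}

lemma integrable_eval_mul_cexp (R : ℂ[X]) {z : ℂ}
    (hz : z.re ∈ interior (integrableExpSet X μ)) :
    Integrable (fun ω => R.eval (X ω : ℂ) * Complex.exp (z * X ω)) μ := by
  induction R using Polynomial.induction_on' with
  | add P Q hP hQ => simpa only [Polynomial.eval_add, add_mul] using! hP.add hQ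
  | monomial n a =>
    simpa only [Polynomial.eval_monomial, mul_assoc] using
      (integrable_pow_mul_cexp_of_re_mem_interior_integrableExpSet hz n).const_mul a

lemma hasDerivAt_integral_eval_mul_cexp (R : ℂ[X]) {z : ℂ}
    (hz : z.re ∈ interior (integrableExpSet X μ)) :
    HasDerivAt (fun z : ℂ => ∫ ω, R.eval (X ω : ℂ) * Complex.exp (z * X ω) ∂μ)
      (∫ ω, X ω * R.eval (X ω : ℂ) * Complex.exp (z * X ω) ∂μ) z := by
  induction R using Polynomial.induction_on' with
  | add P Q hP hQ =>
    have h_nhds : ∀ᶠ w : ℂ in 𝓝 z, w.re ∈ interior (integrableExpSet X μ) :=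
      Complex.continuous_re.continuousAt.eventually (isOpen_interior.mem_nhds hz)
    have h_int (R : ℂ[X]) :
        Integrable (fun ω => X ω * R.eval (X ω : ℂ) * Complex.exp (z * X ω)) μ := by
      refine (integrable_eval_mul_cexp (Polynomial.X * R) hz).congr
        (Eventually.of_forall fun ω => ?_)
      simp only [Polynomial.eval_mul, Polynomial.eval_X]
    refine ((hP.add hQ).congr_of_eventuallyEq ?_).congr_deriv ?_
    · filter_upwards [h_nhds] with w hw
      rw [Pi.add_apply,
        ← integral_add (integrable_eval_mul_cexp P hw) (integrable_eval_mul_cexp Q hw)]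
      simp only [Polynomial.eval_add, add_mul]
    · rw [← integral_add (h_int P) (h_int Q)]
      simp only [Polynomial.eval_add, add_mul, mul_add]
  | monomial n a =>
    have h := (hasDerivAt_integral_pow_mul_exp hz n).const_mul a
    simp only [← integral_const_mul] at h
    refine h.congr_deriv ?_ |>.congr_of_eventuallyEq (Eventually.of_forall fun w => ?_)
    · refine integral_congr_ae (Eventually.of_forall fun ω => ?_)
      simp only [Polynomial.eval_monomial]
      ring
    · simp only [Polynomial.eval_monomial, mul_assoc]

end PolynomialMoments

/-- The measure on `ℝ` with density `sechSq`, an encoding that gives access to Mathlib's theory of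
moment generating functions. -/
noncomputable def sechMeasure : Measure ℝ :=
  volume.withDensity fun t => ENNReal.ofReal (sechSq t)

lemma integrable_sechMeasure_iff {E : Type*} [NormedAddCommGroup E] [NormedSpace ℝ E]
    (f : ℝ → E) : Integrable f sechMeasure ↔ Integrable (fun t => sechSq t • f t) := by
  rw [sechMeasure, integrable_withDensity_iff_integrable_smul'
    continuous_sechSq.measurable.ennreal_ofReal
    (Eventually.of_forall fun _ => ENNReal.ofReal_lt_top)]
  simp_rw [ENNReal.toReal_ofReal (sechSq_nonneg _)]

lemma integral_sechMeasure {E : Type*} [NormedAddCommGroup E] [NormedSpace ℝ E]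
    (f : ℝ → E) : ∫ t, f t ∂sechMeasure = ∫ t, sechSq t • f t := by
  rw [sechMeasure, integral_withDensity_eq_integral_toReal_smul
    continuous_sechSq.measurable.ennreal_ofReal
    (Eventually.of_forall fun _ => ENNReal.ofReal_lt_top)]
  simp_rw [ENNReal.toReal_ofReal (sechSq_nonneg _)]

lemma mem_interior_integrableExpSet_sechMeasure {s : ℝ} (hs : |s| < 2 * π) :
    s ∈ interior (integrableExpSet (fun t => -t) sechMeasure) := by
  refine mem_interior.2 ⟨Ioo (-(2 * π)) (2 * π), fun u hu => ?_, isOpen_Ioo, abs_lt.1 hs⟩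
  refine (integrable_sechMeasure_iff _).2 ((integrable_exp_mul_sechSq (abs_lt.2 hu)).congr ?_)
  refine Eventually.of_forall fun t => ?_
  simp only [smul_eq_mul, mul_neg]
  ring

/-- The integral of `P z * (π / sin (π z)) ^ 2` along the line `z = -1/2 + i t`, twisted by the
character `exp (-s t)`. As a function of `P` it is the linear functional producing the linear
forms in `1` and `β₄`. -/
noncomputable def lineTransform (P : ℂ[X]) (s : ℝ) : ℂ :=
  ∫ t : ℝ, P.eval (-1 / 2 + Complex.I * t) * ((Real.exp (-(s * t)) * sechSq t : ℝ) : ℂ)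

/-- `P (-1/2 + i t)`, as a polynomial in `-t`. -/
noncomputable def lineComp (P : ℂ[X]) : ℂ[X] :=
  P.comp (Polynomial.C (-1 / 2) + Polynomial.C (-Complex.I) * Polynomial.X)

lemma smul_eval_lineComp (P : ℂ[X]) (s t : ℝ) :
    sechSq t • ((lineComp P).eval ((-t : ℝ) : ℂ) * Complex.exp (s * (-t : ℝ))) =
      P.eval (-1 / 2 + Complex.I * t) * ((Real.exp (-(s * t)) * sechSq t : ℝ) : ℂ) := by
  simp only [lineComp, Polynomial.eval_comp, Polynomial.eval_add, Polynomial.eval_mul,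
    Polynomial.eval_C, Polynomial.eval_X, Complex.real_smul]
  push_cast
  ring_nf

lemma lineTransform_eq_integral_sechMeasure (P : ℂ[X]) (s : ℝ) : lineTransform P s =
    ∫ t, (lineComp P).eval ((-t : ℝ) : ℂ) * Complex.exp (s * (-t : ℝ)) ∂sechMeasure := by
  rw [lineTransform, integral_sechMeasure]
  simp_rw [smul_eval_lineComp]

lemma integrable_lineTransform (P : ℂ[X]) {s : ℝ} (hs : |s| < 2 * π) :
    Integrable fun t : ℝ =>
      P.eval (-1 / 2 + Complex.I * t) * ((Real.exp (-(s * t)) * sechSq t : ℝ) : ℂ) := by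
  have h := integrable_eval_mul_cexp (lineComp P) (z := s) (μ := sechMeasure)
    (X := fun t => -t) (mem_interior_integrableExpSet_sechMeasure hs)
  rw [integrable_sechMeasure_iff] at h
  simpa only [smul_eval_lineComp] using h

lemma lineTransform_add (P Q : ℂ[X]) {s : ℝ} (hs : |s| < 2 * π) :
    lineTransform (P + Q) s = lineTransform P s + lineTransform Q s := by
  simp only [lineTransform, Polynomial.eval_add, add_mul]
  exact integral_add (integrable_lineTransform P hs) (integrable_lineTransform Q hs)

lemma lineTransform_C_mul (a : ℂ) (P : ℂ[X]) (s : ℝ) :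
    lineTransform (Polynomial.C a * P) s = a * lineTransform P s := by
  simp only [lineTransform, Polynomial.eval_mul, Polynomial.eval_C, mul_assoc]
  exact integral_const_mul _ _

lemma hasDerivAt_lineTransform (P : ℂ[X]) {s : ℝ} (hs : |s| < 2 * π) :
    HasDerivAt (lineTransform P) (Complex.I * lineTransform (Polynomial.X * P) s +
      Complex.I / 2 * lineTransform P s) s := by
  have h := (hasDerivAt_integral_eval_mul_cexp (lineComp P) (z := s) (μ := sechMeasure)
    (X := fun t => -t) (mem_interior_integrableExpSet_sechMeasure hs)).comp_ofReal
  simp_rw [← lineTransform_eq_integral_sechMeasure] at h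
  refine h.congr_deriv ?_
  rw [integral_sechMeasure]
  simp only [lineTransform]
  rw [← integral_const_mul, ← integral_const_mul,
    ← integral_add ((integrable_lineTransform _ hs).const_mul _)
      ((integrable_lineTransform _ hs).const_mul _)]
  refine integral_congr_ae (Eventually.of_forall fun t => ?_)
  have h_comp := smul_eval_lineComp P s t
  simp only [Complex.real_smul, Polynomial.eval_mul, Polynomial.eval_X] at h_comp ⊢
  push_cast at h_comp ⊢
  linear_combination (-(t : ℂ)) * h_comp + (-(t : ℂ)) * P.eval (-1 / 2 + Complex.I * t) *
    (Complex.exp (-(s * t)) * sechSq t) * Complex.I_mul_I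

lemma lineTransform_one {s : ℝ} (hs : |s| < 2 * π) (hs_ne : s ≠ 0) :
    lineTransform 1 s = ((π * s / Real.sin (s / 2) : ℝ) : ℂ) := by
  simp only [lineTransform, Polynomial.eval_one, one_mul]
  rw [integral_complex_ofReal, integral_exp_mul_sechSq hs hs_ne]

lemma fwdDiff_iter_succ_id_mul {R : Type*} [CommRing R] (f : R → R) (k : ℕ) (y : R) :
    Δ_[1] ^[k + 1] (fun x => x * f x) y =
      y * Δ_[1] ^[k + 1] f y + (k + 1) * (Δ_[1] ^[k + 1] f y + Δ_[1] ^[k] f y) := by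
  induction k generalizing y with
  | zero =>
    simp only [zero_add, Function.iterate_one, Function.iterate_zero, id_eq, fwdDiff,
      Nat.cast_zero]
    ring
  | succ k ih =>
    rw [Function.iterate_succ_apply', fwdDiff, ih, ih]
    simp only [Function.iterate_succ_apply' _ (k + 1), Function.iterate_succ_apply' _ k, fwdDiff]
    push_cast
    ring

/-- The `k`-th coefficient `Δ ^ k P (0)` of `P` in the Newton basis `x.choose k`. -/
noncomputable def newtonCoeff (k : ℕ) (P : ℂ[X]) : ℂ := Δ_[1] ^[k] (fun x => P.eval x) 0

lemma newtonCoeff_eq_sum (k : ℕ) (P : ℂ[X]) : newtonCoeff k P =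
    ∑ j ∈ Finset.range (k + 1), (-1) ^ (k - j) * (k.choose j : ℂ) * P.eval (j : ℂ) := by
  rw [newtonCoeff, fwdDiff_iter_eq_sum_shift]
  simp

lemma newtonCoeff_eq_zero_of_natDegree_lt {k : ℕ} {P : ℂ[X]} (h : P.natDegree < k) :
    newtonCoeff k P = 0 :=
  congrFun (P.fwdDiff_iter_eq_zero_of_degree_lt h) 0

lemma newtonCoeff_add (k : ℕ) (P Q : ℂ[X]) :
    newtonCoeff k (P + Q) = newtonCoeff k P + newtonCoeff k Q := by
  simp only [newtonCoeff_eq_sum, Polynomial.eval_add, mul_add, Finset.sum_add_distrib]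

lemma newtonCoeff_C_mul (k : ℕ) (a : ℂ) (P : ℂ[X]) :
    newtonCoeff k (Polynomial.C a * P) = a * newtonCoeff k P := by
  simp only [newtonCoeff_eq_sum, Polynomial.eval_mul, Polynomial.eval_C, Finset.mul_sum]
  exact Finset.sum_congr rfl fun j _ => by ring

lemma newtonCoeff_zero_X_mul (P : ℂ[X]) : newtonCoeff 0 (Polynomial.X * P) = 0 := by
  simp [newtonCoeff]

lemma newtonCoeff_succ_X_mul (k : ℕ) (P : ℂ[X]) :
    newtonCoeff (k + 1) (Polynomial.X * P) =
      (k + 1) * (newtonCoeff (k + 1) P + newtonCoeff k P) := by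
  simpa only [newtonCoeff, Polynomial.eval_mul, Polynomial.eval_X, zero_mul, zero_add] using
    fwdDiff_iter_succ_id_mul (fun x => P.eval x) k 0

/-- The generating function `∑ n, n.choose k * z ^ n` of the `k`-th Newton basis polynomial. -/
noncomputable def newtonKernel (k : ℕ) (z : ℂ) : ℂ := z ^ k / (1 - z) ^ (k + 1)

/-- The rational function of `z` whose power series at `0` is `∑ n, P n * z ^ n`. -/
noncomputable def genFun (P : ℂ[X]) (z : ℂ) : ℂ :=
  ∑ k ∈ Finset.range (P.natDegree + 1), newtonCoeff k P * newtonKernel k z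

lemma genFun_eq_sum_range {P : ℂ[X]} {M : ℕ} (h : P.natDegree < M) (z : ℂ) :
    genFun P z = ∑ k ∈ Finset.range M, newtonCoeff k P * newtonKernel k z := by
  refine Finset.sum_subset (Finset.range_mono h) fun k _ hk => ?_
  rw [Finset.mem_range, not_lt] at hk
  rw [newtonCoeff_eq_zero_of_natDegree_lt hk, zero_mul]

lemma genFun_add (P Q : ℂ[X]) (z : ℂ) : genFun (P + Q) z = genFun P z + genFun Q z := by
  have hP : P.natDegree < max P.natDegree Q.natDegree + 1 := by omega
  have hQ : Q.natDegree < max P.natDegree Q.natDegree + 1 := by omega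
  have hPQ := (Polynomial.natDegree_add_le P Q).trans_lt (Nat.lt_succ_self _)
  rw [genFun_eq_sum_range hP, genFun_eq_sum_range hQ, genFun_eq_sum_range hPQ]
  simp only [newtonCoeff_add, add_mul, Finset.sum_add_distrib]

lemma genFun_C_mul (a : ℂ) (P : ℂ[X]) (z : ℂ) :
    genFun (Polynomial.C a * P) z = a * genFun P z := by
  rw [genFun_eq_sum_range ((Polynomial.natDegree_C_mul_le a P).trans_lt (Nat.lt_succ_self _)),
    genFun, Finset.mul_sum]
  simp only [newtonCoeff_C_mul, mul_assoc]

lemma genFun_zero (z : ℂ) : genFun 0 z = 0 := by simp [genFun, newtonCoeff]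

lemma genFun_one (z : ℂ) : genFun 1 z = (1 - z)⁻¹ := by
  simp [genFun, newtonCoeff, newtonKernel]

lemma hasDerivAt_newtonKernel_exp (k : ℕ) {s : ℝ} (hs : Complex.exp (Complex.I * s) ≠ 1) :
    HasDerivAt (fun s : ℝ => newtonKernel k (Complex.exp (Complex.I * s)))
      (Complex.I * (k * newtonKernel k (Complex.exp (Complex.I * s)) +
        (k + 1) * newtonKernel (k + 1) (Complex.exp (Complex.I * s)))) s := by
  have h_exp : HasDerivAt (fun s : ℝ => Complex.exp (Complex.I * s))
      (Complex.exp (Complex.I * s) * Complex.I) s := by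
    simpa using ((Complex.ofRealCLM.hasDerivAt (x := s)).const_mul Complex.I).cexp
  have h_ne : 1 - Complex.exp (Complex.I * s) ≠ 0 := sub_ne_zero.2 hs.symm
  refine ((h_exp.pow k).div ((h_exp.const_sub 1).pow (k + 1))
    (pow_ne_zero _ h_ne)).congr_deriv ?_
  simp only [newtonKernel, Pi.pow_apply]
  generalize Complex.exp (Complex.I * s) = z at h_ne
  cases k with
  | zero =>
    simp only [CharP.cast_eq_zero, zero_tsub, pow_zero, mul_one, zero_mul, zero_add, pow_one,
      Nat.cast_one, tsub_self, mul_neg, one_mul, sub_neg_eq_add, one_div, Nat.reduceAdd]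
    field_simp
  | succ k =>
    simp only [Nat.add_sub_cancel]
    push_cast
    field_simp
    ring

lemma hasDerivAt_genFun_exp (P : ℂ[X]) {s : ℝ} (hs : Complex.exp (Complex.I * s) ≠ 1) :
    HasDerivAt (fun s : ℝ => genFun P (Complex.exp (Complex.I * s)))
      (Complex.I * genFun (Polynomial.X * P) (Complex.exp (Complex.I * s))) s := by
  set M := P.natDegree + 1
  have h_sum : HasDerivAt (fun s : ℝ => genFun P (Complex.exp (Complex.I * s))) _ s :=
    HasDerivAt.fun_sum fun k _ => (hasDerivAt_newtonKernel_exp k hs).const_mul (newtonCoeff k P)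
  have h_deg : (Polynomial.X * P).natDegree < M + 1 :=
    Polynomial.natDegree_mul_le.trans_lt (by rw [Polynomial.natDegree_X]; omega)
  have h_top : newtonCoeff M P = 0 := newtonCoeff_eq_zero_of_natDegree_lt (Nat.lt_succ_self _)
  refine h_sum.congr_deriv ?_
  rw [genFun_eq_sum_range h_deg, Finset.sum_range_succ' _ M, newtonCoeff_zero_X_mul, zero_mul,
    add_zero]
  generalize Complex.exp (Complex.I * s) = z
  have h_shift : ∑ k ∈ Finset.range M, newtonCoeff k P * (k * newtonKernel k z) =
      ∑ k ∈ Finset.range M,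
        newtonCoeff (k + 1) P * (((k + 1 : ℕ) : ℂ) * newtonKernel (k + 1) z) := by
    have h := Finset.sum_range_succ' (fun k => newtonCoeff k P * (k * newtonKernel k z)) M
    rw [Finset.sum_range_succ, h_top] at h
    simpa using h
  calc ∑ k ∈ Finset.range M, newtonCoeff k P *
        (Complex.I * (k * newtonKernel k z + (k + 1) * newtonKernel (k + 1) z))
      = Complex.I * (∑ k ∈ Finset.range M, newtonCoeff k P * (k * newtonKernel k z) +
          ∑ k ∈ Finset.range M, newtonCoeff k P * ((k + 1) * newtonKernel (k + 1) z)) := by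
        rw [← Finset.sum_add_distrib, Finset.mul_sum]
        exact Finset.sum_congr rfl fun k _ => by ring
    _ = Complex.I * ∑ k ∈ Finset.range M,
          newtonCoeff (k + 1) (Polynomial.X * P) * newtonKernel (k + 1) z := by
        rw [h_shift, ← Finset.sum_add_distrib]
        congr 1
        refine Finset.sum_congr rfl fun k _ => ?_
        rw [newtonCoeff_succ_X_mul]
        push_cast
        ring

lemma exp_I_mul_ne_one {s : ℝ} (hs : |s| < 2 * π) (hs_ne : s ≠ 0) :
    Complex.exp (Complex.I * s) ≠ 1 := by
  rw [Ne, Complex.exp_eq_one_iff]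
  rintro ⟨n, hn⟩
  have h_eq : s = n * (2 * π) := by
    have h : (s : ℂ) = ((n * (2 * π) : ℝ) : ℂ) := by
      push_cast
      exact mul_left_cancel₀ Complex.I_ne_zero (by rw [hn]; ring)
    exact_mod_cast h
  rw [h_eq, abs_mul, abs_of_pos Real.two_pi_pos,
    mul_lt_iff_lt_one_left Real.two_pi_pos] at hs
  have hn_zero : n = 0 := Int.abs_lt_one_iff.1 (by exact_mod_cast hs)
  exact hs_ne (by rw [h_eq, hn_zero, Int.cast_zero, zero_mul])

/-- The closed form of `lineTransform P s`, in terms of the generating functions of `P` and `P'`. -/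
noncomputable def lineClosedForm (P : ℂ[X]) (s : ℝ) : ℂ :=
  -2 * π * Complex.I * Complex.exp (Complex.I * s / 2) *
    (s * genFun P (Complex.exp (Complex.I * s)) -
      Complex.I * genFun P.derivative (Complex.exp (Complex.I * s)))

lemma lineClosedForm_add (P Q : ℂ[X]) (s : ℝ) :
    lineClosedForm (P + Q) s = lineClosedForm P s + lineClosedForm Q s := by
  simp only [lineClosedForm, Polynomial.derivative_add, genFun_add]
  ring

lemma lineClosedForm_C_mul (a : ℂ) (P : ℂ[X]) (s : ℝ) :
    lineClosedForm (Polynomial.C a * P) s = a * lineClosedForm P s := by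
  simp only [lineClosedForm, Polynomial.derivative_C_mul, genFun_C_mul]
  ring

lemma hasDerivAt_lineClosedForm (P : ℂ[X]) {s : ℝ} (hs : Complex.exp (Complex.I * s) ≠ 1) :
    HasDerivAt (lineClosedForm P) (Complex.I * lineClosedForm (Polynomial.X * P) s +
      Complex.I / 2 * lineClosedForm P s) s := by
  have h_ofReal : HasDerivAt (fun s : ℝ => (s : ℂ)) 1 s := Complex.ofRealCLM.hasDerivAt (x := s)
  have h_exp : HasDerivAt (fun s : ℝ => Complex.exp (Complex.I * s / 2))
      (Complex.exp (Complex.I * s / 2) * (Complex.I / 2)) s := by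
    simpa using ((h_ofReal.const_mul Complex.I).div_const 2).cexp
  refine ((h_exp.const_mul (-2 * π * Complex.I)).mul
    ((h_ofReal.mul (hasDerivAt_genFun_exp P hs)).sub
      ((hasDerivAt_genFun_exp P.derivative hs).const_mul Complex.I))).congr_deriv ?_
  simp only [lineClosedForm, Polynomial.derivative_mul, Polynomial.derivative_X, one_mul,
    genFun_add, Pi.sub_apply, Pi.mul_apply]
  linear_combination (-2 * Complex.I * π * Complex.exp (Complex.I * s / 2) *
    genFun P (Complex.exp (Complex.I * s))) * Complex.I_mul_I

lemma ofReal_sin_half (s : ℝ) : ((Real.sin (s / 2) : ℝ) : ℂ) =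
    Complex.I / 2 * Complex.exp (-(Complex.I * s / 2)) * (1 - Complex.exp (Complex.I * s)) := by
  have h_exp : Complex.exp (Complex.I * s) = Complex.exp (Complex.I * s / 2) ^ 2 := by
    rw [← Complex.exp_nat_mul]
    ring_nf
  rw [h_exp, Complex.exp_neg, Complex.ofReal_sin, Complex.sin, neg_mul, Complex.exp_neg,
    show ((s / 2 : ℝ) : ℂ) * Complex.I = Complex.I * s / 2 by push_cast; ring]
  have _ := Complex.exp_ne_zero (Complex.I * s / 2)
  field_simp

lemma lineTransform_one_eq_lineClosedForm {s : ℝ} (hs : |s| < 2 * π) (hs_ne : s ≠ 0) :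
    lineTransform 1 s = lineClosedForm 1 s := by
  have _ : 1 - Complex.exp (Complex.I * s) ≠ 0 :=
    sub_ne_zero.2 (exp_I_mul_ne_one hs hs_ne).symm
  have _ := Complex.exp_ne_zero (Complex.I * s / 2)
  have _ := Complex.I_ne_zero
  rw [lineTransform_one hs hs_ne, lineClosedForm, Polynomial.derivative_one, genFun_zero,
    genFun_one, Complex.ofReal_div, ofReal_sin_half, Complex.exp_neg]
  push_cast
  simp only [mul_zero, sub_zero]
  field_simp
  linear_combination (s / (1 - Complex.exp (s * Complex.I))) * Complex.I_sq

-- Both sides satisfy the same first-order equation in `s`, which expresses the value at `X * P`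
-- through the value at `P` and its derivative.
theorem lineTransform_eq_lineClosedForm (P : ℂ[X]) {s : ℝ} (hs : |s| < 2 * π) (hs_ne : s ≠ 0) :
    lineTransform P s = lineClosedForm P s := by
  induction P using Polynomial.induction_on generalizing s with
  | C a =>
    rw [← mul_one (Polynomial.C a), lineTransform_C_mul, lineClosedForm_C_mul,
      lineTransform_one_eq_lineClosedForm hs hs_ne]
  | add P Q hP hQ => rw [lineTransform_add _ _ hs, lineClosedForm_add, hP hs hs_ne, hQ hs hs_ne]
  | monomial n a ih =>
    set P : ℂ[X] := Polynomial.C a * Polynomial.X ^ n with hP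
    rw [show Polynomial.C a * Polynomial.X ^ (n + 1) = Polynomial.X * P by rw [hP]; ring]
    have h_nhds : lineTransform P =ᶠ[𝓝 s] lineClosedForm P := by
      filter_upwards [continuous_abs.continuousAt.eventually (gt_mem_nhds hs),
        isOpen_ne.mem_nhds hs_ne] with u hu hu_ne using ih hu hu_ne
    have h_deriv := ((hasDerivAt_lineTransform P hs).congr_of_eventuallyEq h_nhds.symm).unique
      (hasDerivAt_lineClosedForm P (exp_I_mul_ne_one hs hs_ne))
    rw [ih hs hs_ne] at h_deriv
    exact mul_left_cancel₀ Complex.I_ne_zero (add_right_cancel h_deriv)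

/-! ### Linear forms from the arithmetic of `ℤ[(1 + √-7) / 2]` -/

/-- The quadratic integer `ω = (1 + √-7) / 2`; note `ω (1 - ω) = 2`. -/
noncomputable def omega : ℂ := (1 + Complex.I * (√7 : ℝ)) / 2

lemma ofReal_sqrt_seven_mul_self : ((√7 : ℝ) : ℂ) * (√7 : ℝ) = 7 := by
  rw [← Complex.ofReal_mul, Real.mul_self_sqrt (by norm_num)]
  norm_num

lemma omega_mul_self : omega * omega = omega - 2 := by
  rw [omega]
  linear_combination (1 / 4 : ℂ) * (Complex.I * Complex.I) * ofReal_sqrt_seven_mul_self +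
    (7 / 4 : ℂ) * Complex.I_mul_I

lemma one_sub_two_mul_omega : 1 - 2 * omega = -(Complex.I * (√7 : ℝ)) := by
  rw [omega]
  ring

lemma omega_im : omega.im = √7 / 2 := by simp [omega]

lemma conj_omega : starRingEnd ℂ omega = 1 - omega := by
  simp only [omega, map_div₀, map_add, map_one, map_mul, Complex.conj_I, Complex.conj_ofReal,
    map_ofNat]
  ring

/-- The ring of integers `ℤ[ω]` of `ℚ(√-7)`. -/
noncomputable def integersOmega : Subring ℂ where
  carrier := {c | ∃ x y : ℤ, c = x + y * omega}
  mul_mem' := by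
    rintro _ _ ⟨x, y, rfl⟩ ⟨u, v, rfl⟩
    refine ⟨x * u - 2 * y * v, x * v + y * u + y * v, ?_⟩
    push_cast
    linear_combination (y * v : ℂ) * omega_mul_self
  one_mem' := ⟨1, 0, by simp⟩
  add_mem' := by
    rintro _ _ ⟨x, y, rfl⟩ ⟨u, v, rfl⟩
    refine ⟨x + u, y + v, ?_⟩
    push_cast
    ring
  zero_mem' := ⟨0, 0, by simp⟩
  neg_mem' := by
    rintro _ ⟨x, y, rfl⟩
    refine ⟨-x, -y, ?_⟩
    push_cast
    ring

lemma omega_mem : omega ∈ integersOmega := ⟨0, 1, by simp⟩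

lemma omega_sub_one_mem : omega - 1 ∈ integersOmega := sub_mem omega_mem (one_mem _)

lemma conj_mem_integersOmega {c : ℂ} (hc : c ∈ integersOmega) :
    starRingEnd ℂ c ∈ integersOmega := by
  obtain ⟨x, y, rfl⟩ := hc
  refine ⟨x + y, -y, ?_⟩
  simp only [map_add, map_mul, map_intCast, conj_omega]
  push_cast
  ring

lemma exists_eq_intCast_of_mem_of_im_eq_zero {c : ℂ} (hc : c ∈ integersOmega)
    (hc_im : c.im = 0) : ∃ a : ℤ, c = a := by
  obtain ⟨x, y, rfl⟩ := hc
  have hy : y = 0 := by simpa [omega_im] using hc_im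
  exact ⟨x, by simp [hy]⟩

-- A real multiple of `(ω - 1) ^ m` is also a multiple of the conjugate `(-ω) ^ m`; the two are
-- coprime and their product is `(-1) ^ m * (-2) ^ m`.
lemma exists_eq_two_pow_mul_of_im_eq_zero {c : ℂ} (hc : c ∈ integersOmega) {m : ℕ}
    (h_im : ((omega - 1) ^ m * c).im = 0) : ∃ a : ℤ, (omega - 1) ^ m * c = 2 ^ m * a := by
  let w : integersOmega := ⟨omega, omega_mem⟩
  have h_coprime : IsCoprime ((w - 1) ^ m) (w ^ m) := IsCoprime.pow ⟨-1, 1, by ring⟩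
  let x : integersOmega := (w - 1) ^ m * ⟨c, hc⟩
  have h_conj : x = w ^ m * ((-1) ^ m * ⟨starRingEnd ℂ c, conj_mem_integersOmega hc⟩) := by
    refine Subtype.ext ((Complex.conj_eq_iff_im.2 h_im).symm.trans ?_)
    simp only [map_mul, map_pow, map_sub, conj_omega, map_one]
    push_cast
    rw [show 1 - omega - 1 = omega * (-1) by ring, mul_pow, mul_assoc]
  obtain ⟨d, hd⟩ := h_coprime.mul_dvd (Dvd.intro _ rfl) (Dvd.intro _ h_conj.symm)
  have h_val : (omega - 1) ^ m * c = 2 ^ m * ((-1) ^ m * d : ℂ) := by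
    have h : (omega - 1) ^ m * c = (omega - 1) ^ m * omega ^ m * d := congrArg Subtype.val hd
    rw [h, ← mul_pow, show (omega - 1) * omega = 2 * -1 by linear_combination omega_mul_self,
      mul_pow, mul_assoc]
  have h_d_im : ((-1) ^ m * d : ℂ).im = 0 := by
    rw [h_val, show (2 : ℂ) ^ m = ((2 ^ m : ℝ) : ℂ) by push_cast; rfl,
      Complex.im_ofReal_mul] at h_im
    exact (mul_eq_zero.1 h_im).resolve_left (by positivity)
  obtain ⟨a, ha⟩ := exists_eq_intCast_of_mem_of_im_eq_zero
    (mul_mem (pow_mem (neg_mem (one_mem _)) m) d.2) h_d_im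
  exact ⟨a, by rw [h_val, ha]⟩

/-- The angle `θ = arctan (√7 / 3)`, so that `β₄ = √7 * θ`. -/
noncomputable def theta : ℝ := Real.arctan (√7 / 3)

lemma theta_pos : 0 < theta := Real.arctan_pos.2 (by positivity)

lemma theta_lt_pi_div_two : theta < π / 2 := Real.arctan_lt_pi_div_two _

lemma abs_theta_lt : |theta| < 2 * π := by
  rw [abs_of_pos theta_pos]
  linarith [theta_lt_pi_div_two, Real.pi_pos]

lemma theta_sub_two_pi_neg : theta - 2 * π < 0 := by
  linarith [theta_lt_pi_div_two, Real.pi_pos]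

lemma abs_theta_sub_two_pi_lt : |theta - 2 * π| < 2 * π := by
  rw [abs_of_neg theta_sub_two_pi_neg]
  linarith [theta_pos]

lemma sqrt_one_add_sq : √(1 + (√7 / 3) ^ 2) = 4 / 3 := by
  rw [div_pow, Real.sq_sqrt (by norm_num), Real.sqrt_eq_iff_eq_sq] <;> norm_num

lemma cos_theta : Real.cos theta = 3 / 4 := by
  rw [theta, Real.cos_arctan, sqrt_one_add_sq]
  norm_num

lemma sin_theta : Real.sin theta = √7 / 4 := by
  rw [theta, Real.sin_arctan, sqrt_one_add_sq]
  ring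

lemma sin_half_theta : Real.sin (theta / 2) = √2 / 4 := by
  rw [Real.sin_half_eq_sqrt theta_pos.le (by linarith [theta_lt_pi_div_two, Real.pi_pos]),
    cos_theta, Real.sqrt_eq_iff_mul_self_eq (by norm_num) (by positivity)]
  linear_combination (-1 / 16) * Real.mul_self_sqrt (show (0 : ℝ) ≤ 2 by norm_num)

lemma one_sub_exp_theta_mul_omega : (1 - Complex.exp (Complex.I * theta)) * omega = 1 := by
  rw [mul_comm Complex.I, Complex.exp_mul_I, ← Complex.ofReal_cos, ← Complex.ofReal_sin,
    cos_theta, sin_theta, omega]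
  push_cast
  linear_combination (-1 / 8 : ℂ) * (Complex.I * Complex.I) * ofReal_sqrt_seven_mul_self +
    (-7 / 8 : ℂ) * Complex.I_mul_I

lemma exp_half_theta_mul_omega :
    Complex.exp (Complex.I * theta / 2) * omega = Complex.I * (√2 : ℝ) := by
  have h_sin := ofReal_sin_half theta
  have h_sqrt : ((√2 : ℝ) : ℂ) * (√2 : ℝ) = 2 := by
    rw [← Complex.ofReal_mul, Real.mul_self_sqrt (by norm_num)]
    norm_num
  have h_ne : ((√2 : ℝ) : ℂ) ≠ 0 := by
    rintro h
    simp [h] at h_sqrt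
  rw [sin_half_theta, Complex.exp_neg] at h_sin
  field_simp at h_sin
  refine mul_right_cancel₀ h_ne ?_
  push_cast at h_sin
  linear_combination 2 * omega * h_sin + 2 * Complex.I * one_sub_exp_theta_mul_omega -
    Complex.I * h_sqrt

lemma newtonKernel_exp_theta (k : ℕ) :
    newtonKernel k (Complex.exp (Complex.I * theta)) = omega * (omega - 1) ^ k := by
  have h_mul := one_sub_exp_theta_mul_omega
  have h_ne : 1 - Complex.exp (Complex.I * theta) ≠ 0 := left_ne_zero_of_mul_eq_one h_mul
  have h_exp : omega - 1 = Complex.exp (Complex.I * theta) * omega := by linear_combination h_mul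
  rw [newtonKernel, div_eq_iff (pow_ne_zero _ h_ne), h_exp]
  calc Complex.exp (Complex.I * theta) ^ k
      = Complex.exp (Complex.I * theta) ^ k *
          ((1 - Complex.exp (Complex.I * theta)) * omega) ^ (k + 1) := by rw [h_mul]; simp
    _ = _ := by
      rw [mul_pow, mul_pow]
      ring

/-- The Newton expansion of `P` with `x.choose k` replaced by `(ω - 1) ^ k`; it is `ω⁻¹` times the
value of `genFun P` at `exp (i θ)`. -/
noncomputable def newtonOmega (P : ℂ[X]) : ℂ :=
  ∑ k ∈ Finset.range (P.natDegree + 1), newtonCoeff k P * (omega - 1) ^ k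

lemma genFun_exp_theta (P : ℂ[X]) :
    genFun P (Complex.exp (Complex.I * theta)) = omega * newtonOmega P := by
  rw [genFun, newtonOmega, Finset.mul_sum]
  refine Finset.sum_congr rfl fun k _ => ?_
  rw [newtonKernel_exp_theta]
  ring

lemma lineTransform_theta (P : ℂ[X]) : lineTransform P theta =
    2 * √2 * π * (theta * newtonOmega P - Complex.I * newtonOmega P.derivative) := by
  rw [lineTransform_eq_lineClosedForm P abs_theta_lt theta_pos.ne', lineClosedForm,
    genFun_exp_theta, genFun_exp_theta]
  linear_combination (-2 * π * Complex.I * exp_half_theta_mul_omega - 2 * π * √2 * Complex.I_mul_I)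
    * (theta * newtonOmega P - Complex.I * newtonOmega P.derivative)

lemma lineTransform_theta_sub_two_pi (P : ℂ[X]) : lineTransform P (theta - 2 * π) =
    -(2 * √2 * π * ((theta - 2 * π) * newtonOmega P - Complex.I * newtonOmega P.derivative)) := by
  have h_exp : Complex.exp (Complex.I * ((theta - 2 * π : ℝ) : ℂ)) =
      Complex.exp (Complex.I * theta) := by
    rw [show Complex.I * ((theta - 2 * π : ℝ) : ℂ) = Complex.I * theta - 2 * π * Complex.I by
      push_cast; ring, Complex.exp_periodic.sub_eq]
  have h_exp_half : Complex.exp (Complex.I * ((theta - 2 * π : ℝ) : ℂ) / 2) =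
      -Complex.exp (Complex.I * theta / 2) := by
    rw [show Complex.I * ((theta - 2 * π : ℝ) : ℂ) / 2 = Complex.I * theta / 2 - π * Complex.I by
      push_cast; ring, Complex.exp_sub_pi_mul_I]
  rw [lineTransform_eq_lineClosedForm P abs_theta_sub_two_pi_lt theta_sub_two_pi_neg.ne,
    lineClosedForm, h_exp, h_exp_half, genFun_exp_theta, genFun_exp_theta]
  push_cast
  linear_combination (2 * π * Complex.I * exp_half_theta_mul_omega + 2 * π * √2 * Complex.I_mul_I)
    * ((theta - 2 * π) * newtonOmega P - Complex.I * newtonOmega P.derivative)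

lemma natCast_mul_newtonCoeff_mem {P : ℂ[X]} {l : ℕ}
    (hP : ∀ j : ℕ, (l : ℂ) * P.eval (j : ℂ) ∈ (Int.castRingHom ℂ).range) (k : ℕ) :
    (l : ℂ) * newtonCoeff k P ∈ integersOmega := by
  rw [newtonCoeff_eq_sum, Finset.mul_sum]
  refine sum_mem fun j _ => ?_
  obtain ⟨a, ha⟩ := hP j
  rw [mul_left_comm, ← ha]
  exact mul_mem (mul_mem (pow_mem (neg_mem (one_mem _)) _) (natCast_mem _ _)) (intCast_mem _ a)

lemma newtonCoeff_eq_zero_of_lt {P : ℂ[X]} {m k : ℕ} (hP : ∀ j < m, P.eval (j : ℂ) = 0)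
    (hk : k < m) : newtonCoeff k P = 0 := by
  rw [newtonCoeff_eq_sum]
  refine Finset.sum_eq_zero fun j hj => ?_
  rw [hP j ((Finset.mem_range_succ_iff.1 hj).trans_lt hk), mul_zero]

lemma exists_natCast_mul_newtonOmega_eq {P : ℂ[X]} {l m : ℕ}
    (hP : ∀ j : ℕ, (l : ℂ) * P.eval (j : ℂ) ∈ (Int.castRingHom ℂ).range)
    (hP_zero : ∀ j < m, P.eval (j : ℂ) = 0) :
    ∃ c ∈ integersOmega, (l : ℂ) * newtonOmega P = (omega - 1) ^ m * c := by
  refine ⟨∑ k ∈ Finset.range (P.natDegree + 1),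
    (l : ℂ) * newtonCoeff k P * (omega - 1) ^ (k - m),
    sum_mem fun k _ => mul_mem (natCast_mul_newtonCoeff_mem hP k) (pow_mem omega_sub_one_mem _), ?_⟩
  rw [newtonOmega, Finset.mul_sum, Finset.mul_sum]
  refine Finset.sum_congr rfl fun k _ => ?_
  rcases lt_or_ge k m with hk | hk
  · rw [newtonCoeff_eq_zero_of_lt hP_zero hk]
    ring
  · obtain ⟨d, rfl⟩ := Nat.exists_eq_add_of_le hk
    rw [Nat.add_sub_cancel_left, pow_add]
    ring

lemma lineTransform_im_eq_zero {P : ℂ[X]}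
    (hP : ∀ t : ℝ, (P.eval (-1 / 2 + Complex.I * t)).im = 0) (s : ℝ) :
    (lineTransform P s).im = 0 := by
  have h_real (t : ℝ) : P.eval (-1 / 2 + Complex.I * t) * (Real.exp (-(s * t)) * sechSq t : ℝ) =
      (((P.eval (-1 / 2 + Complex.I * t)).re * (Real.exp (-(s * t)) * sechSq t) : ℝ) : ℂ) := by
    rw [Complex.ofReal_mul _ (Real.exp _ * _), Complex.conj_eq_iff_re.1
      (Complex.conj_eq_iff_im.2 (hP t))]
  simp only [lineTransform, h_real]
  rw [integral_complex_ofReal, Complex.ofReal_im]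

lemma lineTransform_theta_add_sub_two_pi (P : ℂ[X]) :
    lineTransform P theta + lineTransform P (theta - 2 * π) =
      4 * √2 * π ^ 2 * newtonOmega P := by
  rw [lineTransform_theta, lineTransform_theta_sub_two_pi]
  ring

lemma newtonOmega_im_eq_zero {P : ℂ[X]}
    (hP : ∀ t : ℝ, (P.eval (-1 / 2 + Complex.I * t)).im = 0) : (newtonOmega P).im = 0 := by
  have h_sum : lineTransform P theta + lineTransform P (theta - 2 * π) =
      ((4 * √2 * π ^ 2 : ℝ) : ℂ) * newtonOmega P := mod_cast lineTransform_theta_add_sub_two_pi P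
  have h := congrArg Complex.im h_sum
  rw [Complex.add_im, lineTransform_im_eq_zero hP, lineTransform_im_eq_zero hP,
    Complex.im_ofReal_mul, add_zero, zero_eq_mul] at h
  exact h.resolve_left (by positivity)

lemma newtonOmega_derivative_re_eq_zero {P : ℂ[X]}
    (hP : ∀ t : ℝ, (P.eval (-1 / 2 + Complex.I * t)).im = 0) :
    (newtonOmega P.derivative).re = 0 := by
  have h_theta : lineTransform P theta = ((2 * √2 * π : ℝ) : ℂ) *
      (theta * newtonOmega P - Complex.I * newtonOmega P.derivative) :=
    mod_cast lineTransform_theta P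
  have h := congrArg Complex.im h_theta
  rw [lineTransform_im_eq_zero hP, Complex.im_ofReal_mul, zero_eq_mul] at h
  simpa [newtonOmega_im_eq_zero hP] using h.resolve_left (by positivity)

theorem exists_linearForm {P : ℂ[X]} {l m : ℕ}
    (hP : ∀ j : ℕ, P.eval (j : ℂ) ∈ (Int.castRingHom ℂ).range)
    (hP' : ∀ j : ℕ, (l : ℂ) * P.derivative.eval (j : ℂ) ∈ (Int.castRingHom ℂ).range)
    (hP_zero : ∀ j < m, P.eval (j : ℂ) = 0)
    (hP'_zero : ∀ j < m, P.derivative.eval (j : ℂ) = 0)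
    (hP_real : ∀ t : ℝ, (P.eval (-1 / 2 + Complex.I * t)).im = 0) :
    ∃ A B : ℤ,
      l * (lineTransform P theta + lineTransform P (theta - 2 * π)) =
        2 ^ m * (4 * √2 * π ^ 2) * A ∧
      √7 * l * lineTransform P theta = 2 ^ m * (2 * √2 * π) * (A * (√7 * theta) - B) := by
  obtain ⟨c, hc, h_lr⟩ := exists_natCast_mul_newtonOmega_eq
    (fun j => mul_mem (natCast_mem _ l) (hP j)) hP_zero
  obtain ⟨c', hc', h_lr'⟩ := exists_natCast_mul_newtonOmega_eq hP' hP'_zero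
  obtain ⟨A, hA⟩ := exists_eq_two_pow_mul_of_im_eq_zero hc (m := m) (by
    rw [← h_lr]
    simp [newtonOmega_im_eq_zero hP_real])
  obtain ⟨B, hB⟩ := exists_eq_two_pow_mul_of_im_eq_zero (m := m)
    (mul_mem hc' (sub_mem (one_mem _) (mul_mem (ofNat_mem _ 2) omega_mem))) (by
    rw [← mul_assoc, ← h_lr', one_sub_two_mul_omega]
    simp [newtonOmega_derivative_re_eq_zero hP_real])
  rw [← h_lr] at hA
  rw [← mul_assoc, ← h_lr', one_sub_two_mul_omega] at hB
  refine ⟨A, -B, ?_, ?_⟩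
  · rw [lineTransform_theta_add_sub_two_pi]
    linear_combination (4 * √2 * π ^ 2) * hA
  · rw [lineTransform_theta]
    push_cast
    linear_combination (2 * √2 * π) * (√7 * theta * hA + hB)

/-! ### The auxiliary polynomials -/

lemma mul_eval_mem_of_natDegree_lt {R : Type*} [CommRing R] {S : Subring R} {H : R[X]} {m : ℕ}
    (hH : H.natDegree < m) {d x : R}
    (hS : ∀ k < m, d * H.eval (x + (k + 1 : ℕ)) ∈ S) : d * H.eval x ∈ S := by
  have h_sum := congrFun (Polynomial.fwdDiff_iter_eq_zero_of_degree_lt hH) x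
  rw [fwdDiff_iter_eq_sum_shift, Finset.sum_range_succ'] at h_sum
  simp only [zero_smul, add_zero, Nat.choose_zero_right, Pi.zero_apply, zsmul_eq_mul, Nat.sub_zero,
    Nat.cast_one, mul_one, nsmul_eq_mul, Int.cast_pow, Int.cast_neg, Int.cast_one] at h_sum
  have h_sign : (-1 : R) ^ m * (-1) ^ m = 1 := by
    rw [← mul_pow, neg_one_mul, neg_neg, one_pow]
  have h_eval : d * H.eval x = -((-1) ^ m * ∑ k ∈ Finset.range m,
      (((-1 : ℤ) ^ (m - (k + 1)) * m.choose (k + 1) : ℤ) : R) *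
        (d * H.eval (x + (k + 1 : ℕ)))) := by
    simp_rw [mul_left_comm _ d, ← Finset.mul_sum]
    linear_combination d * (-1) ^ m * h_sum - d * H.eval x * h_sign
  rw [h_eval]
  exact neg_mem (mul_mem (pow_mem (neg_mem (one_mem _)) _)
    (sum_mem fun k hk => mul_mem (intCast_mem _ _) (hS k (Finset.mem_range.1 hk))))

-- Writing `F = F n + (X - n) * H`, we have `F' n = H n` and `k * H (n + k) = F (n + k) - F n`.
lemma natCast_mul_eval_derivative_mem_range {F : ℂ[X]} {m d : ℕ} (hm : 0 < m)
    (hF_deg : F.natDegree ≤ m) (hd : ∀ k, 1 ≤ k → k ≤ m → k ∣ d)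
    (hF : ∀ j : ℕ, F.eval (j : ℂ) ∈ (Int.castRingHom ℂ).range) (n : ℕ) :
    (d : ℂ) * F.derivative.eval (n : ℂ) ∈ (Int.castRingHom ℂ).range := by
  obtain ⟨H, hH⟩ : Polynomial.X - Polynomial.C (n : ℂ) ∣ F - Polynomial.C (F.eval (n : ℂ)) :=
    Polynomial.X_sub_C_dvd_sub_C_eval
  have h_der : F.derivative.eval (n : ℂ) = H.eval (n : ℂ) := by
    simpa using congrArg (fun G => G.derivative.eval (n : ℂ)) hH
  have h_deg : H.natDegree < m := by
    rcases eq_or_ne H 0 with rfl | hH_ne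
    · simpa using hm
    · have h := congrArg Polynomial.natDegree hH
      rw [Polynomial.natDegree_sub_C, (Polynomial.monic_X_sub_C _).natDegree_mul' hH_ne,
        Polynomial.natDegree_X_sub_C] at h
      lia
  rw [h_der]
  refine mul_eval_mem_of_natDegree_lt h_deg fun k hk => ?_
  obtain ⟨c, hc⟩ := hd (k + 1) (by lia) hk
  have h_eval := congrArg (Polynomial.eval ((n + (k + 1) : ℕ) : ℂ)) hH
  have h_mul : (d : ℂ) * H.eval ((n : ℂ) + (k + 1 : ℕ)) =
      c * (F.eval ((n + (k + 1) : ℕ) : ℂ) - F.eval (n : ℂ)) := by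
    simp only [Polynomial.eval_sub, Polynomial.eval_mul, Polynomial.eval_X,
      Polynomial.eval_C] at h_eval
    rw [h_eval, hc]
    push_cast
    ring
  rw [h_mul]
  exact mul_mem (natCast_mem _ c) (sub_mem (hF _) (hF n))

/-- The polynomial `(X + K) (X + K - 1) ⋯ (X - K + 1)` with `2 * K` factors. -/
noncomputable def shiftedPochhammer (K : ℕ) : ℤ[X] :=
  ∏ i ∈ Finset.range (2 * K), (Polynomial.X + Polynomial.C (K - i : ℤ))

/-- The binomial polynomial `x ↦ (x + K).choose (2 * K)`. -/
noncomputable def shiftedChoose (K : ℕ) : ℂ[X] :=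
  Polynomial.C ((2 * K).factorial : ℂ)⁻¹ * (shiftedPochhammer K).map (Int.castRingHom ℂ)

lemma eval_shiftedChoose (K : ℕ) (x : ℂ) : (shiftedChoose K).eval x =
    (∏ i ∈ Finset.range (2 * K), (x + K - i)) / ((2 * K).factorial : ℂ) := by
  simp [shiftedChoose, shiftedPochhammer, Polynomial.map_prod, Polynomial.eval_prod,
    add_sub_assoc, div_eq_inv_mul]

lemma eval_natCast_shiftedChoose (K j : ℕ) :
    (shiftedChoose K).eval (j : ℂ) = ((j + K).choose (2 * K) : ℕ) := by
  rw [eval_shiftedChoose, Nat.choose_eq_descFactorial_div_factorial,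
    Nat.cast_div (Nat.factorial_dvd_descFactorial _ _) (mod_cast Nat.factorial_ne_zero _),
    ← descPochhammer_eval_eq_descFactorial, descPochhammer_eval_eq_prod_range, Nat.cast_add]

lemma eval_natCast_shiftedChoose_mem_range (K j : ℕ) :
    (shiftedChoose K).eval (j : ℂ) ∈ (Int.castRingHom ℂ).range := by
  rw [eval_natCast_shiftedChoose]
  exact natCast_mem _ _

lemma eval_natCast_shiftedChoose_of_lt {K j : ℕ} (h : j < K) :
    (shiftedChoose K).eval (j : ℂ) = 0 := by
  rw [eval_natCast_shiftedChoose, Nat.choose_eq_zero_of_lt (by lia), Nat.cast_zero]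

lemma natDegree_shiftedChoose_le (K : ℕ) : (shiftedChoose K).natDegree ≤ 2 * K := by
  refine (Polynomial.natDegree_C_mul_le _ _).trans (Polynomial.natDegree_map_le.trans ?_)
  refine (Polynomial.natDegree_prod_le _ _).trans ?_
  simp only [Polynomial.natDegree_X_add_C, Finset.sum_const, Finset.card_range, smul_eq_mul,
    mul_one, le_refl]

lemma dvd_lcmUpto {k n : ℕ} (h_one : 1 ≤ k) (h : k ≤ n) : k ∣ n.lcmUpto :=
  Finset.dvd_lcm (f := id) (Finset.mem_Icc.2 ⟨h_one, h⟩)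

lemma lcmUpto_mul_eval_derivative_shiftedChoose_mem_range {K n : ℕ} (hK : 0 < K) (h : 2 * K ≤ n)
    (j : ℕ) : (n.lcmUpto : ℂ) * (shiftedChoose K).derivative.eval (j : ℂ) ∈
      (Int.castRingHom ℂ).range :=
  natCast_mul_eval_derivative_mem_range (by lia) (natDegree_shiftedChoose_le K)
    (fun _ h_one hk => dvd_lcmUpto h_one (hk.trans h)) (eval_natCast_shiftedChoose_mem_range K) j

/-- The auxiliary polynomial `(x + 7 N).choose (14 N) * (x + 5 N).choose (10 N) *
(x + 3 N).choose (6 N)` of the construction. -/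
noncomputable def auxPoly (N : ℕ) : ℂ[X] :=
  shiftedChoose (7 * N) * shiftedChoose (5 * N) * shiftedChoose (3 * N)

lemma eval_auxPoly_mem_range (N j : ℕ) :
    (auxPoly N).eval (j : ℂ) ∈ (Int.castRingHom ℂ).range := by
  rw [auxPoly, Polynomial.eval_mul, Polynomial.eval_mul]
  exact mul_mem (mul_mem (eval_natCast_shiftedChoose_mem_range _ _)
    (eval_natCast_shiftedChoose_mem_range _ _)) (eval_natCast_shiftedChoose_mem_range _ _)

lemma lcmUpto_mul_eval_derivative_auxPoly_mem_range {N : ℕ} (hN : 0 < N) (j : ℕ) :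
    ((14 * N).lcmUpto : ℂ) * (auxPoly N).derivative.eval (j : ℂ) ∈ (Int.castRingHom ℂ).range := by
  have h_int (K : ℕ) := eval_natCast_shiftedChoose_mem_range K j
  have h_der {K : ℕ} (hK : 0 < K) (h : 2 * K ≤ 14 * N) :=
    lcmUpto_mul_eval_derivative_shiftedChoose_mem_range hK h j
  simp only [auxPoly, Polynomial.derivative_mul, Polynomial.eval_add, Polynomial.eval_mul, mul_add,
    add_mul]
  refine add_mem (add_mem ?_ ?_) ?_
  · rw [← mul_assoc, ← mul_assoc]
    exact mul_mem (mul_mem (h_der (by lia) (by lia)) (h_int _)) (h_int _)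
  · rw [← mul_assoc, mul_left_comm]
    exact mul_mem (mul_mem (h_int _) (h_der (by lia) (by lia))) (h_int _)
  · rw [mul_left_comm]
    exact mul_mem (mul_mem (h_int _) (h_int _)) (h_der (by lia) (by lia))

lemma eval_auxPoly_of_lt {N j : ℕ} (h : j < 5 * N) : (auxPoly N).eval (j : ℂ) = 0 := by
  simp [auxPoly, eval_natCast_shiftedChoose_of_lt h]

-- Both `shiftedChoose (7 * N)` and `shiftedChoose (5 * N)` vanish at `j`, a zero of order two.
lemma eval_derivative_auxPoly_of_lt {N j : ℕ} (h : j < 5 * N) :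
    (auxPoly N).derivative.eval (j : ℂ) = 0 := by
  simp [auxPoly, Polynomial.derivative_mul, eval_natCast_shiftedChoose_of_lt h,
    eval_natCast_shiftedChoose_of_lt (show j < 7 * N by lia)]

/-! ### Prime factors saved from the common denominator -/

lemma card_filter_dvd_sub_range {p : ℤ} (hp : 0 < p) (x : ℤ) (n : ℕ) :
    (((Finset.range n).filter (fun i : ℕ => p ∣ x - i)).card : ℤ) = x / p - (x - n) / p := by
  have h_card : ((Finset.range n).filter (fun i : ℕ => p ∣ x - i)).card =
      ((Finset.Ioc (x - n) x).filter (p ∣ ·)).card := by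
    refine Finset.card_nbij' (fun i => x - i) (fun y => (x - y).toNat) ?_ ?_ ?_ ?_
    · intro i hi
      simp only [Finset.coe_filter, Finset.mem_range, Finset.mem_Ioc, mem_ofPred_eq] at hi ⊢
      exact ⟨by lia, hi.2⟩
    · intro y hy
      simp only [Finset.coe_filter, Finset.mem_range, Finset.mem_Ioc, mem_ofPred_eq] at hy ⊢
      exact ⟨by lia, (show x - ((x - y).toNat : ℤ) = y by lia).symm ▸ hy.2⟩
    · intro i _
      simp
    · intro y hy
      simp only [Finset.coe_filter, Finset.mem_Ioc, mem_ofPred_eq] at hy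
      lia
  have h_le : (x - n) / p ≤ x / p := Int.ediv_le_ediv hp (by lia)
  lift p to ℕ using hp.le
  rw [h_card, Int.Ioc_filter_dvd_card _ _ hp]
  simp only [Int.cast_natCast, Rat.floor_intCast_div_natCast]
  exact max_eq_left (by lia)

section EvalDerivative

variable {R : Type*} [CommRing R] [DecidableRel ((· ∣ ·) : R → R → Prop)]

lemma pow_card_filter_dvd_prod {ι : Type*} (s : Finset ι) (f : ι → R) (p : R) :
    p ^ (s.filter (fun i => p ∣ f i)).card ∣ ∏ i ∈ s, f i := by
  rw [← Finset.prod_const]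
  exact (Finset.prod_dvd_prod_of_dvd _ _ fun i hi => (Finset.mem_filter.1 hi).2).trans
    (Finset.prod_dvd_prod_of_subset _ _ _ (Finset.filter_subset _ s))

lemma pow_card_filter_sub_one_dvd_eval_derivative_prod {ι : Type*} (s : Finset ι) (c : ι → R)
    (p x : R) :
    p ^ ((s.filter (fun i => p ∣ x + c i)).card - 1) ∣
      (∏ i ∈ s, (Polynomial.X + Polynomial.C (c i))).derivative.eval x := by
  classical
  rw [Polynomial.derivative_prod_finset, Polynomial.eval_finsetSum]
  refine Finset.dvd_sum fun i _ => ?_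
  simp only [Polynomial.eval_prod, Polynomial.eval_add, Polynomial.eval_X,
    Polynomial.eval_C, Polynomial.derivative_X_add_C, mul_one]
  refine (pow_dvd_pow _ ?_).trans (pow_card_filter_dvd_prod _ _ _)
  rw [Finset.filter_erase]
  exact Finset.pred_card_le_card_erase

end EvalDerivative

lemma pow_dvd_eval_derivative_mul {R : Type*} [CommRing R] {f g : R[X]} {p x : R} {a b : ℕ}
    (hf : p ^ a ∣ f.eval x) (hf' : p ^ (a - 1) ∣ f.derivative.eval x)
    (hg : p ^ b ∣ g.eval x) (hg' : p ^ (b - 1) ∣ g.derivative.eval x) :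
    p ^ (a + b - 1) ∣ (f * g).derivative.eval x := by
  rw [Polynomial.derivative_mul, Polynomial.eval_add, Polynomial.eval_mul, Polynomial.eval_mul]
  refine dvd_add ?_ ?_
  · exact (pow_dvd_pow p (by lia : a + b - 1 ≤ a - 1 + b)).trans
      ((pow_add p _ _).dvd.trans (mul_dvd_mul hf' hg))
  · exact (pow_dvd_pow p (by lia : a + b - 1 ≤ a + (b - 1))).trans
      ((pow_add p _ _).dvd.trans (mul_dvd_mul hf hg'))

/-- The number of factors of `shiftedPochhammer K` divisible by `p` at the integer `x`. -/
def dvdCount (p : ℤ) (K : ℕ) (x : ℤ) : ℕ :=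
  ((Finset.range (2 * K)).filter (fun i : ℕ => p ∣ x + (K - i))).card

lemma dvdCount_eq {p : ℤ} (hp : 0 < p) (K : ℕ) (x : ℤ) :
    (dvdCount p K x : ℤ) = (x + K) / p - (x - K) / p := by
  simp only [dvdCount, ← add_sub_assoc]
  rw [card_filter_dvd_sub_range hp, Nat.cast_mul, Nat.cast_ofNat,
    show x + K - 2 * (K : ℤ) = x - K by ring]

lemma pow_dvdCount_dvd (p : ℤ) (K : ℕ) (x : ℤ) :
    p ^ dvdCount p K x ∣ (shiftedPochhammer K).eval x := by
  simp only [shiftedPochhammer, Polynomial.eval_prod, Polynomial.eval_add, Polynomial.eval_X,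
    Polynomial.eval_C]
  exact pow_card_filter_dvd_prod _ _ _

lemma pow_dvdCount_sub_one_dvd (p : ℤ) (K : ℕ) (x : ℤ) :
    p ^ (dvdCount p K x - 1) ∣ (shiftedPochhammer K).derivative.eval x :=
  pow_card_filter_sub_one_dvd_eval_derivative_prod _ _ _ _

lemma pow_dvdCount_sub_one_dvd_mul (p : ℤ) (K L M : ℕ) (x : ℤ) :
    p ^ (dvdCount p K x + dvdCount p L x + dvdCount p M x - 1) ∣
      (shiftedPochhammer K * shiftedPochhammer L * shiftedPochhammer M).derivative.eval x := by
  refine pow_dvd_eval_derivative_mul ?_ ?_ (pow_dvdCount_dvd p M x) (pow_dvdCount_sub_one_dvd p M x)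
  · rw [pow_add, Polynomial.eval_mul]
    exact mul_dvd_mul (pow_dvdCount_dvd p K x) (pow_dvdCount_dvd p L x)
  · exact pow_dvd_eval_derivative_mul (pow_dvdCount_dvd p K x) (pow_dvdCount_sub_one_dvd p K x)
      (pow_dvdCount_dvd p L x) (pow_dvdCount_sub_one_dvd p L x)

/-- Left ends, in multiples of `1 / 84`, of the intervals `[1 / 6, 3 / 7)`, `[1 / 2, 5 / 7)`,
`[3 / 4, 6 / 7)`: a prime `p` is saved when the fractional part of `2 * N / p` lies in one of
them. -/
def savingLeft : Fin 3 → ℕ := ![14, 42, 63]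

/-- Right ends, in multiples of `1 / 84`, of the intervals starting at `savingLeft`. -/
def savingRight : Fin 3 → ℕ := ![36, 60, 72]

lemma savingLeft_pos (i : Fin 3) : 14 ≤ savingLeft i := by
  fin_cases i <;> simp [savingLeft]

lemma savingLeft_lt_savingRight (i : Fin 3) : savingLeft i < savingRight i := by
  fin_cases i <;> simp [savingLeft, savingRight]

lemma savingRight_le (i : Fin 3) : savingRight i ≤ 72 := by
  fin_cases i <;> simp [savingRight]

lemma add_lt_of_ediv_sub_ediv_le {p x y : ℤ} (hp : 0 < p) (h : (x + y) / p - x / p ≤ y / p) :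
    x + y < p * (x / p) + p * (y / p) + p := by
  have h_le : p * ((x + y) / p) ≤ p * (x / p + y / p) := mul_le_mul_of_nonneg_left (by lia) hp.le
  linarith [Int.lt_mul_ediv_self_add (x := x + y) hp]

-- If no floor gained anything, then in units of `p` the fractional parts would satisfy
-- `{w} + {7 * m} < 1`, `{w + m} + {5 * m} < 1` and `{w + 2 * m} + {3 * m} < 1`, which is
-- impossible.
lemma ediv_add_one_le_of_lt {p m w : ℤ} (hm : m < p) (hw_nonneg : 0 ≤ w) (hw : w < p) {i : Fin 3}
    (hi_left : savingLeft i * p ≤ 84 * m) (hi_right : 84 * m < savingRight i * p) :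
    7 * m / p + 5 * m / p + 3 * m / p + 1 ≤
      ((w + 7 * m) / p - w / p) + ((w + m + 5 * m) / p - (w + m) / p) +
        ((w + 2 * m + 3 * m) / p - (w + 2 * m) / p) := by
  have hp : 0 < p := hw_nonneg.trans_lt hw
  have hm_nonneg : 0 ≤ m := by nlinarith [savingLeft_pos i]
  by_contra! h
  have h_seven := Int.ediv_add_ediv_le_add_ediv hp (x := w) (y := 7 * m)
  have h_five := Int.ediv_add_ediv_le_add_ediv hp (x := w + m) (y := 5 * m)
  have h_three := Int.ediv_add_ediv_le_add_ediv hp (x := w + 2 * m) (y := 3 * m)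
  have h_lt_seven := add_lt_of_ediv_sub_ediv_le hp (x := w) (y := 7 * m) (by lia)
  have h_lt_five := add_lt_of_ediv_sub_ediv_le hp (x := w + m) (y := 5 * m) (by lia)
  have h_lt_three := add_lt_of_ediv_sub_ediv_le hp (x := w + 2 * m) (y := 3 * m) (by lia)
  clear h h_seven h_five h_three
  have h_floor {x : ℤ} (k : ℤ) (hx_nonneg : 0 ≤ x) (hx : x < k * p) :
      ∃ f, x / p = f ∧ 0 ≤ f ∧ f < k ∧ p * f ≤ x ∧ x < p * f + p :=
    ⟨x / p, rfl, Int.ediv_nonneg hx_nonneg hp.le, Int.ediv_lt_of_lt_mul hp hx,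
      Int.mul_ediv_self_le hp.ne', Int.lt_mul_ediv_self_add hp⟩
  obtain ⟨f₁, e₁, _, _, _, _⟩ := h_floor (x := w + m) 2 (by lia) (by lia)
  obtain ⟨f₂, e₂, _, _, _, _⟩ := h_floor (x := w + 2 * m) 3 (by lia) (by lia)
  obtain ⟨f₃, e₃, _, _, _, _⟩ := h_floor (x := 3 * m) 3 (by lia) (by lia)
  obtain ⟨f₅, e₅, _, _, _, _⟩ := h_floor (x := 5 * m) 5 (by lia) (by lia)
  obtain ⟨f₇, e₇, _, _, _, _⟩ := h_floor (x := 7 * m) 7 (by lia) (by lia)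
  rw [Int.ediv_eq_zero_of_lt hw_nonneg hw, e₇] at h_lt_seven
  rw [e₁, e₅] at h_lt_five
  rw [e₂, e₃] at h_lt_three
  clear e₁ e₂ e₃ e₅ e₇ h_floor
  fin_cases i <;>
    simp only [savingLeft, savingRight, Fin.zero_eta, Fin.mk_one, Fin.reduceFinMk, Fin.isValue,
      Matrix.cons_val, Nat.cast_ofNat] at hi_left hi_right <;>
    interval_cases f₃ <;> try lia
  all_goals interval_cases f₇ <;> try lia
  all_goals interval_cases f₅ <;> try lia
  all_goals interval_cases f₁ <;> interval_cases f₂ <;> lia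

lemma ediv_add_one_le {p N : ℤ} (ν : ℤ) (hp : 0 < p) {i : Fin 3}
    (hi_left : savingLeft i * p ≤ 84 * (2 * N % p))
    (hi_right : 84 * (2 * N % p) < savingRight i * p) :
    2 * (7 * N) / p + 2 * (5 * N) / p + 2 * (3 * N) / p + 1 ≤
      ((ν + 7 * N) / p - (ν - 7 * N) / p) + ((ν + 5 * N) / p - (ν - 5 * N) / p) +
        ((ν + 3 * N) / p - (ν - 3 * N) / p) := by
  have h_mod := ediv_add_one_le_of_lt (Int.emod_lt_of_pos _ hp) (Int.emod_nonneg (ν - 7 * N) hp.ne')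
    (Int.emod_lt_of_pos _ hp) hi_left hi_right
  have hN := Int.emod_add_mul_ediv (2 * N) p
  have hν := Int.emod_add_mul_ediv (ν - 7 * N) p
  set m := 2 * N % p
  set a := 2 * N / p
  set w := (ν - 7 * N) % p
  set b := (ν - 7 * N) / p
  have h_ediv {x : ℤ} (y j : ℤ) (h : x = y + p * j) : x / p = y / p + j := by
    rw [h, Int.add_mul_ediv_left _ _ hp.ne']
  have h_multiple (k : ℤ) :=
    h_ediv (x := 2 * (k * N)) (k * m) (k * a) (by linear_combination -k * hN)
  rw [h_multiple, h_multiple, h_multiple,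
    h_ediv (x := ν + 7 * N) (w + 7 * m) (b + 7 * a) (by linear_combination -hν - 7 * hN),
    h_ediv (x := ν + 5 * N) (w + m + 5 * m) (b + 6 * a) (by linear_combination -hν - 6 * hN),
    h_ediv (x := ν + 3 * N) (w + 2 * m + 3 * m) (b + 5 * a) (by linear_combination -hν - 5 * hN),
    h_ediv (x := ν - 3 * N) (w + 2 * m) (b + 2 * a) (by linear_combination -hν - 2 * hN),
    h_ediv (x := ν - 5 * N) (w + m) (b + a) (by linear_combination -hν - hN)]
  have h_zero : w / p = 0 :=
    Int.ediv_eq_zero_of_lt (Int.emod_nonneg _ hp.ne') (Int.emod_lt_of_pos _ hp)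
  linarith

lemma padicValNat_factorial_of_lt_sq {p n : ℕ} (hp : p.Prime) (h : n < p ^ 2) :
    padicValNat p n.factorial = n / p := by
  have := Fact.mk hp
  rcases eq_or_ne n 0 with rfl | hn
  · simp
  · simp [padicValNat_factorial (Nat.log_lt_of_lt_pow hn h)]

lemma dvd_of_pow_padicValNat_add_one_dvd_mul {p D : ℕ} {a : ℤ} (hp : p.Prime) (hD : D ≠ 0)
    (h : (p : ℤ) ^ (padicValNat p D + 1) ∣ a * D) : (p : ℤ) ∣ a := by
  have := Fact.mk hp
  rcases eq_or_ne a 0 with rfl | ha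
  · exact dvd_zero _
  have hD' : (D : ℤ) ≠ 0 := mod_cast hD
  rw [padicValInt_dvd_iff, padicValInt.mul ha hD', padicValInt.of_nat] at h
  rw [← pow_one (p : ℤ), padicValInt_dvd_iff]
  have := h.resolve_left (mul_ne_zero ha hD')
  lia

/-- The common denominator of the three binomial polynomials in `auxPoly N`. -/
def auxDenom (N : ℕ) : ℕ :=
  (2 * (7 * N)).factorial * (2 * (5 * N)).factorial * (2 * (3 * N)).factorial

lemma auxDenom_ne_zero (N : ℕ) : auxDenom N ≠ 0 := by
  simp only [auxDenom]
  positivity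

lemma padicValNat_auxDenom {N p : ℕ} (hp : p.Prime) (h_sq : 14 * N < p ^ 2) :
    padicValNat p (auxDenom N) = 2 * (7 * N) / p + 2 * (5 * N) / p + 2 * (3 * N) / p := by
  have := Fact.mk hp
  rw [auxDenom, padicValNat.mul (by positivity) (by positivity),
    padicValNat.mul (by positivity) (by positivity),
    padicValNat_factorial_of_lt_sq hp (by lia), padicValNat_factorial_of_lt_sq hp (by lia),
    padicValNat_factorial_of_lt_sq hp (by lia)]

lemma auxDenom_mul_auxPoly (N : ℕ) : Polynomial.C (auxDenom N : ℂ) * auxPoly N =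
    (shiftedPochhammer (7 * N) * shiftedPochhammer (5 * N) * shiftedPochhammer (3 * N)).map
      (Int.castRingHom ℂ) := by
  have h (K : ℕ) : Polynomial.C ((2 * K).factorial : ℂ) * shiftedChoose K =
      (shiftedPochhammer K).map (Int.castRingHom ℂ) := by
    rw [shiftedChoose, ← mul_assoc, ← Polynomial.C_mul,
      mul_inv_cancel₀ (mod_cast Nat.factorial_ne_zero _), Polynomial.C_1, one_mul]
  simp only [Polynomial.map_mul, ← h, auxPoly, auxDenom, Nat.cast_mul, Polynomial.C_mul]
  ring

lemma auxDenom_mul_eval_derivative_auxPoly (N j : ℕ) :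
    (auxDenom N : ℂ) * (auxPoly N).derivative.eval (j : ℂ) =
      (((shiftedPochhammer (7 * N) * shiftedPochhammer (5 * N) *
        shiftedPochhammer (3 * N)).derivative.eval (j : ℤ) : ℤ) : ℂ) := by
  rw [← Polynomial.eval_C_mul, ← Polynomial.derivative_C_mul, auxDenom_mul_auxPoly,
    Polynomial.derivative_map, ← Int.cast_natCast, Polynomial.eval_intCast_map, Int.cast_id,
    eq_intCast]

/-- The condition under which a prime `p` with `14 * N < p ^ 2` divides the integers
`(14 * N).lcmUpto * (auxPoly N).derivative.eval j`. -/
def IsSaved (N p : ℕ) : Prop :=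
  ∃ i, savingLeft i * p ≤ 84 * (2 * N % p) ∧ 84 * (2 * N % p) < savingRight i * p

lemma IsSaved.dvd {N p j : ℕ} {a : ℤ} (h : IsSaved N p) (hp : p.Prime) (hp_le : p ≤ 14 * N)
    (h_sq : 14 * N < p ^ 2)
    (ha : ((14 * N).lcmUpto : ℂ) * (auxPoly N).derivative.eval (j : ℂ) = a) : (p : ℤ) ∣ a := by
  have hp_pos : (0 : ℤ) < p := mod_cast hp.pos
  obtain ⟨i, hi_left, hi_right⟩ := h
  have h_count : padicValNat p (auxDenom N) + 1 ≤
      dvdCount p (7 * N) j + dvdCount p (5 * N) j + dvdCount p (3 * N) j := by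
    rw [padicValNat_auxDenom hp h_sq]
    zify
    simp only [dvdCount_eq hp_pos, Nat.cast_mul, Nat.cast_ofNat]
    exact ediv_add_one_le j hp_pos (mod_cast hi_left) (mod_cast hi_right)
  have h_mul : a * auxDenom N = (14 * N).lcmUpto * (shiftedPochhammer (7 * N) *
      shiftedPochhammer (5 * N) * shiftedPochhammer (3 * N)).derivative.eval (j : ℤ) := by
    have h := auxDenom_mul_eval_derivative_auxPoly N j
    rw [← Int.cast_inj (α := ℂ), Int.cast_mul, Int.cast_mul, ← h, ← ha]
    push_cast
    ring
  refine dvd_of_pow_padicValNat_add_one_dvd_mul hp (auxDenom_ne_zero N) ?_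
  rw [h_mul, pow_succ']
  refine mul_dvd_mul (mod_cast dvd_lcmUpto hp.one_le hp_le) ((pow_dvd_pow _ ?_).trans
    (pow_dvdCount_sub_one_dvd_mul _ _ _ _ _))
  lia

open Classical in
/-- The primes that can be removed from `(14 * N).lcmUpto`. -/
noncomputable def savedPrimes (N : ℕ) : Finset ℕ :=
  (Finset.Iic (14 * N)).filter fun p => p.Prime ∧ 14 * N < p ^ 2 ∧ IsSaved N p

lemma mem_savedPrimes {N p : ℕ} :
    p ∈ savedPrimes N ↔ p ≤ 14 * N ∧ p.Prime ∧ 14 * N < p ^ 2 ∧ IsSaved N p := by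
  simp [savedPrimes]

lemma prime_of_mem_savedPrimes {N p : ℕ} (h : p ∈ savedPrimes N) : p.Prime :=
  (mem_savedPrimes.1 h).2.1

/-- The multiplier clearing the denominators of the construction. -/
noncomputable def multiplier (N : ℕ) : ℕ :=
  (14 * N).lcmUpto / ∏ p ∈ savedPrimes N, p

lemma multiplier_mul_prod (N : ℕ) : multiplier N * ∏ p ∈ savedPrimes N, p = (14 * N).lcmUpto :=
  Nat.div_mul_cancel (Finset.prod_primes_dvd _ (fun _ hp => (prime_of_mem_savedPrimes hp).prime)
    fun _ hp => dvd_lcmUpto (prime_of_mem_savedPrimes hp).one_le (mem_savedPrimes.1 hp).1)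

lemma multiplier_pos (N : ℕ) : 0 < multiplier N :=
  Nat.pos_of_mul_pos_right ((multiplier_mul_prod N).symm ▸ Nat.lcmUpto_pos (14 * N))

lemma multiplier_mul_eval_derivative_auxPoly_mem_range {N : ℕ} (hN : 0 < N) (j : ℕ) :
    (multiplier N : ℂ) * (auxPoly N).derivative.eval (j : ℂ) ∈ (Int.castRingHom ℂ).range := by
  obtain ⟨a, ha⟩ := lcmUpto_mul_eval_derivative_auxPoly_mem_range hN j
  obtain ⟨b, rfl⟩ : ((∏ p ∈ savedPrimes N, p : ℕ) : ℤ) ∣ a := by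
    rw [Int.natCast_dvd]
    refine Finset.prod_primes_dvd _ (fun _ hp => (prime_of_mem_savedPrimes hp).prime) fun p hp => ?_
    obtain ⟨hp_le, hp_prime, h_sq, h_saved⟩ := mem_savedPrimes.1 hp
    exact Int.natCast_dvd.1 (h_saved.dvd hp_prime hp_le h_sq ha.symm)
  have h_ne : ((∏ p ∈ savedPrimes N, p : ℕ) : ℂ) ≠ 0 :=
    mod_cast Finset.prod_ne_zero_iff.2 fun _ hp => (prime_of_mem_savedPrimes hp).ne_zero
  refine ⟨b, mul_left_cancel₀ h_ne ?_⟩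
  rw [← multiplier_mul_prod N, eq_intCast] at ha
  push_cast at ha ⊢
  linear_combination ha

lemma log_multiplier (N : ℕ) : Real.log (multiplier N) =
    Chebyshev.psi (14 * N : ℕ) - ∑ p ∈ savedPrimes N, Real.log p := by
  have h_prod : ∏ p ∈ savedPrimes N, (p : ℝ) ≠ 0 :=
    Finset.prod_ne_zero_iff.2 fun _ hp => mod_cast (prime_of_mem_savedPrimes hp).ne_zero
  rw [Chebyshev.psi_eq_log_lcmUpto, ← multiplier_mul_prod N, Nat.cast_mul, Nat.cast_prod,
    Real.log_mul (mod_cast (multiplier_pos N).ne') h_prod,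
    Real.log_prod fun _ hp => mod_cast (prime_of_mem_savedPrimes hp).ne_zero]
  ring

lemma isSaved_of_le_of_lt {N p q : ℕ} (i : Fin 3) (h_left : p * (84 * q + savingLeft i) ≤ 168 * N)
    (h_right : 168 * N < p * (84 * q + savingRight i)) : IsSaved N p := by
  have hp : 0 < p := Nat.pos_of_mul_pos_right (h_right.trans_le' (Nat.zero_le _))
  have h_floor : 2 * N / p = q := by
    refine Nat.div_eq_of_lt_le ?_ ?_
    · nlinarith
    · nlinarith [savingRight_le i]
  have h_mod := Nat.mod_add_div (2 * N) p
  rw [h_floor] at h_mod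
  exact ⟨i, by linarith, by linarith⟩

/-- The saved primes `p` with `2 * N / p` in the `i`-th interval shifted by the integer `q`. -/
def savedBlock (N q : ℕ) (i : Fin 3) : Finset ℕ :=
  (Finset.Ioc (168 * N / (84 * q + savingRight i)) (168 * N / (84 * q + savingLeft i))).filter
    Nat.Prime

lemma mem_savedBlock {N q p : ℕ} {i : Fin 3} : p ∈ savedBlock N q i ↔
    p.Prime ∧ p * (84 * q + savingLeft i) ≤ 168 * N ∧ 168 * N < p * (84 * q + savingRight i) := by
  have h_left := savingLeft_pos i
  have h_lt := savingLeft_lt_savingRight i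
  rw [savedBlock, Finset.mem_filter, Finset.mem_Ioc, Nat.div_lt_iff_lt_mul (by lia),
    Nat.le_div_iff_mul_le (by lia)]
  tauto

lemma savedBlock_subset {N Q q : ℕ} (hq : q < Q) (hN : 4 * (Q + 1) ^ 2 ≤ N) (i : Fin 3) :
    savedBlock N q i ⊆ savedPrimes N := by
  intro p hp
  obtain ⟨h_prime, h_left, h_right⟩ := mem_savedBlock.1 hp
  refine mem_savedPrimes.2 ⟨?_, h_prime, ?_, isSaved_of_le_of_lt i h_left h_right⟩
  · have : p * 14 ≤ p * (84 * q + savingLeft i) :=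
      Nat.mul_le_mul_left _ (by linarith [savingLeft_pos i])
    lia
  · have h_lt : 2 * N < p * (Q + 1) := by
      have : p * (84 * q + savingRight i) ≤ p * (84 * (Q + 1)) :=
        Nat.mul_le_mul_left _ (by linarith [savingRight_le i])
      lia
    have h_sq_lt : (2 * N) ^ 2 < p ^ 2 * (Q + 1) ^ 2 := by
      rw [← mul_pow]
      exact Nat.pow_lt_pow_left h_lt two_ne_zero
    by_contra! h_sq
    nlinarith [Nat.mul_le_mul_right ((Q + 1) ^ 2) h_sq, Nat.mul_le_mul_left N hN]

lemma eq_of_savingLeft_lt_savingRight {i j : Fin 3} (h : savingLeft i < savingRight j)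
    (h' : savingLeft j < savingRight i) : i = j := by
  fin_cases i <;> fin_cases j <;> simp_all [savingLeft, savingRight]

lemma pairwiseDisjoint_savedBlock (N : ℕ) (s : Set (ℕ × Fin 3)) :
    s.PairwiseDisjoint fun x => savedBlock N x.1 x.2 := by
  rintro ⟨q, i⟩ - ⟨r, j⟩ - h_ne
  refine Finset.disjoint_left.2 fun p hp_i hp_j => h_ne ?_
  obtain ⟨-, hi_left, hi_right⟩ := mem_savedBlock.1 hp_i
  obtain ⟨-, hj_left, hj_right⟩ := mem_savedBlock.1 hp_j
  have h_lt := lt_of_mul_lt_mul_left (hi_left.trans_lt hj_right) (Nat.zero_le p)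
  have h_gt := lt_of_mul_lt_mul_left (hj_left.trans_lt hi_right) (Nat.zero_le p)
  have hi := savingRight_le i
  have hj := savingRight_le j
  obtain rfl : q = r := by lia
  rw [eq_of_savingLeft_lt_savingRight (i := i) (j := j) (by lia) (by lia)]

lemma sum_savedBlock_le {N Q : ℕ} (hN : 4 * (Q + 1) ^ 2 ≤ N) :
    ∑ q ∈ Finset.range Q, ∑ i, ∑ p ∈ savedBlock N q i, Real.log p ≤
      ∑ p ∈ savedPrimes N, Real.log p := by
  rw [← Finset.sum_product' (Finset.range Q) Finset.univ
      (fun q i => ∑ p ∈ savedBlock N q i, Real.log p),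
    ← Finset.sum_biUnion (pairwiseDisjoint_savedBlock N _)]
  refine Finset.sum_le_sum_of_subset_of_nonneg (Finset.biUnion_subset.2 fun x hx => ?_)
    fun p _ _ => Real.log_natCast_nonneg p
  exact savedBlock_subset (by simpa using hx) hN x.2

lemma theta_sub_theta_eq_sum {m n : ℕ} (h : m ≤ n) : Chebyshev.theta n - Chebyshev.theta m =
    ∑ p ∈ (Finset.Ioc m n).filter Nat.Prime, Real.log p := by
  rw [Chebyshev.theta, Chebyshev.theta, Nat.floor_natCast, Nat.floor_natCast, sub_eq_iff_eq_add',
    ← Finset.sum_union (Finset.disjoint_filter_filter (Finset.Ioc_disjoint_Ioc_of_le le_rfl)),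
    ← Finset.filter_union, Finset.Ioc_union_Ioc_eq_Ioc (Nat.zero_le _) h]

lemma sum_savedBlock (N q : ℕ) (i : Fin 3) : ∑ p ∈ savedBlock N q i, Real.log p =
    Chebyshev.theta (168 / (84 * q + savingLeft i) * N) -
      Chebyshev.theta (168 / (84 * q + savingRight i) * N) := by
  have h_theta (m : ℕ) :
      Chebyshev.theta (168 / m * N) = Chebyshev.theta (168 * N / m : ℕ) := by
    rw [Chebyshev.theta_eq_theta_coe_floor, div_mul_eq_mul_div, ← Nat.floor_div_eq_div (K := ℝ)]
    push_cast
    rfl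
  have h_le := Nat.div_le_div_left (a := 168 * N)
    (by linarith [savingLeft_lt_savingRight i] : 84 * q + savingLeft i ≤ 84 * q + savingRight i)
    (by linarith [savingLeft_pos i])
  have h_left := h_theta (84 * q + savingLeft i)
  have h_right := h_theta (84 * q + savingRight i)
  push_cast at h_left h_right
  rw [savedBlock, ← theta_sub_theta_eq_sum h_le, h_left, h_right]

lemma tendsto_comp_const_mul_div {f : ℝ → ℝ} (hf : Tendsto (fun x => f x / x) atTop (𝓝 1)) {c : ℝ}
    (hc : 0 < c) : Tendsto (fun N : ℕ => f (c * N) / N) atTop (𝓝 c) := by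
  have h_lim := (hf.comp (tendsto_natCast_atTop_atTop.const_mul_atTop hc)).mul_const c
  rw [one_mul] at h_lim
  refine h_lim.congr fun N => ?_
  rw [Function.comp_apply, div_mul_eq_mul_div, mul_comm _ c, mul_div_mul_left _ _ hc.ne']

/-- The limit of `1 / N` times the logarithm of the product of the saved primes `p` with
`2 * N / p` in `[q, q + 1)`. -/
noncomputable def savingDensity (q : ℕ) : ℝ :=
  ∑ i, (168 / (84 * q + savingLeft i) - 168 / (84 * q + savingRight i) : ℝ)

lemma tendsto_sum_savedBlock_div (q : ℕ) :
    Tendsto (fun N : ℕ => (∑ i, ∑ p ∈ savedBlock N q i, Real.log p) / N) atTop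
      (𝓝 (savingDensity q)) := by
  simp only [sum_savedBlock, Finset.sum_div, sub_div]
  refine tendsto_finsetSum _ fun i _ => ?_
  have h_left : 0 < savingLeft i := by linarith [savingLeft_pos i]
  have h_right : 0 < savingRight i := h_left.trans (savingLeft_lt_savingRight i)
  exact (tendsto_comp_const_mul_div tendsto_theta_div_self (by positivity)).sub
    (tendsto_comp_const_mul_div tendsto_theta_div_self (by positivity))

lemma eventually_log_multiplier_le {Q : ℕ} {c : ℝ}
    (hc : 14 - ∑ q ∈ Finset.range Q, savingDensity q < c) :
    ∀ᶠ N : ℕ in atTop, Real.log (multiplier N) ≤ c * N := by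
  have h_lim : Tendsto (fun N : ℕ => Chebyshev.psi (14 * N) / N - ∑ q ∈ Finset.range Q,
      (∑ i, ∑ p ∈ savedBlock N q i, Real.log p) / N) atTop
        (𝓝 (14 - ∑ q ∈ Finset.range Q, savingDensity q)) :=
    (tendsto_comp_const_mul_div tendsto_psi_div_self (by norm_num)).sub
      (tendsto_finsetSum _ fun q _ => tendsto_sum_savedBlock_div q)
  filter_upwards [h_lim.eventually_lt_const hc, eventually_ge_atTop (4 * (Q + 1) ^ 2),
    eventually_gt_atTop 0] with N h_lt hN hN_pos
  rw [← Finset.sum_div, ← sub_div, div_lt_iff₀ (mod_cast hN_pos)] at h_lt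
  rw [log_multiplier, Nat.cast_mul, Nat.cast_ofNat]
  linarith [sum_savedBlock_le hN]

/-- The shift for which the saved density at `q ≥ 30` dominates a telescoping difference. -/
noncomputable def tailShift (i : Fin 3) : ℝ :=
  (savingLeft i + savingRight i) / 168 - 1 / 2 + 1 / 240

/-- A telescoping lower bound for the sum of `savingDensity` from `q` on. -/
noncomputable def densityTail (q : ℝ) : ℝ :=
  ∑ i, (savingRight i - savingLeft i) / 42 / (q + tailShift i)

lemma div_sub_div_le_of_mul_le {a b x y : ℝ} (ha : 0 < a) (hab : a ≤ b) (hx : 0 < x)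
    (hxy : y = x + 1) (h : a * b ≤ x * y) : (b - a) / x - (b - a) / y ≤ 1 / a - 1 / b := by
  have hb : 0 < b := ha.trans_le hab
  have hy : 0 < y := by linarith
  rw [div_sub_div _ _ hx.ne' hy.ne', div_sub_div _ _ ha.ne' hb.ne', one_mul, mul_one,
    show (b - a) * y - x * (b - a) = b - a by rw [hxy]; ring]
  exact div_le_div_of_nonneg_left (by linarith) (mul_pos ha hb) h

lemma densityTail_sub_le {q : ℕ} (hq : 30 ≤ q) :
    densityTail q - densityTail (q + 1) ≤ savingDensity q := by
  have hq' : (30 : ℝ) ≤ q := mod_cast hq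
  rw [densityTail, densityTail, savingDensity, ← Finset.sum_sub_distrib]
  refine Finset.sum_le_sum fun i _ => ?_
  have hl : (14 : ℝ) ≤ savingLeft i := mod_cast savingLeft_pos i
  have hlr : (savingLeft i : ℝ) < savingRight i := mod_cast savingLeft_lt_savingRight i
  have h := div_sub_div_le_of_mul_le (a := q + savingLeft i / 84) (b := q + savingRight i / 84)
    (x := q + tailShift i) (y := q + 1 + tailShift i) (by linarith) (by linarith)
    (by rw [tailShift]; linarith) (by ring) (by rw [tailShift]; nlinarith)
  have h_scale (k : ℝ) : 168 / (84 * q + k) = 2 * (1 / (q + k / 84)) := by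
    rw [show 84 * q + k = 84 * (q + k / 84) by ring, div_mul_eq_div_div]
    ring
  rw [h_scale, h_scale]
  calc _ = 2 * ((q + savingRight i / 84 - (q + savingLeft i / 84)) / (q + tailShift i) -
        (q + savingRight i / 84 - (q + savingLeft i / 84)) / (q + 1 + tailShift i)) := by ring
    _ ≤ _ := by linarith

lemma densityTail_sub_le_sum (n : ℕ) : densityTail 30 - densityTail (30 + n) ≤
    ∑ q ∈ Finset.range n, savingDensity (30 + q) := by
  have h_telescope := Finset.sum_range_sub' (fun q : ℕ => densityTail (30 + q)) n
  rw [Nat.cast_zero, add_zero] at h_telescope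
  rw [← h_telescope]
  refine Finset.sum_le_sum fun q _ => ?_
  have h := densityTail_sub_le (q := 30 + q) (by lia)
  push_cast at h ⊢
  rwa [← add_assoc]

lemma savingDensity_eq (q : ℕ) : savingDensity q = (168 / (84 * q + 14) - 168 / (84 * q + 36)) +
    (168 / (84 * q + 42) - 168 / (84 * q + 60)) + (168 / (84 * q + 63) - 168 / (84 * q + 72)) := by
  simp only [savingDensity, Fin.sum_univ_three, savingLeft, savingRight, Matrix.cons_val,
    Nat.cast_ofNat]

lemma le_sum_savingDensity : (9.951322 : ℝ) ≤ ∑ q ∈ Finset.range 30, savingDensity q := by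
  norm_num [Finset.sum_range_succ, savingDensity_eq]

lemma le_densityTail_sub : (0.0388795 : ℝ) ≤ densityTail 30 - densityTail (30 + 10 ^ 7) := by
  simp only [densityTail, tailShift, Fin.sum_univ_three, savingLeft, savingRight, Matrix.cons_val,
    Nat.cast_ofNat]
  norm_num

lemma eventually_log_multiplier_le_mul :
    ∀ᶠ N : ℕ in atTop, Real.log (multiplier N) ≤ 4.0098 * N := by
  obtain ⟨n, hn⟩ : ∃ n : ℕ, (0.0388795 : ℝ) ≤ densityTail 30 - densityTail (30 + n) :=
    ⟨10 ^ 7, mod_cast le_densityTail_sub⟩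
  refine eventually_log_multiplier_le (Q := 30 + n) ?_
  rw [Finset.sum_range_add]
  linarith [densityTail_sub_le_sum n, le_sum_savingDensity]

/-! ### Size of the auxiliary polynomials on the line of integration -/

/-- The absolute value of `(X + K) (X + K - 1) ⋯ (X - K + 1)` at `-1/2 + i t`. -/
noncomputable def lineProd (K : ℕ) (t : ℝ) : ℝ :=
  ∏ j ∈ Finset.range K, ((j + 1 / 2) ^ 2 + t ^ 2)

lemma lineProd_pos (K : ℕ) (t : ℝ) : 0 < lineProd K t :=
  Finset.prod_pos fun j _ => by positivity

lemma lineProd_abs (K : ℕ) (t : ℝ) : lineProd K |t| = lineProd K t := by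
  simp only [lineProd, sq_abs]

lemma lineProd_mono (K : ℕ) {s t : ℝ} (hs : 0 ≤ s) (hst : s ≤ t) :
    lineProd K s ≤ lineProd K t := by
  unfold lineProd
  gcongr

lemma log_lineProd (K : ℕ) (t : ℝ) :
    Real.log (lineProd K t) = ∑ j ∈ Finset.range K, Real.log ((j + 1 / 2) ^ 2 + t ^ 2) :=
  Real.log_prod fun j _ => by positivity

lemma prod_line_eq_lineProd (K : ℕ) (t : ℝ) :
    ∏ i ∈ Finset.range (2 * K), ((-1 / 2 + Complex.I * t : ℂ) + K - i) =
      (((-1) ^ K * lineProd K t : ℝ) : ℂ) := by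
  induction K with
  | zero => simp [lineProd]
  | succ K ih =>
    have h_shift : ∏ i ∈ Finset.range (2 * K),
        ((-1 / 2 + Complex.I * t : ℂ) + (K + 1 : ℕ) - (i + 1 : ℕ)) =
          (((-1) ^ K * lineProd K t : ℝ) : ℂ) := by
      rw [← ih]
      exact Finset.prod_congr rfl fun i _ => by push_cast; ring
    have h_succ : lineProd (K + 1) t = lineProd K t * ((K + 1 / 2) ^ 2 + t ^ 2) :=
      Finset.prod_range_succ _ _
    rw [show 2 * (K + 1) = 2 * K + 1 + 1 by ring, Finset.prod_range_succ', Finset.prod_range_succ,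
      h_shift, h_succ]
    push_cast
    linear_combination ((-1) ^ K * lineProd K t * t ^ 2 : ℂ) * Complex.I_sq

/-- The absolute value of `shiftedChoose K` at `-1/2 + i t`. -/
noncomputable def lineChoose (K : ℕ) (t : ℝ) : ℝ :=
  lineProd K t / (2 * K).factorial

lemma lineChoose_pos (K : ℕ) (t : ℝ) : 0 < lineChoose K t :=
  div_pos (lineProd_pos K t) (mod_cast Nat.factorial_pos _)

lemma lineChoose_mono (K : ℕ) {s t : ℝ} (hs : 0 ≤ s) (hst : s ≤ t) :
    lineChoose K s ≤ lineChoose K t :=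
  div_le_div_of_nonneg_right (lineProd_mono K hs hst) (Nat.cast_nonneg _)

lemma eval_line_shiftedChoose (K : ℕ) (t : ℝ) :
    (shiftedChoose K).eval (-1 / 2 + Complex.I * t) = (((-1) ^ K * lineChoose K t : ℝ) : ℂ) := by
  rw [eval_shiftedChoose, prod_line_eq_lineProd, lineChoose, ← mul_div_assoc, Complex.ofReal_div,
    Complex.ofReal_natCast]

section LogPrimitive

/-- A primitive of `x ↦ log (x ^ 2 + t ^ 2)`. -/
noncomputable def logPrimitive (t x : ℝ) : ℝ :=
  x * Real.log (x ^ 2 + t ^ 2) - 2 * x + 2 * t * Real.arctan (x / t)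

lemma logPrimitive_neg (t x : ℝ) : logPrimitive t (-x) = -logPrimitive t x := by
  simp only [logPrimitive, neg_div, Real.arctan_neg, neg_sq]
  ring

variable {t : ℝ}

lemma hasDerivAt_logPrimitive (ht : 0 < t) (x : ℝ) :
    HasDerivAt (logPrimitive t) (Real.log (x ^ 2 + t ^ 2)) x := by
  have h_log : HasDerivAt (fun x : ℝ => Real.log (x ^ 2 + t ^ 2)) (2 * x / (x ^ 2 + t ^ 2)) x := by
    simpa using ((hasDerivAt_pow 2 x).add_const (t ^ 2)).log (by positivity)
  refine ((((hasDerivAt_id x).mul h_log).sub ((hasDerivAt_id x).const_mul 2)).add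
    ((((hasDerivAt_id x).div_const t).arctan).const_mul (2 * t))).congr_deriv ?_
  simp only [id, one_mul, mul_one]
  field_simp
  ring

lemma logPrimitive_sub_le (ht : 0 < t) {a b : ℝ} (hab : a ≤ b) (h_neg : -b ≤ a) :
    logPrimitive t b - logPrimitive t a ≤ Real.log (b ^ 2 + t ^ 2) * (b - a) := by
  have h_diff : Differentiable ℝ (logPrimitive t) :=
    fun x => (hasDerivAt_logPrimitive ht x).differentiableAt
  refine (convex_Icc a b).image_sub_le_mul_sub_of_deriv_le h_diff.continuous.continuousOn
    h_diff.differentiableOn (fun x hx => ?_) a (left_mem_Icc.2 hab) b (right_mem_Icc.2 hab) hab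
  obtain ⟨h_ax, h_xb⟩ := interior_subset hx
  rw [(hasDerivAt_logPrimitive ht x).deriv]
  exact Real.log_le_log (by positivity)
    (add_le_add_left (sq_le_sq' (h_neg.trans h_ax) h_xb) _)

lemma le_logPrimitive_sub (ht : 0 < t) {a b : ℝ} (hab : a ≤ b) (ha : 0 ≤ a) :
    Real.log (a ^ 2 + t ^ 2) * (b - a) ≤ logPrimitive t b - logPrimitive t a := by
  have h_diff : Differentiable ℝ (logPrimitive t) :=
    fun x => (hasDerivAt_logPrimitive ht x).differentiableAt
  refine (convex_Icc a b).mul_sub_le_image_sub_of_le_deriv h_diff.continuous.continuousOn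
    h_diff.differentiableOn (fun x hx => ?_) a (left_mem_Icc.2 hab) b (right_mem_Icc.2 hab) hab
  rw [(hasDerivAt_logPrimitive ht x).deriv]
  exact Real.log_le_log (by positivity)
    (add_le_add_left (pow_le_pow_left₀ ha (interior_subset hx).1 2) _)

lemma neg_two_le_logPrimitive_half (ht : 0 < t) : -2 ≤ logPrimitive t (1 / 2) := by
  have h_arctan : 0 ≤ t * Real.arctan (1 / 2 / t) :=
    mul_nonneg ht.le (Real.arctan_nonneg.2 (by positivity))
  have h_log : Real.log ((1 / 2) ^ 2) ≤ Real.log ((1 / 2) ^ 2 + t ^ 2) :=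
    Real.log_le_log (by norm_num) (le_add_of_nonneg_right (sq_nonneg t))
  rw [Real.log_pow, one_div, Real.log_inv] at h_log
  have h_two := Real.log_two_lt_d9
  push_cast at h_log
  unfold logPrimitive
  linarith

lemma log_lineProd_le (ht : 0 < t) (K : ℕ) :
    Real.log (lineProd K t) ≤ logPrimitive t K + 2 + Real.log ((K + 1) * (1 + t)) := by
  have h_sum : ∀ n : ℕ,
      Real.log (lineProd n t) ≤ logPrimitive t (n + 1 / 2) - logPrimitive t (1 / 2) := by
    intro n
    rw [log_lineProd]
    induction n with
    | zero => simp
    | succ n ih =>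
      have h_step := le_logPrimitive_sub ht (a := n + 1 / 2) (b := (n + 1 : ℕ) + 1 / 2)
        (by push_cast; linarith) (by positivity)
      rw [Finset.sum_range_succ]
      push_cast at h_step ⊢
      linarith
  have h_last := logPrimitive_sub_le ht (a := K) (b := K + 1 / 2) (by linarith)
    (by linarith [Nat.cast_nonneg (α := ℝ) K])
  have h_log : Real.log ((K + 1 / 2) ^ 2 + t ^ 2) ≤ 2 * Real.log ((K + 1) * (1 + t)) := by
    refine (Real.log_le_log (by positivity) ?_).trans_eq (by rw [Real.log_pow, Nat.cast_two])
    have h_Kt : 0 ≤ K * t := by positivity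
    calc (K + 1 / 2) ^ 2 + t ^ 2 ≤ (K + 1 + t) ^ 2 := by nlinarith
      _ ≤ ((K + 1) * (1 + t)) ^ 2 := by gcongr; linarith
  linarith [h_sum K, neg_two_le_logPrimitive_half ht]

lemma le_log_lineProd (ht : 0 < t) {K : ℕ} (hK : K ≠ 0) :
    logPrimitive t K - 2 - Real.log (K + t) ≤ Real.log (lineProd K t) := by
  have h_sum : ∀ n : ℕ,
      logPrimitive t (n - 1 / 2) + logPrimitive t (1 / 2) ≤ Real.log (lineProd n t) := by
    intro n
    rw [log_lineProd]
    induction n with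
    | zero => simp [logPrimitive_neg]
    | succ n ih =>
      have h_step := logPrimitive_sub_le ht (a := n - 1 / 2) (b := n + 1 / 2) (by linarith)
        (by linarith [Nat.cast_nonneg (α := ℝ) n])
      rw [Finset.sum_range_succ, show ((n + 1 : ℕ) : ℝ) - 1 / 2 = n + 1 / 2 by push_cast; ring]
      linarith
  have hK_one : (1 : ℝ) ≤ K := mod_cast Nat.one_le_iff_ne_zero.2 hK
  have h_last := logPrimitive_sub_le ht (a := K - 1 / 2) (b := K) (by linarith) (by linarith)
  have h_log : Real.log (K ^ 2 + t ^ 2) ≤ 2 * Real.log (K + t) :=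
    (Real.log_le_log (by positivity) (pow_add_pow_le (by positivity) ht.le two_ne_zero)).trans_eq
      (by rw [Real.log_pow, Nat.cast_two])
  linarith [h_sum K, neg_two_le_logPrimitive_half ht]

-- `logPrimitive` is concave in its first argument, with derivative `2 * arctan (x / t)`.
lemma logPrimitive_le_tangent {x t₀ : ℝ} (hx : 0 ≤ x) (ht : 0 < t) (ht₀ : 0 < t₀) :
    logPrimitive t x ≤ logPrimitive t₀ x + 2 * (t - t₀) * Real.arctan (x / t₀) := by
  set g : ℝ → ℝ := fun s =>
    x * Real.log (x ^ 2 + s ^ 2) + 2 * s * (Real.arctan (x / s) - Real.arctan (x / t₀)) with hg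
  have h_deriv : ∀ s, 0 < s →
      HasDerivAt g (2 * (Real.arctan (x / s) - Real.arctan (x / t₀))) s := by
    intro s hs
    have h_log : HasDerivAt (fun s : ℝ => Real.log (x ^ 2 + s ^ 2))
        (2 * s / (x ^ 2 + s ^ 2)) s := by
      simpa using ((hasDerivAt_pow 2 s).const_add (x ^ 2)).log (by positivity)
    have h_div : HasDerivAt (fun s : ℝ => x / s) (-x / s ^ 2) s := by
      simpa [div_eq_mul_inv, neg_mul] using (hasDerivAt_inv hs.ne').const_mul x
    refine ((h_log.const_mul x).add (((hasDerivAt_id s).const_mul 2).mul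
      (h_div.arctan.sub_const _))).congr_deriv ?_
    simp only [id, mul_one]
    field_simp
    ring
  have h_diff : ∀ s, 0 < s → DifferentiableAt ℝ g s := fun s hs => (h_deriv s hs).differentiableAt
  have h_max : IsMaxOn g (Ioi 0) t₀ := by
    refine isMaxOn_Ioi_of_deriv (h_diff t₀ ht₀).continuousAt
      (fun s hs => (h_diff s hs.1).differentiableWithinAt)
      (fun s hs => (h_diff s (ht₀.trans hs)).differentiableWithinAt)
      (fun s hs => ?_) (fun s hs => ?_)
    · have h_le : x / t₀ ≤ x / s := div_le_div_of_nonneg_left hx hs.1 hs.2.le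
      rw [(h_deriv s hs.1).deriv]
      linarith [Real.arctan_mono h_le]
    · have h_le : x / s ≤ x / t₀ := div_le_div_of_nonneg_left hx ht₀ (mem_Ioi.1 hs).le
      rw [(h_deriv s (ht₀.trans hs)).deriv]
      linarith [Real.arctan_mono h_le]
  have h_le : g t ≤ g t₀ := h_max ht
  simp only [hg, sub_self, mul_zero, add_zero] at h_le
  unfold logPrimitive
  linarith

end LogPrimitive

lemma mul_log_sub_le_log_factorial {n : ℕ} (hn : n ≠ 0) :
    n * Real.log n - n ≤ Real.log n.factorial := by
  have h_log : 0 ≤ Real.log n := Real.log_natCast_nonneg n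
  have h_pi : 0 ≤ Real.log (2 * π) := Real.log_nonneg (by linarith [Real.pi_gt_three])
  linarith [Stirling.le_log_factorial_stirling hn]

lemma log_factorial_le {n : ℕ} (hn : n ≠ 0) :
    Real.log n.factorial ≤ n * Real.log n - n + Real.log n + 1 := by
  have h_le : Real.log (Stirling.stirlingSeq n) ≤ Real.log (Stirling.stirlingSeq 1) := by
    obtain ⟨m, rfl⟩ := Nat.exists_eq_succ_of_ne_zero hn
    exact Stirling.log_stirlingSeq'_antitone (Nat.zero_le m)
  have h_pos : (0 : ℝ) < n := mod_cast Nat.pos_of_ne_zero hn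
  have h_log : 0 ≤ Real.log n := Real.log_natCast_nonneg n
  rw [Stirling.log_stirlingSeq_formula, Stirling.log_stirlingSeq_formula, Nat.cast_one, mul_one,
    Real.log_mul two_ne_zero h_pos.ne', Real.log_div h_pos.ne' (Real.exp_ne_zero 1),
    Real.log_div one_ne_zero (Real.exp_ne_zero 1), Real.log_exp, Real.log_one,
    Nat.factorial_one, Nat.cast_one, Real.log_one] at h_le
  linarith

/-- The exponential growth rate in `N` of `lineChoose (k * N) (τ * N)`, up to the term
`2 * τ * arctan (k / τ)`. -/
noncomputable def chooseRate (k τ : ℝ) : ℝ :=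
  k * Real.log ((k ^ 2 + τ ^ 2) / (4 * k ^ 2))

lemma logPrimitive_mul_natCast {k τ : ℝ} (hk : 0 < k) (hτ : 0 < τ) {N : ℕ} (hN : N ≠ 0) :
    logPrimitive (τ * N) (k * N) = N * chooseRate k τ + τ * N * (2 * Real.arctan (k / τ)) +
      (2 * (k * N) * Real.log (2 * (k * N)) - 2 * (k * N)) := by
  have hN_pos : (0 : ℝ) < N := mod_cast Nat.pos_of_ne_zero hN
  have h_log : Real.log ((k * N) ^ 2 + (τ * N) ^ 2) =
      Real.log ((k ^ 2 + τ ^ 2) / (4 * k ^ 2)) + 2 * Real.log (2 * (k * N)) := by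
    have h_sq : 2 * Real.log (2 * (k * N)) = Real.log ((2 * (k * N)) ^ 2) := by
      rw [Real.log_pow, Nat.cast_two]
    rw [h_sq, ← Real.log_mul (by positivity) (by positivity)]
    congr 1
    field_simp
    ring
  rw [logPrimitive, h_log, mul_div_mul_right _ _ hN_pos.ne', chooseRate]
  ring

lemma lineChoose_le {k N : ℕ} (hk : k ≠ 0) (hN : N ≠ 0) {τ t : ℝ} (hτ : 0 < τ) (ht : 0 < t) :
    lineChoose (k * N) t ≤ Real.exp 2 * ((k + 1) * N * (1 + t)) *
      Real.exp (N * chooseRate k τ) * Real.exp (2 * Real.arctan (k / τ) * t) := by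
  have hk_pos : (0 : ℝ) < k := mod_cast Nat.pos_of_ne_zero hk
  have hN_one : (1 : ℝ) ≤ N := mod_cast Nat.one_le_iff_ne_zero.2 hN
  have h_prod := log_lineProd_le ht (k * N)
  have h_fac := mul_log_sub_le_log_factorial (n := 2 * (k * N)) (by positivity)
  have h_tangent := logPrimitive_le_tangent (x := k * N) (t := t) (t₀ := τ * N) (by positivity) ht
    (by positivity)
  have h_poly : Real.log ((k * N + 1) * (1 + t)) ≤ Real.log ((k + 1) * N * (1 + t)) :=
    Real.log_le_log (by positivity) (by gcongr; linarith)
  rw [logPrimitive_mul_natCast hk_pos hτ hN, mul_div_mul_right _ _ (by positivity)] at h_tangent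
  push_cast at h_prod h_fac
  rw [← Real.log_le_log_iff (lineChoose_pos _ _) (by positivity), lineChoose,
    Real.log_div (lineProd_pos _ _).ne' (by positivity), Real.log_mul (by positivity)
    (by positivity), Real.log_mul (by positivity) (by positivity), Real.log_mul (by positivity)
    (by positivity), Real.log_exp, Real.log_exp, Real.log_exp]
  linarith

lemma le_lineChoose {k N : ℕ} (hk : k ≠ 0) (hN : N ≠ 0) {τ : ℝ} (hτ : 0 < τ) :
    Real.exp (-3) / ((k + τ) * (2 * k)) / N ^ 2 * Real.exp (N * chooseRate k τ) *
      Real.exp (2 * Real.arctan (k / τ) * (τ * N)) ≤ lineChoose (k * N) (τ * N) := by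
  have hk_pos : (0 : ℝ) < k := mod_cast Nat.pos_of_ne_zero hk
  have h_prod := le_log_lineProd (t := τ * N) (by positivity) (mul_ne_zero hk hN)
  have h_fac := log_factorial_le (n := 2 * (k * N)) (by positivity)
  push_cast at h_prod h_fac
  rw [logPrimitive_mul_natCast hk_pos hτ hN] at h_prod
  have h_poly : Real.log (Real.exp (-3) / ((k + τ) * (2 * k)) / N ^ 2) =
      -3 - Real.log (k * N + τ * N) - Real.log (2 * (k * N)) := by
    rw [← Real.log_exp (-3), ← Real.log_div (by positivity) (by positivity),
      ← Real.log_div (by positivity) (by positivity), Real.log_exp]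
    congr 1
    field_simp
  rw [← Real.log_le_log_iff (by positivity) (lineChoose_pos _ _), lineChoose,
    Real.log_div (lineProd_pos _ _).ne' (by positivity), Real.log_mul (by positivity)
    (by positivity), Real.log_mul (by positivity) (by positivity), h_poly, Real.log_exp,
    Real.log_exp]
  linarith

/-- The absolute value of `auxPoly N` at `-1/2 + i t`. -/
noncomputable def lineAux (N : ℕ) (t : ℝ) : ℝ :=
  lineChoose (7 * N) t * lineChoose (5 * N) t * lineChoose (3 * N) t

lemma lineAux_pos (N : ℕ) (t : ℝ) : 0 < lineAux N t :=
  mul_pos (mul_pos (lineChoose_pos _ t) (lineChoose_pos _ t)) (lineChoose_pos _ t)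

lemma lineAux_abs (N : ℕ) (t : ℝ) : lineAux N |t| = lineAux N t := by
  simp only [lineAux, lineChoose, lineProd_abs]

lemma lineAux_mono (N : ℕ) {s t : ℝ} (hs : 0 ≤ s) (hst : s ≤ t) : lineAux N s ≤ lineAux N t :=
  mul_le_mul (mul_le_mul (lineChoose_mono _ hs hst) (lineChoose_mono _ hs hst)
    (lineChoose_pos _ s).le (lineChoose_pos _ t).le) (lineChoose_mono _ hs hst)
    (lineChoose_pos _ s).le (mul_pos (lineChoose_pos _ t) (lineChoose_pos _ t)).le

lemma eval_line_auxPoly (N : ℕ) (t : ℝ) :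
    (auxPoly N).eval (-1 / 2 + Complex.I * t) = (((-1) ^ (15 * N) * lineAux N t : ℝ) : ℂ) := by
  rw [auxPoly, Polynomial.eval_mul, Polynomial.eval_mul, eval_line_shiftedChoose,
    eval_line_shiftedChoose, eval_line_shiftedChoose, lineAux,
    show 15 * N = 7 * N + 5 * N + 3 * N by ring, pow_add, pow_add]
  push_cast
  ring

/-- The exponential growth rate in `N` of `lineAux N (τ * N)`, up to the term
`τ * auxSlope τ`. -/
noncomputable def auxRate (τ : ℝ) : ℝ :=
  chooseRate 7 τ + chooseRate 5 τ + chooseRate 3 τ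

/-- The slope of `log (lineAux N t)` near `t = τ * N`. -/
noncomputable def auxSlope (τ : ℝ) : ℝ :=
  2 * (Real.arctan (7 / τ) + Real.arctan (5 / τ) + Real.arctan (3 / τ))

lemma auxSlope_pos {τ : ℝ} (hτ : 0 < τ) : 0 < auxSlope τ := by
  have h_pos : ∀ k : ℝ, 0 < k → 0 < Real.arctan (k / τ) :=
    fun k hk => Real.arctan_pos.2 (div_pos hk hτ)
  unfold auxSlope
  linarith [h_pos 7 (by norm_num), h_pos 5 (by norm_num), h_pos 3 (by norm_num)]

lemma lineAux_le {N : ℕ} (hN : N ≠ 0) {τ t : ℝ} (hτ : 0 < τ) (ht : 0 < t) :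
    lineAux N t ≤ 192 * Real.exp 6 * N ^ 3 * Real.exp (N * auxRate τ) *
      ((1 + t) ^ 3 * Real.exp (auxSlope τ * t)) := by
  have h_seven := lineChoose_le (k := 7) (by norm_num) hN hτ ht
  have h_five := lineChoose_le (k := 5) (by norm_num) hN hτ ht
  have h_three := lineChoose_le (k := 3) (by norm_num) hN hτ ht
  have h_prod := mul_le_mul (mul_le_mul h_seven h_five (lineChoose_pos _ t).le (by positivity))
    h_three (lineChoose_pos _ t).le (by positivity)
  refine h_prod.trans_eq ?_
  rw [auxRate, auxSlope, show (6 : ℝ) = 2 + 2 + 2 by norm_num]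
  simp only [mul_add, add_mul, Real.exp_add]
  push_cast
  ring

lemma exists_le_lineAux {τ : ℝ} (hτ : 0 < τ) : ∃ C > 0, ∀ N : ℕ, N ≠ 0 →
    C / N ^ 6 * Real.exp (N * auxRate τ) * Real.exp (auxSlope τ * (τ * N)) ≤
      lineAux N (τ * N) := by
  refine ⟨Real.exp (-3) / ((7 + τ) * (2 * 7)) * (Real.exp (-3) / ((5 + τ) * (2 * 5))) *
    (Real.exp (-3) / ((3 + τ) * (2 * 3))), by positivity, fun N hN => ?_⟩
  have h_seven := le_lineChoose (k := 7) (by norm_num) hN hτ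
  have h_five := le_lineChoose (k := 5) (by norm_num) hN hτ
  have h_three := le_lineChoose (k := 3) (by norm_num) hN hτ
  have h_prod := mul_le_mul (mul_le_mul h_seven h_five (by positivity) (lineChoose_pos _ _).le)
    h_three (by positivity) (mul_pos (lineChoose_pos _ _) (lineChoose_pos _ _)).le
  refine le_of_eq_of_le ?_ h_prod
  rw [auxRate, auxSlope]
  simp only [mul_add, add_mul, Real.exp_add]
  push_cast
  ring

lemma lineTransform_auxPoly (N : ℕ) (s : ℝ) : lineTransform (auxPoly N) s =
    (((-1) ^ (15 * N) * ∫ t, lineAux N t * (Real.exp (-(s * t)) * sechSq t) : ℝ) : ℂ) := by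
  rw [lineTransform, ← integral_const_mul, ← integral_complex_ofReal]
  refine integral_congr_ae (Eventually.of_forall fun t => ?_)
  simp only [eval_line_auxPoly]
  push_cast
  ring

lemma norm_lineTransform_auxPoly (N : ℕ) (s : ℝ) :
    ‖lineTransform (auxPoly N) s‖ = ∫ t, lineAux N t * (Real.exp (-(s * t)) * sechSq t) := by
  rw [lineTransform_auxPoly, Complex.norm_real, norm_mul, norm_pow, norm_neg, norm_one, one_pow,
    one_mul, Real.norm_of_nonneg]
  exact integral_nonneg fun t => mul_nonneg (lineAux_pos N t).le
    (mul_nonneg (Real.exp_pos _).le (sechSq_nonneg t))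

lemma integrable_lineAux_mul (N : ℕ) {s : ℝ} (hs : |s| < 2 * π) :
    Integrable fun t => lineAux N t * (Real.exp (-(s * t)) * sechSq t) := by
  refine (integrable_lineTransform (auxPoly N) hs).norm.congr (Eventually.of_forall fun t => ?_)
  simp only [eval_line_auxPoly]
  rw [norm_mul, Complex.norm_real, Complex.norm_real, norm_mul, norm_pow, norm_neg, norm_one,
    one_pow, one_mul, Real.norm_of_nonneg (lineAux_pos N t).le,
    Real.norm_of_nonneg (mul_nonneg (Real.exp_pos _).le (sechSq_nonneg t))]

lemma integrable_exp_mul_abs_mul_sechSq {u : ℝ} (hu : |u| < 2 * π) :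
    Integrable fun t => Real.exp (u * |t|) * sechSq t := by
  have h_exp : ∀ v, |v| < 2 * π → Integrable (fun t => Real.exp (v * -t)) sechMeasure :=
    fun v hv => interior_subset (s := integrableExpSet _ _)
      (mem_interior_integrableExpSet_sechMeasure hv)
  have h := integrable_exp_mul_abs (h_exp u hu) (h_exp (-u) (by rwa [abs_neg]))
  rw [integrable_sechMeasure_iff] at h
  simpa only [abs_neg, smul_eq_mul, mul_comm] using h

lemma one_add_pow_le_mul_exp {ε x : ℝ} (hε : 0 < ε) (hx : 0 ≤ x) (n : ℕ) :
    (1 + x) ^ n ≤ n.factorial * Real.exp ε / ε ^ n * Real.exp (ε * x) := by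
  have h := Real.pow_div_factorial_le_exp (x := ε * (1 + x)) (by positivity) n
  rw [mul_pow, mul_one_add, Real.exp_add, div_le_iff₀ (by positivity)] at h
  rw [div_mul_eq_mul_div, le_div_iff₀ (by positivity)]
  linarith

lemma exists_norm_lineTransform_auxPoly_le {τ s : ℝ} (hτ : 0 < τ)
    (h_slope : auxSlope τ + |s| < 2 * π) : ∃ C > 0, ∀ N : ℕ, N ≠ 0 →
      ‖lineTransform (auxPoly N) s‖ ≤ C * N ^ 3 * Real.exp (N * auxRate τ) := by
  have h_slope_pos := auxSlope_pos hτ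
  obtain ⟨ε, hε, hε_lt⟩ := exists_between (sub_pos.2 h_slope)
  set u := ε + auxSlope τ + |s| with hu
  have hu_pos : 0 < u := by positivity
  have h_int := integrable_exp_mul_abs_mul_sechSq (u := u) (by rw [abs_of_pos hu_pos]; linarith)
  set D := ∫ t, Real.exp (u * |t|) * sechSq t with hD
  have hD_nonneg : 0 ≤ D :=
    integral_nonneg fun t => mul_nonneg (Real.exp_pos _).le (sechSq_nonneg t)
  set M : ℝ := 192 * Real.exp 6 * (Nat.factorial 3 * Real.exp ε / ε ^ 3) with hM
  refine ⟨M * (D + 1), by positivity, fun N hN => ?_⟩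
  have h_bound : ∀ᵐ t : ℝ, lineAux N t * (Real.exp (-(s * t)) * sechSq t) ≤
      M * N ^ 3 * Real.exp (N * auxRate τ) * (Real.exp (u * |t|) * sechSq t) := by
    filter_upwards [Measure.ae_ne volume 0] with t ht
    have h_aux : lineAux N t ≤ _ := lineAux_abs N t ▸ lineAux_le hN hτ (abs_pos.2 ht)
    have h_poly := one_add_pow_le_mul_exp hε (abs_nonneg t) 3
    have h_exp : Real.exp (-(s * t)) ≤ Real.exp (|s| * |t|) :=
      Real.exp_le_exp.2 ((neg_le_abs _).trans_eq (abs_mul s t))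
    have h_sech := sechSq_nonneg t
    calc lineAux N t * (Real.exp (-(s * t)) * sechSq t)
        ≤ 192 * Real.exp 6 * N ^ 3 * Real.exp (N * auxRate τ) *
            ((Nat.factorial 3 * Real.exp ε / ε ^ 3 * Real.exp (ε * |t|)) *
              Real.exp (auxSlope τ * |t|)) * (Real.exp (|s| * |t|) * sechSq t) := by
          gcongr
          exact h_aux.trans (by gcongr)
      _ = M * N ^ 3 * Real.exp (N * auxRate τ) * (Real.exp (u * |t|) * sechSq t) := by
          rw [hu, hM, add_mul, add_mul, Real.exp_add, Real.exp_add]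
          ring
  have h_le : ‖lineTransform (auxPoly N) s‖ ≤ M * N ^ 3 * Real.exp (N * auxRate τ) * D := by
    rw [norm_lineTransform_auxPoly, hD, ← integral_const_mul]
    exact integral_mono_ae (integrable_lineAux_mul N (by linarith)) (h_int.const_mul _) h_bound
  calc ‖lineTransform (auxPoly N) s‖ ≤ M * N ^ 3 * Real.exp (N * auxRate τ) * D := h_le
    _ = M * D * N ^ 3 * Real.exp (N * auxRate τ) := by ring
    _ ≤ M * (D + 1) * N ^ 3 * Real.exp (N * auxRate τ) := by
        gcongr
        exact (lt_add_one D).le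

lemma exp_neg_two_pi_mul_abs_le_sechSq (t : ℝ) :
    π ^ 2 * Real.exp (-(2 * π * |t|)) ≤ sechSq t := by
  have h_cosh : Real.cosh (π * t) ≤ Real.exp (π * |t|) := by
    have h_nonneg : 0 ≤ π * |t| := by positivity
    rw [← Real.cosh_abs, abs_mul, abs_of_pos Real.pi_pos, Real.cosh_eq]
    linarith [Real.exp_le_exp.2 (neg_le_self h_nonneg)]
  have h_exp : Real.exp (-(2 * π * |t|)) = (Real.exp (π * |t|) ^ 2)⁻¹ := by
    rw [← Real.exp_nat_mul, ← Real.exp_neg, Nat.cast_two, mul_assoc]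
  rw [sechSq, div_pow, div_eq_mul_inv, h_exp]
  gcongr

lemma exists_le_norm_lineTransform_auxPoly {τ s : ℝ} (hτ : 0 < τ) (hs : 0 ≤ s)
    (hs_lt : s < 2 * π) (h_slope : 2 * π ≤ auxSlope τ + s) : ∃ C > 0, ∀ N : ℕ, N ≠ 0 →
      C / N ^ 6 * Real.exp (N * auxRate τ) ≤ ‖lineTransform (auxPoly N) s‖ := by
  obtain ⟨C, hC, h_aux⟩ := exists_le_lineAux hτ
  refine ⟨C * (π ^ 2 * Real.exp (-(2 * π))), by positivity, fun N hN => ?_⟩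
  have h_int := integrable_lineAux_mul N (s := s) (by rwa [abs_of_nonneg hs])
  have h_nonneg : ∀ t, 0 ≤ lineAux N t * (Real.exp (-(s * t)) * sechSq t) := fun t =>
    mul_nonneg (lineAux_pos N t).le (mul_nonneg (Real.exp_pos _).le (sechSq_nonneg t))
  have h_bound : ∀ t ∈ Icc (-(τ * N) - 1) (-(τ * N)),
      C * (π ^ 2 * Real.exp (-(2 * π))) / N ^ 6 * Real.exp (N * auxRate τ) ≤
        lineAux N t * (Real.exp (-(s * t)) * sechSq t) := by
    rintro t ⟨h_left, h_right⟩
    have hτN : 0 ≤ τ * N := by positivity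
    have h_abs : |t| = -t := abs_of_nonpos (by linarith)
    have h_mono : lineAux N (τ * N) ≤ lineAux N t :=
      lineAux_abs N t ▸ lineAux_mono N hτN (by linarith)
    have h_sech : π ^ 2 * Real.exp (-(2 * π * (τ * N + 1))) ≤ sechSq t := by
      refine le_trans ?_ (exp_neg_two_pi_mul_abs_le_sechSq t)
      gcongr
      linarith
    have h_exp : Real.exp (-(2 * π)) ≤ Real.exp (auxSlope τ * (τ * N)) *
        (Real.exp (s * (τ * N)) * Real.exp (-(2 * π * (τ * N + 1)))) := by
      rw [← Real.exp_add, ← Real.exp_add, Real.exp_le_exp]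
      linarith [mul_le_mul_of_nonneg_right h_slope hτN]
    calc C * (π ^ 2 * Real.exp (-(2 * π))) / N ^ 6 * Real.exp (N * auxRate τ)
        = C / N ^ 6 * Real.exp (N * auxRate τ) * (π ^ 2 * Real.exp (-(2 * π))) := by ring
      _ ≤ C / N ^ 6 * Real.exp (N * auxRate τ) * (π ^ 2 * (Real.exp (auxSlope τ * (τ * N)) *
            (Real.exp (s * (τ * N)) * Real.exp (-(2 * π * (τ * N + 1)))))) := by gcongr
      _ = C / N ^ 6 * Real.exp (N * auxRate τ) * Real.exp (auxSlope τ * (τ * N)) *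
            (Real.exp (s * (τ * N)) * (π ^ 2 * Real.exp (-(2 * π * (τ * N + 1))))) := by ring
      _ ≤ lineAux N t * (Real.exp (-(s * t)) * sechSq t) := by
          have h_pos := (lineAux_pos N t).le
          gcongr
          · exact (h_aux N hN).trans h_mono
          · linarith [mul_le_mul_of_nonneg_left h_right hs]
  have h_volume : volume.real (Icc (-(τ * N) - 1) (-(τ * N))) = 1 := by
    rw [Real.volume_real_Icc_of_le (sub_one_lt _).le, sub_sub_cancel]
  have h_le := setIntegral_ge_of_const_le_real measurableSet_Icc measure_Icc_lt_top.ne h_bound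
    h_int.integrableOn
  rw [h_volume, mul_one] at h_le
  rw [norm_lineTransform_auxPoly]
  exact h_le.trans (setIntegral_le_integral h_int (Eventually.of_forall h_nonneg))

/-! ### Numerical values of the growth rates -/

lemma log_le_of_le_zpow_mul {x y : ℝ} {k : ℤ} (n : ℕ) (hx : 0 ≤ x) (hx_lt : x < 1) (hy : 0 < y)
    (hxy : y ≤ 2 ^ k * ((1 + x) / (1 - x))) :
    Real.log y ≤ k * Real.log 2 +
      2 * (∑ i ∈ Finset.range n, x ^ (2 * i + 1) / (2 * i + 1) +
        x ^ (2 * n + 1) / (1 - x ^ 2)) := by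
  have h_pos : 0 < (1 + x) / (1 - x) := div_pos (by linarith) (by linarith)
  have h_log := Real.log_le_log hy hxy
  rw [Real.log_mul (by positivity) h_pos.ne', Real.log_zpow] at h_log
  linarith [Real.log_div_le_sum_range_add hx hx_lt n]

lemma le_log_of_zpow_mul_le {x y : ℝ} {k : ℤ} (n : ℕ) (hx : 0 ≤ x) (hx_lt : x < 1)
    (hxy : 2 ^ k * ((1 + x) / (1 - x)) ≤ y) :
    k * Real.log 2 + 2 * ∑ i ∈ Finset.range n, x ^ (2 * i + 1) / (2 * i + 1) ≤ Real.log y := by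
  have h_pos : 0 < (1 + x) / (1 - x) := div_pos (by linarith) (by linarith)
  have h_log := Real.log_le_log (by positivity) hxy
  rw [Real.log_mul (by positivity) h_pos.ne', Real.log_zpow] at h_log
  linarith [Real.sum_range_le_log_div hx hx_lt n]

lemma auxRate_sqrt_seven_mul_sub (s : ℝ) :
    auxRate (√7 * s) - 5 * Real.log 2 = Real.log (((49 + 7 * s ^ 2) / 196) ^ 7 *
      ((25 + 7 * s ^ 2) / 100) ^ 5 * ((9 + 7 * s ^ 2) / 36) ^ 3 / 2 ^ 5) := by
  have h_sq : (√7 * s) ^ 2 = 7 * s ^ 2 := by rw [mul_pow, Real.sq_sqrt (by norm_num)]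
  rw [Real.log_div (by positivity) (by positivity), Real.log_mul (by positivity) (by positivity),
    Real.log_mul (by positivity) (by positivity), Real.log_pow, Real.log_pow, Real.log_pow,
    Real.log_pow, auxRate, chooseRate, chooseRate, chooseRate, h_sq]
  norm_num

-- The saddle points are `τ = √7 * s` with `auxSlope τ + theta = 2π` at `s = 1.31863245…` and
-- `auxSlope τ = theta` at `s = 15.58892…`. In the estimates of `auxRate` at these points `x` is a
-- rational approximation to `(y / 2 ^ k - 1) / (y / 2 ^ k + 1)`.
lemma auxRate_smallSaddle_sub_le :
    auxRate (√7 * 1.3186325) - 5 * Real.log 2 ≤ -18.157480 := by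
  have h_log := log_le_of_le_zpow_mul (x := 0.27174462) (k := -27) 8
    (y := ((49 + 7 * 1.3186325 ^ 2) / 196) ^ 7 * ((25 + 7 * 1.3186325 ^ 2) / 100) ^ 5 *
      ((9 + 7 * 1.3186325 ^ 2) / 36) ^ 3 / 2 ^ 5)
    (by norm_num) (by norm_num) (by norm_num) (by norm_num)
  rw [auxRate_sqrt_seven_mul_sub]
  refine h_log.trans ?_
  norm_num [Finset.sum_range_succ]
  linarith [Real.log_two_gt_d9]

lemma le_auxRate_smallSaddle_sub :
    -18.157482 ≤ auxRate (√7 * 1.3186324) - 5 * Real.log 2 := by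
  have h_log := le_log_of_zpow_mul_le (x := 0.27174428) (k := -27) 8
    (y := ((49 + 7 * 1.3186324 ^ 2) / 196) ^ 7 * ((25 + 7 * 1.3186324 ^ 2) / 100) ^ 5 *
      ((9 + 7 * 1.3186324 ^ 2) / 36) ^ 3 / 2 ^ 5)
    (by norm_num) (by norm_num) (by norm_num)
  rw [auxRate_sqrt_seven_mul_sub]
  refine le_trans ?_ h_log
  norm_num [Finset.sum_range_succ]
  linarith [Real.log_two_lt_d9]

lemma auxRate_largeSaddle_sub_le :
    auxRate (√7 * 15.588921) - 5 * Real.log 2 ≤ 37.684083 := by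
  have h_log := log_le_of_le_zpow_mul (x := 0.12638766) (k := 54) 8
    (y := ((49 + 7 * 15.588921 ^ 2) / 196) ^ 7 * ((25 + 7 * 15.588921 ^ 2) / 100) ^ 5 *
      ((9 + 7 * 15.588921 ^ 2) / 36) ^ 3 / 2 ^ 5)
    (by norm_num) (by norm_num) (by norm_num) (by norm_num)
  rw [auxRate_sqrt_seven_mul_sub]
  refine h_log.trans ?_
  norm_num [Finset.sum_range_succ]
  linarith [Real.log_two_lt_d9]

lemma arctan_sqrt_seven_mul_add {a b : ℝ} (h : 7 * (a * b) < 1) :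
    Real.arctan (√7 * a) + Real.arctan (√7 * b) =
      Real.arctan (√7 * ((a + b) / (1 - 7 * (a * b)))) := by
  have h_mul : √7 * a * (√7 * b) = 7 * (a * b) := by
    linear_combination (a * b) * Real.mul_self_sqrt (show (0 : ℝ) ≤ 7 by norm_num)
  rw [Real.arctan_add (by rwa [h_mul]), h_mul, ← mul_add, mul_div_assoc]

lemma theta_eq_two_mul_arctan : theta = 2 * Real.arctan (√7 * (1 / 7)) := by
  rw [two_mul, arctan_sqrt_seven_mul_add (by norm_num), theta]
  norm_num
  ring

lemma div_sqrt_seven_mul (k s : ℝ) : k / (√7 * s) = √7 * (k / (7 * s)) := by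
  rw [← div_div, ← div_div, div_eq_mul_inv k √7, div_eq_mul_inv k 7, ← Real.sqrt_div_self]
  ring

lemma arctan_div_sqrt_seven_mul {k s : ℝ} (hk : 0 < k) (hs : 0 < s) :
    Real.arctan (k / (√7 * s)) = π / 2 - Real.arctan (√7 * (s / k)) := by
  rw [← Real.arctan_inv_of_pos (by positivity), ← mul_div_assoc, inv_div]

lemma arctan_sqrt_seven_mul_lt {a b : ℝ} (h : a < b) :
    Real.arctan (√7 * a) < Real.arctan (√7 * b) := by
  gcongr

lemma auxSlope_largeSaddle_lt : auxSlope (√7 * 15.588921) < theta := by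
  rw [auxSlope, theta_eq_two_mul_arctan, div_sqrt_seven_mul, div_sqrt_seven_mul,
    div_sqrt_seven_mul, arctan_sqrt_seven_mul_add (by norm_num),
    arctan_sqrt_seven_mul_add (by norm_num)]
  refine mul_lt_mul_of_pos_left (arctan_sqrt_seven_mul_lt ?_) two_pos
  norm_num

lemma auxSlope_sqrt_seven_mul_add_theta {s : ℝ} (hs : 3 / 7 < s) (hs_sq : s ^ 2 < 5) :
    auxSlope (√7 * s) + theta = 2 * π + 2 * (Real.arctan (√7 * ((3 + s) / (7 * s - 3))) -
      Real.arctan (√7 * (12 * s / (7 * (5 - s ^ 2))))) := by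
  have hs_pos : 0 < s := by linarith
  have h_three : Real.arctan (√7 * (3 / (7 * s))) + Real.arctan (√7 * (1 / 7)) =
      Real.arctan (√7 * ((3 + s) / (7 * s - 3))) := by
    rw [arctan_sqrt_seven_mul_add (by field_simp; linarith)]
    have : 7 * s - 3 ≠ 0 := by linarith
    congr 2
    field_simp
  have h_five : Real.arctan (√7 * (s / 7)) + Real.arctan (√7 * (s / 5)) =
      Real.arctan (√7 * (12 * s / (7 * (5 - s ^ 2)))) := by
    rw [arctan_sqrt_seven_mul_add (by linarith)]
    have : 5 - s ^ 2 ≠ 0 := by linarith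
    congr 2
    field_simp
    ring
  rw [auxSlope, theta_eq_two_mul_arctan, arctan_div_sqrt_seven_mul (by norm_num) hs_pos,
    arctan_div_sqrt_seven_mul (by norm_num) hs_pos, div_sqrt_seven_mul, ← h_three, ← h_five]
  ring

lemma auxSlope_smallSaddle_add_theta_lt : auxSlope (√7 * 1.3186325) + theta < 2 * π := by
  rw [auxSlope_sqrt_seven_mul_add_theta (by norm_num) (by norm_num)]
  have h_lt := arctan_sqrt_seven_mul_lt
    (show (3 + 1.3186325) / (7 * 1.3186325 - 3) < 12 * 1.3186325 / (7 * (5 - 1.3186325 ^ 2)) by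
      norm_num)
  linarith

lemma two_pi_lt_auxSlope_smallSaddle_add_theta :
    2 * π < auxSlope (√7 * 1.3186324) + theta := by
  rw [auxSlope_sqrt_seven_mul_add_theta (by norm_num) (by norm_num)]
  have h_lt := arctan_sqrt_seven_mul_lt
    (show 12 * 1.3186324 / (7 * (5 - 1.3186324 ^ 2)) < (3 + 1.3186324) / (7 * 1.3186324 - 3) by
      norm_num)
  linarith

/-! ### Small linear forms in `1` and `√7 * theta` -/

lemma eventually_mul_pow_le_exp (C : ℝ) (n : ℕ) {δ : ℝ} (hδ : 0 < δ) :
    ∀ᶠ N : ℕ in atTop, C * (N : ℝ) ^ n ≤ Real.exp (δ * N) := by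
  have h_littleO := ((isLittleO_pow_exp_pos_mul_atTop n hδ).const_mul_left C).comp_tendsto
    tendsto_natCast_atTop_atTop
  filter_upwards [h_littleO.def one_pos] with N hN
  rw [one_mul, Function.comp_apply, Function.comp_apply, Real.norm_eq_abs, Real.norm_eq_abs,
    Real.abs_exp] at hN
  exact (le_abs_self _).trans hN

lemma eventually_mul_norm_lineTransform_auxPoly_le {K τ s ρ : ℝ} (hK : 0 ≤ K) (hτ : 0 < τ)
    (h_slope : auxSlope τ + |s| < 2 * π) (hρ : auxRate τ < ρ) :
    ∀ᶠ N : ℕ in atTop, K * ‖lineTransform (auxPoly N) s‖ ≤ Real.exp (ρ * N) := by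
  obtain ⟨C, -, h_le⟩ := exists_norm_lineTransform_auxPoly_le hτ h_slope
  filter_upwards [eventually_ne_atTop 0,
    eventually_mul_pow_le_exp (K * C) 3 (sub_pos.2 hρ)] with N hN h_exp
  calc K * ‖lineTransform (auxPoly N) s‖
      ≤ K * (C * N ^ 3 * Real.exp (N * auxRate τ)) := by gcongr; exact h_le N hN
    _ = K * C * N ^ 3 * Real.exp (N * auxRate τ) := by ring
    _ ≤ Real.exp ((ρ - auxRate τ) * N) * Real.exp (N * auxRate τ) := by gcongr
    _ = Real.exp (ρ * N) := by
        rw [← Real.exp_add]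
        ring_nf

lemma eventually_exp_le_mul_norm_lineTransform_auxPoly {K τ s ρ : ℝ} (hK : 0 < K) (hτ : 0 < τ)
    (hs : 0 ≤ s) (hs_lt : s < 2 * π) (h_slope : 2 * π ≤ auxSlope τ + s) (hρ : ρ < auxRate τ) :
    ∀ᶠ N : ℕ in atTop, Real.exp (ρ * N) ≤ K * ‖lineTransform (auxPoly N) s‖ := by
  obtain ⟨C, hC, h_ge⟩ := exists_le_norm_lineTransform_auxPoly hτ hs hs_lt h_slope
  filter_upwards [eventually_ne_atTop 0,
    eventually_mul_pow_le_exp (1 / (K * C)) 6 (sub_pos.2 hρ)] with N hN h_exp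
  have hN' : (0 : ℝ) < N := by exact_mod_cast Nat.pos_of_ne_zero hN
  rw [div_mul_eq_mul_div, one_mul, div_le_iff₀ (by positivity)] at h_exp
  calc Real.exp (ρ * N) = Real.exp (ρ * N) * N ^ 6 / N ^ 6 := by field_simp
    _ ≤ Real.exp (ρ * N) * (Real.exp ((auxRate τ - ρ) * N) * (K * C)) / N ^ 6 := by gcongr
    _ = K * (C / N ^ 6 * (Real.exp (ρ * N) * Real.exp ((auxRate τ - ρ) * N))) := by ring
    _ = K * (C / N ^ 6 * Real.exp (N * auxRate τ)) := by
        rw [← Real.exp_add]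
        ring_nf
    _ ≤ K * ‖lineTransform (auxPoly N) s‖ := by gcongr; exact h_ge N hN

lemma eventually_mul_norm_lineTransform_add_le {K : ℝ} (hK : 0 ≤ K) :
    ∀ᶠ N : ℕ in atTop, K * ‖lineTransform (auxPoly N) theta +
        lineTransform (auxPoly N) (theta - 2 * π)‖ ≤
      Real.exp ((37.684084 + 5 * Real.log 2) * N) := by
  have h_slope := auxSlope_largeSaddle_lt
  have h_theta := theta_lt_pi_div_two
  have hρ : auxRate (√7 * 15.588921) < 37.684084 + 5 * Real.log 2 := by
    linarith [auxRate_largeSaddle_sub_le]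
  have h_half := eventually_mul_norm_lineTransform_auxPoly_le (K := 2 * K) (s := theta)
    (by positivity) (by positivity) (by rw [abs_of_pos theta_pos]; linarith [theta_pos]) hρ
  have h_half' := eventually_mul_norm_lineTransform_auxPoly_le (K := 2 * K) (s := theta - 2 * π)
    (by positivity) (by positivity) (by rw [abs_of_neg theta_sub_two_pi_neg]; linarith) hρ
  filter_upwards [h_half, h_half'] with N hN hN'
  have h_tri := mul_le_mul_of_nonneg_left (norm_add_le (lineTransform (auxPoly N) theta)
    (lineTransform (auxPoly N) (theta - 2 * π))) hK
  linarith

lemma eventually_mul_norm_lineTransform_theta_le {K : ℝ} (hK : 0 ≤ K) :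
    ∀ᶠ N : ℕ in atTop, K * ‖lineTransform (auxPoly N) theta‖ ≤
      Real.exp ((-18.157479 + 5 * Real.log 2) * N) := by
  refine eventually_mul_norm_lineTransform_auxPoly_le (τ := √7 * 1.3186325) hK (by positivity) ?_
    (by linarith [auxRate_smallSaddle_sub_le])
  rw [abs_of_pos theta_pos]
  exact auxSlope_smallSaddle_add_theta_lt

lemma eventually_le_mul_norm_lineTransform_theta {K : ℝ} (hK : 0 < K) :
    ∀ᶠ N : ℕ in atTop, Real.exp ((-18.157483 + 5 * Real.log 2) * N) ≤
      K * ‖lineTransform (auxPoly N) theta‖ :=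
  eventually_exp_le_mul_norm_lineTransform_auxPoly (τ := √7 * 1.3186324) hK (by positivity)
    theta_pos.le ((le_abs_self _).trans_lt abs_theta_lt)
    two_pi_lt_auxSlope_smallSaddle_add_theta.le (by linarith [le_auxRate_smallSaddle_sub])

lemma exists_linearForm_auxPoly {N : ℕ} (hN : 0 < N) (k : ℕ) : ∃ A B : ℤ,
    |(A : ℝ)| = (k * multiplier N : ℕ) / 2 ^ (5 * N) * (1 / (4 * √2 * π ^ 2) *
      ‖lineTransform (auxPoly N) theta + lineTransform (auxPoly N) (theta - 2 * π)‖) ∧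
    |A * (√7 * theta) - B| = (k * multiplier N : ℕ) / 2 ^ (5 * N) *
      (√7 / (2 * √2 * π) * ‖lineTransform (auxPoly N) theta‖) := by
  set l := k * multiplier N with hl
  obtain ⟨A, B, hA, hB⟩ := exists_linearForm (P := auxPoly N) (l := l)
    (eval_auxPoly_mem_range N)
    (fun j => by
      rw [hl, Nat.cast_mul, mul_assoc]
      exact mul_mem (natCast_mem _ k) (multiplier_mul_eval_derivative_auxPoly_mem_range hN j))
    (fun j => eval_auxPoly_of_lt) (fun j => eval_derivative_auxPoly_of_lt)
    (fun t => by rw [eval_line_auxPoly, Complex.ofReal_im])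
  have h_coeff : 2 ^ (5 * N) * (4 * √2 * π ^ 2) * |(A : ℝ)| =
      l * ‖lineTransform (auxPoly N) theta + lineTransform (auxPoly N) (theta - 2 * π)‖ := by
    have h_norm := congrArg norm hA
    rw [norm_mul, Complex.norm_natCast] at h_norm
    rw [h_norm, ← Real.norm_eq_abs]
    simp [abs_of_pos Real.pi_pos, abs_of_nonneg (Real.sqrt_nonneg 2)]
  have h_form : 2 ^ (5 * N) * (2 * √2 * π) * |A * (√7 * theta) - B| =
      √7 * l * ‖lineTransform (auxPoly N) theta‖ := by
    have h_norm := congrArg norm hB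
    rw [norm_mul, norm_mul, Complex.norm_natCast, Complex.norm_real, Real.norm_of_nonneg
      (Real.sqrt_nonneg 7)] at h_norm
    rw [h_norm, ← Real.norm_eq_abs, ← Complex.norm_real]
    simp [abs_of_pos Real.pi_pos, abs_of_nonneg (Real.sqrt_nonneg 2)]
  refine ⟨A, B, ?_, ?_⟩
  · rw [← mul_right_inj' (show (2 : ℝ) ^ (5 * N) * (4 * √2 * π ^ 2) ≠ 0 by positivity), h_coeff]
    field_simp
  · rw [← mul_right_inj' (show (2 : ℝ) ^ (5 * N) * (2 * √2 * π) ≠ 0 by positivity), h_form]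
    field_simp

lemma exists_mul_mem_Icc {n : ℕ} {c : ℝ} (hn : 0 < n) (hc : n ≤ c) :
    ∃ k : ℕ, ((k * n : ℕ) : ℝ) ∈ Icc c (2 * c) := by
  have hn' : (0 : ℝ) < n := by exact_mod_cast hn
  have hc_pos : 0 < c := hn'.trans_le hc
  refine ⟨⌈c / n⌉₊, ?_, ?_⟩ <;> push_cast
  · rw [← div_le_iff₀ hn']
    exact Nat.le_ceil _
  · calc (⌈c / n⌉₊ : ℝ) * n ≤ (c / n + 1) * n := by
          gcongr
          exact (Nat.ceil_lt_add_one (by positivity)).le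
      _ = c + n := by field_simp
      _ ≤ 2 * c := by linarith

lemma two_pow_eq_exp (n : ℕ) : (2 : ℝ) ^ n = Real.exp (n * Real.log 2) := by
  rw [← Real.log_pow, Real.exp_log (by positivity)]

lemma exp_div_two_pow_mul_exp (c ρ : ℝ) (n N : ℕ) :
    Real.exp (c * N) / 2 ^ (n * N) * Real.exp ((ρ + n * Real.log 2) * N) =
      Real.exp ((c + ρ) * N) := by
  rw [two_pow_eq_exp, ← Real.exp_sub, ← Real.exp_add]
  push_cast
  ring_nf

lemma eventually_exists_linearForm : ∀ᶠ N : ℕ in atTop, ∃ A B : ℤ,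
    |(A : ℝ)| ≤ Real.exp (41.693884 * N) ∧
    Real.exp (-(14.147683 * N)) ≤ |A * (√7 * theta) - B| ∧
    |A * (√7 * theta) - B| ≤ Real.exp (-(14.147679 * N)) := by
  set a := 1 / (4 * √2 * π ^ 2)
  set b := √7 / (2 * √2 * π)
  filter_upwards [eventually_log_multiplier_le_mul, eventually_gt_atTop 0,
    eventually_mul_norm_lineTransform_add_le (K := 2 * a) (by positivity),
    eventually_mul_norm_lineTransform_theta_le (K := 2 * b) (by positivity),
    eventually_le_mul_norm_lineTransform_theta (K := b) (by positivity)]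
    with N h_log hN h_large h_small_le h_small_ge
  rw [Real.log_le_iff_le_exp (by exact_mod_cast multiplier_pos N)] at h_log
  obtain ⟨k, hk_ge, hk_le⟩ := exists_mul_mem_Icc (multiplier_pos N) h_log
  obtain ⟨A, B, hA, hB⟩ := exists_linearForm_auxPoly hN k
  set w := ((k * multiplier N : ℕ) : ℝ) / 2 ^ (5 * N)
  set W := Real.exp (4.0098 * N) / 2 ^ (5 * N)
  have hw_ge : W ≤ w := div_le_div_of_nonneg_right hk_ge (by positivity)
  have hw_le : w ≤ 2 * W :=
    (div_le_div_of_nonneg_right hk_le (by positivity)).trans_eq (mul_div_assoc _ _ _)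
  have h_exp (ρ : ℝ) : W * Real.exp ((ρ + 5 * Real.log 2) * N) = Real.exp ((4.0098 + ρ) * N) :=
    exp_div_two_pow_mul_exp 4.0098 ρ 5 N
  refine ⟨A, B, ?_, ?_, ?_⟩
  · calc |(A : ℝ)| ≤ 2 * W * (a * ‖_‖) := by
          rw [hA]
          gcongr
      _ = W * (2 * a * ‖_‖) := by ring
      _ ≤ W * Real.exp ((37.684084 + 5 * Real.log 2) * N) := by gcongr
      _ = Real.exp (41.693884 * N) := by
          rw [h_exp]
          norm_num
  · calc Real.exp (-(14.147683 * N)) = W * Real.exp ((-18.157483 + 5 * Real.log 2) * N) := by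
          rw [h_exp, ← neg_mul]
          norm_num
      _ ≤ |A * (√7 * theta) - B| := by
          rw [hB]
          gcongr
  · calc |A * (√7 * theta) - B| ≤ 2 * W * (b * ‖_‖) := by
          rw [hB]
          gcongr
      _ = W * (2 * b * ‖_‖) := by ring
      _ ≤ W * Real.exp ((-18.157479 + 5 * Real.log 2) * N) := by gcongr
      _ = Real.exp (-(14.147679 * N)) := by
          rw [h_exp, ← neg_mul]
          norm_num

end BetaFour

theorem irrationality_measure_beta_19 :
    ∀ κ : ℝ, κ > 3.94705 →
      {pq : ℤ × ℕ+ |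
        |Real.sqrt 7 * Real.arctan (Real.sqrt 7 / 3) -
            (pq.1 : ℝ) / ((pq.2 : ℕ) : ℝ)| <
          ((pq.2 : ℕ) : ℝ) ^ (-κ)}.Finite :=
  fun _ hκ => BetaFour.irrationality_measure_le_of_linearForms (by norm_num) (by norm_num)
    BetaFour.eventually_exists_linearForm (lt_trans (by norm_num) hκ)
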